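/- arXiv:2010.14958 — 10 statements merged into one kernel-verified Lean document; each statement's English description precedes it below -/
import Mathlib

section
/- Let k be a field of characteristic zero, A a commutative k-algebra, and Der(A) the Lie algebra (under commutator) and A-module of k-linear derivations of A. Let f ∈ Der(A) and let V ⊆ Der(A) be an A-submodule such that ⁅v, w⁆ ∈ V for all v, w ∈ V. Define A-submodules D1 := A•f + V, D2 := D1 + span_A{⁅v, f⁆ : v ∈ V}, and D3 := D2 + span_A{⁅v, ξ⁆ : v ∈ V, ξ ∈ D2}. If ⁅f, ξ⁆ ∈ D2 for every ξ ∈ D2, then ⁅f, η⁆ ∈ D3 for every η ∈ D3, and ⁅ξ, ξ'⁆ ∈ D3 for all ξ, ξ' ∈ D2. -/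
theorem bracket_mem_of_span {k A : Type*} [Field k] [CommRing A] [Algebra k A]
    (D : Submodule A (Derivation k A A)) (x : Derivation k A A) (S : Set (Derivation k A A))
    (hS : S ⊆ D) (h : ∀ s ∈ S, ⁅x, s⁆ ∈ D) :
    ∀ y ∈ Submodule.span A S, ⁅x, y⁆ ∈ D := by
  intro y hy
  induction hy using Submodule.span_induction with
  | mem s hs => exact h s hs
  | zero => simp
  | add a b _ _ ha hb => rw [lie_add]; exact D.add_mem ha hb
  | smul c a ha' ha =>
    have e : ⁅x, c • a⁆ = c • ⁅x, a⁆ + x c • a := by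
      ext t
      simp only [Derivation.commutator_apply, Derivation.add_apply, Derivation.smul_apply,
        smul_eq_mul, Derivation.leibniz]
      ring
    rw [e]
    exact D.add_mem (D.smul_mem _ ha) (D.smul_mem _ (Submodule.span_le.2 hS ha'))

/-- Let `k` be a field of characteristic zero, `A` a commutative `k`-algebra and
`Der(A) = Derivation k A A` the Lie algebra (under commutator) and `A`-module of
`k`-linear derivations of `A`.  Let `f ∈ Der(A)` and let `V ⊆ Der(A)` be an
`A`-submodule closed under the Lie bracket.  Define `A`-submodules
`D1 := A•f + V`, `D2 := D1 + span_A {⁅v, f⁆ : v ∈ V}` and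
`D3 := D2 + span_A {⁅v, ξ⁆ : v ∈ V, ξ ∈ D2}`.
If `⁅f, ξ⁆ ∈ D2` for every `ξ ∈ D2`, then `⁅f, η⁆ ∈ D3` for every `η ∈ D3`, and
`⁅ξ, ξ'⁆ ∈ D3` for all `ξ, ξ' ∈ D2`. -/
theorem characteristic_connection_derived_system
    {k A : Type*} [Field k] [CharZero k] [CommRing A] [Algebra k A]
    (f : Derivation k A A) (V : Submodule A (Derivation k A A))
    (hV : ∀ v ∈ V, ∀ w ∈ V, ⁅v, w⁆ ∈ V)
    (D1 D2 D3 : Submodule A (Derivation k A A))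
    (hD1 : D1 = Submodule.span A {f} ⊔ V)
    (hD2 : D2 = D1 ⊔ Submodule.span A {x | ∃ v ∈ V, x = ⁅v, f⁆})
    (hD3 : D3 = D2 ⊔ Submodule.span A {x | ∃ v ∈ V, ∃ ξ ∈ D2, x = ⁅v, ξ⁆})
    (hchar : ∀ ξ ∈ D2, ⁅f, ξ⁆ ∈ D2) :
    (∀ η ∈ D3, ⁅f, η⁆ ∈ D3) ∧ (∀ ξ ∈ D2, ∀ ξ' ∈ D2, ⁅ξ, ξ'⁆ ∈ D3) := by
  have fD2 : f ∈ D2 := by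
    rw [hD2, hD1]
    exact Submodule.mem_sup_left (Submodule.mem_sup_left (Submodule.mem_span_singleton_self f))
  have VD2 : ∀ v ∈ V, v ∈ D2 := fun v hv => by
    rw [hD2, hD1]
    exact Submodule.mem_sup_left (Submodule.mem_sup_right hv)
  have D23 : ∀ x ∈ D2, x ∈ D3 := fun x hx => by
    rw [hD3]; exact Submodule.mem_sup_left hx
  have VD : ∀ v ∈ V, ∀ x ∈ D2, ⁅v, x⁆ ∈ D3 := fun v hv x hx => by
    rw [hD3]; exact Submodule.mem_sup_right (Submodule.subset_span ⟨v, hv, x, hx, rfl⟩)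
  have DV : ∀ v ∈ V, ∀ x ∈ D2, ⁅x, v⁆ ∈ D3 := fun v hv x hx => by
    rw [← lie_skew]; exact D3.neg_mem (VD v hv x hx)
  have Fv : ∀ v ∈ V, ⁅f, v⁆ ∈ D2 := fun v hv => hchar v (VD2 v hv)
  have vF : ∀ v ∈ V, ⁅v, f⁆ ∈ D2 := fun v hv => by
    rw [← lie_skew]; exact D2.neg_mem (Fv v hv)
  -- the key fact, obtained from `⁅f, ⁅f, ⁅v, w⁆⁆⁆ ∈ D2` and invertibility of `2`
  have key : ∀ v ∈ V, ∀ w ∈ V, ⁅⁅f, v⁆, ⁅f, w⁆⁆ ∈ D3 := by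
    intro v hv w hw
    have h1 : ⁅f, ⁅f, ⁅v, w⁆⁆⁆ ∈ D3 := D23 _ (hchar _ (Fv _ (hV v hv w hw)))
    have h2 : ⁅⁅f, ⁅f, v⁆⁆, w⁆ ∈ D3 := DV w hw _ (hchar _ (Fv v hv))
    have h3 : ⁅v, ⁅f, ⁅f, w⁆⁆⁆ ∈ D3 := VD v hv _ (hchar _ (Fv w hw))
    have e : ⁅f, ⁅f, ⁅v, w⁆⁆⁆ = ⁅⁅f, ⁅f, v⁆⁆, w⁆ + ⁅⁅f, v⁆, ⁅f, w⁆⁆ +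
        (⁅⁅f, v⁆, ⁅f, w⁆⁆ + ⁅v, ⁅f, ⁅f, w⁆⁆⁆) := by
      rw [leibniz_lie f v w, lie_add, leibniz_lie f ⁅f, v⁆ w, leibniz_lie f v ⁅f, w⁆]
    have h4 : ⁅⁅f, v⁆, ⁅f, w⁆⁆ + ⁅⁅f, v⁆, ⁅f, w⁆⁆ ∈ D3 := by
      have := D3.sub_mem (D3.sub_mem h1 h2) h3
      rw [e] at this
      convert this using 1
      abel
    have h5 := D3.smul_mem (algebraMap k A (1 / 2)) h4
    rw [algebraMap_smul, ← two_smul k, smul_smul] at h5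
    simpa using h5
  have key' : ∀ v ∈ V, ∀ w ∈ V, ⁅⁅v, f⁆, ⁅w, f⁆⁆ ∈ D3 := by
    intro v hv w hw
    rw [← lie_skew v f, ← lie_skew w f, neg_lie, lie_neg, neg_neg]
    exact key v hv w hw
  let S : Set (Derivation k A A) := ({f} ∪ V) ∪ {x | ∃ v ∈ V, x = ⁅v, f⁆}
  have hS : D2 = Submodule.span A S := by
    rw [hD2, hD1, Submodule.span_union, Submodule.span_union, Submodule.span_eq]
  have hSD2 : ∀ s ∈ S, s ∈ D2 := fun s hs => by rw [hS]; exact Submodule.subset_span hs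
  have hSD3 : S ⊆ D3 := fun s hs => D23 s (hSD2 s hs)
  have part2 : ∀ ξ ∈ D2, ∀ ξ' ∈ D2, ⁅ξ, ξ'⁆ ∈ D3 := by
    have gen : ∀ s ∈ S, ∀ ξ ∈ D2, ⁅s, ξ⁆ ∈ D3 := by
      rintro s ((rfl | hs) | ⟨v, hv, rfl⟩) ξ hξ
      · exact D23 _ (hchar ξ hξ)
      · exact VD s hs ξ hξ
      · rw [hS] at hξ
        refine bracket_mem_of_span D3 _ S hSD3 ?_ ξ hξ
        rintro s ((rfl | hs) | ⟨w, hw, rfl⟩)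
        · rw [← lie_skew]; exact D3.neg_mem (D23 _ (hchar _ (vF v hv)))
        · exact DV s hs _ (vF v hv)
        · exact key' v hv w hw
    intro ξ hξ ξ' hξ'
    rw [hS] at hξ'
    refine bracket_mem_of_span D3 ξ S hSD3 ?_ ξ' hξ'
    intro s hs
    rw [← lie_skew]
    exact D3.neg_mem (gen s hs ξ hξ)
  refine ⟨?_, part2⟩
  have hT : D3 = Submodule.span A ((D2 : Set (Derivation k A A)) ∪
      {x | ∃ v ∈ V, ∃ ξ ∈ D2, x = ⁅v, ξ⁆}) := by
    rw [Submodule.span_union, Submodule.span_eq, ← hD3]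
  intro η hη
  rw [hT] at hη
  refine bracket_mem_of_span D3 f _ ?_ ?_ η hη
  · rintro s (hs | ⟨v, hv, ξ, hξ, rfl⟩)
    · exact D23 s hs
    · exact VD v hv ξ hξ
  · rintro s (hs | ⟨v, hv, ξ, hξ, rfl⟩)
    · exact D23 _ (hchar s hs)
    · rw [leibniz_lie]
      exact D3.add_mem (part2 _ (Fv v hv) _ hξ) (VD v hv _ (hchar ξ hξ))
end

section
/- Let R be a commutative ring, A a commutative R-algebra, and f, v ∈ Der(A) R-linear derivations of A. Then for every h ∈ A one has ⁅h•f, ⁅h•f, v⁆⁆ = (h·h)•⁅f, ⁅f, v⁆⁆ + (h·(f h))•⁅f, v⁆ − ( h·(⁅f,v⁆ h) + h·(f (v h)) − (v h)·(f h) )•f. -/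
/-- Let `R` be a commutative ring, `A` a commutative `R`-algebra, and `f, v` `R`-linear
derivations of `A`.  Then for every `h ∈ A` one has
`⁅h•f, ⁅h•f, v⁆⁆ = (h·h)•⁅f, ⁅f, v⁆⁆ + (h·(f h))•⁅f, v⁆
   − (h·(⁅f,v⁆ h) + h·(f (v h)) − (v h)·(f h))•f`. -/
theorem derivation_double_bracket_rescale
    {R A : Type*} [CommRing R] [CommRing A] [Algebra R A]
    (f v : Derivation R A A) (h : A) :
    ⁅h • f, ⁅h • f, v⁆⁆ =
      (h * h) • ⁅f, ⁅f, v⁆⁆ + (h * f h) • ⁅f, v⁆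
        - (h * (⁅f, v⁆ h) + h * (f (v h)) - (v h) * (f h)) • f := by
  ext a
  simp only [Derivation.commutator_apply, Derivation.smul_apply, Derivation.add_apply,
    Derivation.sub_apply, smul_eq_mul, Derivation.leibniz, map_sub, map_add]
  ring
end

section
/- Let 𝔤 be a finite-dimensional complex simple Lie algebra with Cartan subalgebra 𝔥, root system Φ, base of simple roots Δ, and let α ∈ Δ be a long simple root. Then for every positive root β, writing β = Σ_{γ∈Δ} n_γ(β)·γ, if n_α(β) = 1 then Σ_{γ ∈ N(α)} n_γ(β) ≤ 3, where N(α) is the set of simple roots γ ≠ α with (γ,α) ≠ 0 (the Dynkin neighbors of α). -/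
open scoped RealInnerProductSpace Classical

/-- Let `Φ` be the root system of a finite-dimensional complex simple Lie algebra
(an irreducible reduced crystallographic root system in a real inner product space `E`)
with base of simple roots `Δ`, every root `β` being written `β = Σ_{γ∈Δ} n β γ • γ`
with integer coefficients all of the same sign.  Let `α ∈ Δ` be a long simple root.
Then for every positive root `β`, if `n β α = 1` then `Σ_{γ ∈ N(α)} n β γ ≤ 3`, where
`N(α)` is the set of simple roots `γ ≠ α` with `(γ, α) ≠ 0` (the Dynkin neighbors of `α`). -/
theorem long_root_neighbor_coefficient_bound
    {E : Type*} [NormedAddCommGroup E] [InnerProductSpace ℝ E]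
    (Φ : Finset E)
    (hΦ0 : (0 : E) ∉ Φ)
    (hspan : Submodule.span ℝ (Φ : Set E) = ⊤)
    (hrefl : ∀ α ∈ Φ, ∀ β ∈ Φ, β - (2 * ⟪β, α⟫ / ⟪α, α⟫) • α ∈ Φ)
    (hcrys : ∀ α ∈ Φ, ∀ β ∈ Φ, ∃ m : ℤ, 2 * ⟪β, α⟫ / ⟪α, α⟫ = (m : ℝ))
    (hred : ∀ α ∈ Φ, ∀ t : ℝ, t • α ∈ Φ → t = 1 ∨ t = -1)
    (hirr : ∀ S : Set E,
      (∀ β ∈ Φ, ∀ γ ∈ Φ, β ∈ S → ⟪β, γ⟫ ≠ 0 → γ ∈ S) →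
      (∃ β ∈ Φ, β ∈ S) → ∀ β ∈ Φ, β ∈ S)
    -- `Δ` is a base of simple roots, with coefficient function `n`
    (Δ : Finset E) (hΔΦ : (Δ : Set E) ⊆ (Φ : Set E))
    (hΔli : LinearIndependent ℝ (fun γ : Δ => (γ : E)))
    (n : E → E → ℤ)
    (hn : ∀ β ∈ Φ, β = ∑ γ ∈ Δ, (n β γ : ℝ) • γ)
    (hsign : ∀ β ∈ Φ, (∀ γ ∈ Δ, 0 ≤ n β γ) ∨ (∀ γ ∈ Δ, n β γ ≤ 0))
    -- `α` is a long simple root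
    (α : E) (hαΔ : α ∈ Δ)
    (hlong : ∀ γ ∈ Φ, ⟪γ, γ⟫ ≤ ⟪α, α⟫)
    -- `β` is a positive root with `n_α(β) = 1`
    (β : E) (hβ : β ∈ Φ) (hβpos : ∀ γ ∈ Δ, 0 ≤ n β γ)
    (hβα : n β α = 1) :
    ∑ γ ∈ Δ.filter (fun γ => γ ≠ α ∧ ⟪γ, α⟫ ≠ 0), n β γ ≤ 3 := by
  have hli : ∀ g : E → ℝ, ∑ γ ∈ Δ, g γ • γ = 0 → ∀ γ ∈ Δ, g γ = 0 := by
    have h : LinearIndepOn ℝ (fun x : E => x) (Δ : Set E) := hΔli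
    exact linearIndepOn_finset_iff.mp h
  have hα0 : α ≠ 0 := fun h => hΦ0 (h ▸ hΔΦ hαΔ)
  have hpos : 0 < ⟪α, α⟫ := real_inner_self_pos.mpr hα0
  have hsingle : ∀ γ ∈ Δ, ∑ δ ∈ Δ, (if δ = γ then (1 : ℝ) else 0) • δ = γ := by
    intro γ hγ
    simp [ite_smul, hγ]
  -- neighbors pair to at most `-1` with the coroot of `α`
  have hnb : ∀ γ ∈ Δ, γ ≠ α → ⟪γ, α⟫ ≠ 0 → 2 * ⟪γ, α⟫ ≤ -⟪α, α⟫ := by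
    intro γ hγ hne hin
    obtain ⟨m, hm⟩ := hcrys α (hΔΦ hαΔ) γ (hΔΦ hγ)
    have hr := hrefl α (hΔΦ hαΔ) γ (hΔΦ hγ)
    have hm2 : 2 * ⟪γ, α⟫ = m * ⟪α, α⟫ := by
      rw [← hm]; field_simp
    rw [hm] at hr
    have hz := hli (fun δ => (n (γ - (m : ℝ) • α) δ : ℝ) - (if δ = γ then (1 : ℝ) else 0)
        + (m : ℝ) * (if δ = α then (1 : ℝ) else 0)) (by
      simp only [add_smul, sub_smul, mul_smul, Finset.sum_add_distrib, Finset.sum_sub_distrib,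
        ← Finset.smul_sum]
      rw [← hn _ hr, hsingle γ hγ, hsingle α hαΔ]
      abel)
    have h1 := hz γ hγ
    have h2 := hz α hαΔ
    simp only [hne, hne.symm, if_true, if_false] at h1 h2
    have h1' : n (γ - (m : ℝ) • α) γ = 1 := by
      have : (n (γ - (m : ℝ) • α) γ : ℝ) = 1 := by linarith
      exact_mod_cast this
    have h2' : n (γ - (m : ℝ) • α) α = -m := by
      have : (n (γ - (m : ℝ) • α) α : ℝ) = -m := by linarith
      exact_mod_cast this
    have hm0 : m ≤ 0 := by
      rcases hsign _ hr with h | h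
      · have := h α hαΔ
        omega
      · have := h γ hγ
        omega
    have hmne : m ≠ 0 := by
      rintro rfl
      apply hin
      simpa using hm2
    have hm1 : (m : ℝ) ≤ -1 := by
      have : m ≤ -1 := by omega
      exact_mod_cast this
    nlinarith
  -- lower bound for `β`
  have hlow : -⟪α, α⟫ ≤ 2 * ⟪β, α⟫ := by
    obtain ⟨m, hm⟩ := hcrys α (hΔΦ hαΔ) β hβ
    have hm2 : 2 * ⟪β, α⟫ = m * ⟪α, α⟫ := by
      rw [← hm]; field_simp
    by_contra hlt
    have hm1 : m ≤ -2 := by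
      by_contra hc
      have : (-1 : ℝ) ≤ m := by
        have : -1 ≤ m := by omega
        exact_mod_cast this
      nlinarith
    have hm1' : (m : ℝ) ≤ -2 := by exact_mod_cast hm1
    have hle : ⟪β + α, β + α⟫ ≤ 0 := by
      rw [real_inner_add_add_self]
      nlinarith [hlong β hβ]
    have hzero : β + α = 0 := by
      by_contra h
      exact absurd (real_inner_self_pos.mpr h) (not_lt.mpr hle)
    have hz := hli (fun δ => (n β δ : ℝ) + (if δ = α then (1 : ℝ) else 0)) (by
      simp only [add_smul, Finset.sum_add_distrib]
      rw [← hn _ hβ, hsingle α hαΔ, hzero]) α hαΔ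
    simp only [hβα, if_true] at hz
    norm_num at hz
  have hexp : ⟪β, α⟫ = ∑ γ ∈ Δ, (n β γ : ℝ) * ⟪γ, α⟫ := by
    conv_lhs => rw [hn β hβ]
    rw [sum_inner]
    simp [real_inner_smul_left]
  have hub : 2 * ⟪β, α⟫ ≤ ∑ γ ∈ Δ, ((if γ = α then 2 * ⟪α, α⟫ else 0)
      - (if γ ≠ α ∧ ⟪γ, α⟫ ≠ 0 then (n β γ : ℝ) else 0) * ⟪α, α⟫) := by
    rw [hexp, Finset.mul_sum]
    refine Finset.sum_le_sum fun γ hγ => ?_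
    by_cases h1 : γ = α
    · subst h1
      simp [hβα]
    · by_cases h2 : ⟪γ, α⟫ = 0
      · simp [h1, h2]
      · have h3 := hnb γ hγ h1 h2
        have h4 : (0 : ℝ) ≤ n β γ := by exact_mod_cast hβpos γ hγ
        simp only [h1, h2, if_false, ne_eq, not_false_eq_true, and_self, if_true]
        nlinarith
  rw [Finset.sum_sub_distrib, ← Finset.sum_mul, Finset.sum_ite_eq' Δ α,
    if_pos hαΔ, ← Finset.sum_filter] at hub
  have hfin : (∑ γ ∈ Δ.filter (fun γ => γ ≠ α ∧ ⟪γ, α⟫ ≠ 0), (n β γ : ℝ)) ≤ 3 := by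
    by_contra hc
    push Not at hc
    nlinarith
  exact_mod_cast hfin
end

section
/- Let 𝔤 be a finite-dimensional complex simple Lie algebra with Cartan subalgebra 𝔥, root system Φ, base Δ, and let α ∈ Δ be a long simple root. Set Σ_q := {α} ∪ N(α), where N(α) is the set of simple roots γ ≠ α with (γ,α) ≠ 0. Then every root β with n_α(β) = 0 satisfies |ht_{Σ_q}(β)| ≤ 1. Consequently, setting q_1^V := ⊕ {𝔤_β : n_α(β) = 0 and ht_{Σ_q}(β) = 1}, the subspace q_1^V equals the intersection of p_0 := 𝔥 ⊕ ⊕_{n_α(β)=0} 𝔤_β with ⊕_{ht_{Σ_q}(β) ≥ 1} 𝔤_β, and q_1^V is an abelian Lie subalgebra of 𝔤, i.e. ⁅q_1^V, q_1^V⁆ = 0 (and likewise for the negative counterpart q_{-1}^V). -/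
open scoped RealInnerProductSpace Classical

theorem aux_inter {L : Type*} [AddCommGroup L] [Module ℂ L] {E : Type*} (Φ : Finset E)
    (h : Submodule ℂ L) (g : E → Submodule ℂ L)
    (hindh : Disjoint h (⨆ β ∈ Φ, g β))
    (hindg : ∀ β ∈ Φ, Disjoint (g β) (h ⊔ ⨆ γ ∈ Φ.erase β, g γ))
    (S T U : Set E) (hS : ∀ β ∈ S, β ∈ Φ) (hT : ∀ β ∈ T, β ∈ Φ) (hU : U = S ∩ T) :
    (⨆ β ∈ U, g β) = (h ⊔ ⨆ β ∈ S, g β) ⊓ ⨆ β ∈ T, g β := by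
  let F : Option E → Submodule ℂ L := fun o => o.elim h (fun β => if β ∈ Φ then g β else ⊥)
  have hF : iSupIndep F := by
    intro o
    rcases o with _ | β
    · refine hindh.mono_right (iSup₂_le ?_)
      intro j hj
      rcases j with _ | γ
      · exact absurd rfl hj
      · by_cases hγ : γ ∈ Φ
        · simp only [F, Option.elim, hγ, if_true]
          exact le_iSup₂_of_le γ hγ le_rfl
        · simp [F, hγ]
    · by_cases hβ : β ∈ Φ
      · have h1 := hindg β hβ
        simp only [F, Option.elim, hβ, if_true]
        refine h1.mono_right (iSup₂_le ?_)
        intro j hj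
        rcases j with _ | γ
        · exact le_sup_left
        · by_cases hγ : γ ∈ Φ
          · simp only [hγ, if_true]
            refine le_trans ?_ le_sup_right
            refine le_iSup₂_of_le γ (Finset.mem_erase.2 ⟨fun e => hj (by rw [e]), hγ⟩) le_rfl
          · simp [hγ]
      · simp [F, hβ]
  have key : ∀ R : Set E, (∀ β ∈ R, β ∈ Φ) → (⨆ β ∈ R, g β) = ⨆ o ∈ some '' R, F o := by
    intro R hR
    rw [iSup_image]
    refine iSup_congr fun β => iSup_congr fun hβ => ?_
    simp [F, hR β hβ]
  have hsplit : (⨆ β ∈ S, g β) = (⨆ β ∈ U, g β) ⊔ ⨆ β ∈ S \ T, g β := by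
    rw [← iSup_union, hU, Set.inter_union_sdiff]
  have hdis : Disjoint (h ⊔ ⨆ β ∈ S \ T, g β) (⨆ β ∈ T, g β) := by
    have e : (h ⊔ ⨆ β ∈ S \ T, g β) = ⨆ o ∈ insert none (some '' (S \ T)), F o := by
      rw [iSup_insert, key _ (fun β hβ => hS β hβ.1)]
      rfl
    rw [e, key T hT]
    refine hF.disjoint_biSup_biSup ?_
    rw [Set.disjoint_left]
    rintro o ho ⟨γ, hγ, rfl⟩
    rcases ho with ho | ⟨γ', hγ', e⟩
    · exact absurd ho (by simp)
    · cases e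
      exact hγ'.2 hγ
  have hle : (⨆ β ∈ U, g β) ≤ ⨆ β ∈ T, g β := by
    rw [hU]
    exact biSup_mono fun β hβ => hβ.2
  rw [hsplit, sup_left_comm, ← sup_inf_assoc_of_le _ hle |>.symm, hdis.eq_bot, sup_bot_eq]

theorem aux_abel {L : Type*} [LieRing L] [LieAlgebra ℂ L] {E : Type*}
    (g : E → Submodule ℂ L) (S : Set E)
    (H : ∀ β ∈ S, ∀ γ ∈ S, ∀ x ∈ g β, ∀ y ∈ g γ, ⁅x, y⁆ = 0) :
    ∀ x ∈ (⨆ β ∈ S, g β), ∀ y ∈ (⨆ β ∈ S, g β), ⁅x, y⁆ = 0 := by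
  have h1 : ∀ β ∈ S, ∀ x ∈ g β, ∀ y ∈ (⨆ β ∈ S, g β), ⁅x, y⁆ = 0 := by
    intro β hβ x hx y hy
    have : (⨆ β ∈ S, g β) ≤ LinearMap.ker (LieAlgebra.ad ℂ L x) :=
      iSup₂_le fun γ hγ z hz => by simpa using H β hβ γ hγ x hx z hz
    simpa using this hy
  intro x hx y hy
  have : (⨆ β ∈ S, g β) ≤ LinearMap.ker (LieAlgebra.ad ℂ L y) :=
    iSup₂_le fun γ hγ z hz => by
      have := h1 γ hγ z hz y hy
      have h3 : ⁅y, z⁆ = 0 := by rw [← lie_skew, this, neg_zero]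
      simpa using h3
  have h2 : ⁅y, x⁆ = 0 := by simpa using this hx
  rw [← lie_skew, h2, neg_zero]

/-- Let `𝔤 = L` be a finite-dimensional complex simple Lie algebra with Cartan subalgebra
`𝔥 = h`, root system `Φ` (realized in a real inner product space `E`, with root spaces
`g β` and root space decomposition), base `Δ`, and let `α ∈ Δ` be a long simple root.
Set `Σ_q := {α} ∪ N(α)`, where `N(α)` is the set of simple roots `γ ≠ α` with
`(γ,α) ≠ 0`.  Then every root `β` with `n_α(β) = 0` satisfies `|ht_{Σ_q}(β)| ≤ 1`.
Consequently, setting `q_1^V := ⊕ {𝔤_β : n_α(β) = 0, ht_{Σ_q}(β) = 1}`, the subspace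
`q_1^V` equals the intersection of `p_0 := 𝔥 ⊕ ⊕_{n_α(β)=0} 𝔤_β` with
`⊕_{ht_{Σ_q}(β) ≥ 1} 𝔤_β`, and `q_1^V` is an abelian subalgebra, i.e.
`⁅q_1^V, q_1^V⁆ = 0` (and likewise for the negative counterpart `q_{-1}^V`). -/
theorem q1V_abelian
    {E : Type*} [NormedAddCommGroup E] [InnerProductSpace ℝ E]
    {L : Type*} [LieRing L] [LieAlgebra ℂ L] [FiniteDimensional ℂ L]
    [LieAlgebra.IsSimple ℂ L]
    (Φ : Finset E)
    (hΦ0 : (0 : E) ∉ Φ)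
    (hspan : Submodule.span ℝ (Φ : Set E) = ⊤)
    (hrefl : ∀ α ∈ Φ, ∀ β ∈ Φ, β - (2 * ⟪β, α⟫ / ⟪α, α⟫) • α ∈ Φ)
    (hcrys : ∀ α ∈ Φ, ∀ β ∈ Φ, ∃ m : ℤ, 2 * ⟪β, α⟫ / ⟪α, α⟫ = (m : ℝ))
    (hred : ∀ α ∈ Φ, ∀ t : ℝ, t • α ∈ Φ → t = 1 ∨ t = -1)
    (hirr : ∀ S : Set E,
      (∀ β ∈ Φ, ∀ γ ∈ Φ, β ∈ S → ⟪β, γ⟫ ≠ 0 → γ ∈ S) →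
      (∃ β ∈ Φ, β ∈ S) → ∀ β ∈ Φ, β ∈ S)
    (Δ : Finset E) (hΔΦ : (Δ : Set E) ⊆ (Φ : Set E))
    (hΔli : LinearIndependent ℝ (fun γ : Δ => (γ : E)))
    (n : E → E → ℤ)
    (hn : ∀ β ∈ Φ, β = ∑ γ ∈ Δ, (n β γ : ℝ) • γ)
    (hsign : ∀ β ∈ Φ, (∀ γ ∈ Δ, 0 ≤ n β γ) ∨ (∀ γ ∈ Δ, n β γ ≤ 0))
    -- the Cartan subalgebra and the root space decomposition
    (h : Submodule ℂ L) (g : E → Submodule ℂ L)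
    (habel : ∀ x ∈ h, ∀ y ∈ h, ⁅x, y⁆ = 0)
    (hgne : ∀ β ∈ Φ, g β ≠ ⊥)
    (hhg : ∀ β ∈ Φ, ∀ x ∈ h, ∀ y ∈ g β, ⁅x, y⁆ ∈ g β)
    (hgg : ∀ β ∈ Φ, ∀ γ ∈ Φ, ∀ x ∈ g β, ∀ y ∈ g γ,
      (β + γ ∈ Φ → ⁅x, y⁆ ∈ g (β + γ)) ∧ (β + γ = 0 → ⁅x, y⁆ ∈ h) ∧
      (β + γ ∉ Φ → β + γ ≠ 0 → ⁅x, y⁆ = 0))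
    (hdec : h ⊔ (⨆ β ∈ Φ, g β) = ⊤)
    (hindh : Disjoint h (⨆ β ∈ Φ, g β))
    (hindg : ∀ β ∈ Φ, Disjoint (g β) (h ⊔ ⨆ γ ∈ Φ.erase β, g γ))
    -- the long simple root `α`, its Dynkin neighbors, `Σ_q` and the height `ht_{Σ_q}`
    (α : E) (hαΔ : α ∈ Δ)
    (hlong : ∀ γ ∈ Φ, ⟪γ, γ⟫ ≤ ⟪α, α⟫)
    (Nbr : Finset E) (hNbr : Nbr = Δ.filter fun γ => γ ≠ α ∧ ⟪γ, α⟫ ≠ 0)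
    (Sq : Finset E) (hSq : Sq = insert α Nbr)
    (htq : E → ℤ) (hhtq : ∀ β, htq β = ∑ γ ∈ Sq, n β γ)
    -- the subspaces `q_{±1}^V` and `p_0`
    (q1V qm1V p0 : Submodule ℂ L)
    (hq1V : q1V = ⨆ β ∈ {β : E | β ∈ Φ ∧ n β α = 0 ∧ htq β = 1}, g β)
    (hqm1V : qm1V = ⨆ β ∈ {β : E | β ∈ Φ ∧ n β α = 0 ∧ htq β = -1}, g β)
    (hp0 : p0 = h ⊔ ⨆ β ∈ {β : E | β ∈ Φ ∧ n β α = 0}, g β) :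
    (∀ β ∈ Φ, n β α = 0 → |htq β| ≤ 1) ∧
    q1V = p0 ⊓ (⨆ β ∈ {β : E | β ∈ Φ ∧ 1 ≤ htq β}, g β) ∧
    qm1V = p0 ⊓ (⨆ β ∈ {β : E | β ∈ Φ ∧ htq β ≤ -1}, g β) ∧
    (∀ x ∈ q1V, ∀ y ∈ q1V, ⁅x, y⁆ = 0) ∧
    (∀ x ∈ qm1V, ∀ y ∈ qm1V, ⁅x, y⁆ = 0) := by
  classical
  -- uniqueness of coefficients
  have huniq : ∀ c : E → ℝ, ∑ γ ∈ Δ, c γ • γ = 0 → ∀ γ ∈ Δ, c γ = 0 := by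
    intro c hc γ hγ
    have h1 := Fintype.linearIndependent_iff.1 hΔli (fun γ => c γ) (by
      rw [← hc]
      exact Finset.sum_coe_sort Δ (fun γ => c γ • γ))
    exact h1 ⟨γ, hγ⟩
  have hSqΔ : ∀ γ ∈ Sq, γ ∈ Δ := by
    intro γ hγ
    rw [hSq, Finset.mem_insert] at hγ
    rcases hγ with rfl | hγ
    · exact hαΔ
    · rw [hNbr] at hγ
      exact (Finset.mem_filter.1 hγ).1
  have hadd0 : ∀ β ∈ Φ, ∀ γ ∈ Φ, β + γ = 0 → htq β + htq γ = 0 := by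
    intro β hβ γ hγ h0
    have h1 := huniq (fun δ => (n β δ : ℝ) + n γ δ) (by
      simp only [add_smul, Finset.sum_add_distrib]
      rw [← hn β hβ, ← hn γ hγ, h0])
    rw [hhtq, hhtq, ← Finset.sum_add_distrib]
    refine Finset.sum_eq_zero fun δ hδ => ?_
    exact_mod_cast h1 δ (hSqΔ δ hδ)
  have hadd : ∀ β ∈ Φ, ∀ γ ∈ Φ, β + γ ∈ Φ → ∀ δ ∈ Δ, n (β + γ) δ = n β δ + n γ δ := by
    intro β hβ γ hγ h0 δ hδ
    have h1 := huniq (fun δ => (n β δ : ℝ) + n γ δ - n (β + γ) δ) (by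
      simp only [add_smul, sub_smul, Finset.sum_add_distrib, Finset.sum_sub_distrib]
      rw [← hn β hβ, ← hn γ hγ, ← hn _ h0, sub_self]) δ hδ
    have h2 : n β δ + n γ δ - n (β + γ) δ = 0 := by exact_mod_cast h1
    omega
  have haddht : ∀ β ∈ Φ, ∀ γ ∈ Φ, β + γ ∈ Φ → htq (β + γ) = htq β + htq γ := by
    intro β hβ γ hγ h0
    rw [hhtq, hhtq, hhtq, ← Finset.sum_add_distrib]
    exact Finset.sum_congr rfl fun δ hδ => hadd β hβ γ hγ h0 δ (hSqΔ δ hδ)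
  have hαΦ : α ∈ Φ := hΔΦ hαΔ
  have hα0 : α ≠ 0 := fun e => hΦ0 (e ▸ hαΦ)
  have hαpos : 0 < ⟪α, α⟫ := real_inner_self_pos.2 hα0
  -- simple roots are pairwise obtuse
  have hobt : ∀ γ ∈ Δ, γ ≠ α → ∀ m : ℤ, 2 * ⟪γ, α⟫ / ⟪α, α⟫ = (m : ℝ) → m ≤ 0 := by
    intro γ hγ hne m hm
    have hr := hrefl α hαΦ γ (hΔΦ hγ)
    rw [hm] at hr
    set δ := γ - (m : ℝ) • α with hδ
    have hc := huniq (fun ε => (n δ ε : ℝ) - (if ε = γ then 1 else 0)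
        + (if ε = α then (m : ℝ) else 0)) (by
      simp only [add_smul, sub_smul, Finset.sum_add_distrib, Finset.sum_sub_distrib, ite_smul,
        zero_smul, one_smul, Finset.sum_ite_eq', hγ, hαΔ, if_true]
      rw [← hn δ hr, hδ]
      abel)
    have h1 := hc γ hγ
    have h2 := hc α hαΔ
    simp only [if_true, hne, if_false, hne.symm] at h1 h2
    have h1' : n δ γ = 1 := by
      have : (n δ γ : ℝ) = 1 := by linarith
      exact_mod_cast this
    have h2' : n δ α = -m := by
      have : (n δ α : ℝ) = -m := by linarith
      exact_mod_cast this
    rcases hsign δ hr with h | h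
    · have := h α hαΔ
      omega
    · have := h γ hγ
      omega
  have hmain : ∀ β ∈ Φ, n β α = 0 → |htq β| ≤ 1 := by
    intro β hβ hβα
    have hex : ∀ γ : E, ∃ m : ℤ, γ ∈ Φ → 2 * ⟪γ, α⟫ / ⟪α, α⟫ = (m : ℝ) := by
      intro γ
      by_cases hγ : γ ∈ Φ
      · obtain ⟨m, hm⟩ := hcrys α hαΦ γ hγ
        exact ⟨m, fun _ => hm⟩
      · exact ⟨0, fun h => absurd h hγ⟩
    choose c hc using hex
    have hαN : α ∉ Nbr := by rw [hNbr]; simp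
    have hht : htq β = ∑ γ ∈ Nbr, n β γ := by
      rw [hhtq, hSq, Finset.sum_insert hαN, hβα, zero_add]
    have hcN : ∀ γ ∈ Nbr, c γ ≤ -1 ∧ γ ∈ Δ := by
      intro γ hγ
      rw [hNbr, Finset.mem_filter] at hγ
      obtain ⟨hγΔ, hne, hin⟩ := hγ
      have h1 := hc γ (hΔΦ hγΔ)
      have h2 := hobt γ hγΔ hne _ h1
      have h3 : c γ ≠ 0 := by
        intro h0
        rw [h0, Int.cast_zero, div_eq_zero_iff] at h1
        rcases h1 with h1 | h1
        · exact hin (by linarith)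
        · exact hαpos.ne' h1
      exact ⟨by omega, hγΔ⟩
    have hcβ : c β = ∑ γ ∈ Nbr, n β γ * c γ := by
      have e1 : (c β : ℝ) = ∑ γ ∈ Δ, (n β γ : ℝ) * c γ := by
        rw [← hc β hβ]
        conv_lhs => rw [hn β hβ]
        rw [sum_inner, Finset.mul_sum, Finset.sum_div]
        refine Finset.sum_congr rfl fun γ hγ => ?_
        rw [← hc γ (hΔΦ hγ), real_inner_smul_left]
        ring
      have e2 : c β = ∑ γ ∈ Δ, n β γ * c γ := by exact_mod_cast e1
      rw [e2]
      symm
      refine Finset.sum_subset (fun γ hγ => (hcN γ hγ).2) ?_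
      intro γ hγ hγN
      by_cases hγα : γ = α
      · rw [hγα, hβα, zero_mul]
      · have h0 : ⟪γ, α⟫ = 0 := by
          by_contra h0
          exact hγN (by rw [hNbr]; exact Finset.mem_filter.2 ⟨hγ, hγα, h0⟩)
        have h1 := hc γ (hΔΦ hγ)
        rw [h0, mul_zero, zero_div] at h1
        have h2 : c γ = 0 := by exact_mod_cast h1.symm
        rw [h2, mul_zero]
    -- bound on the Cartan integer
    have hnot : ∀ t : ℝ, β ≠ t • α := by
      intro t ht
      have h1 := huniq (fun ε => (n β ε : ℝ) - (if ε = α then t else 0)) (by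
        simp only [sub_smul, Finset.sum_sub_distrib, ite_smul,
          zero_smul, Finset.sum_ite_eq', hαΔ, if_true]
        rw [← hn β hβ, ht, sub_self]) α hαΔ
      simp only [if_true, hβα, Int.cast_zero] at h1
      have h2 : t = 0 := by linarith
      rw [h2, zero_smul] at ht
      exact hΦ0 (ht ▸ hβ)
    have hcb : -1 ≤ c β ∧ c β ≤ 1 := by
      have hcβ' : 2 * ⟪β, α⟫ = c β * ⟪α, α⟫ := by
        rw [← hc β hβ]
        field_simp
      have hne : 0 < ⟪β - ((c β : ℝ) / 2) • α, β - ((c β : ℝ) / 2) • α⟫ :=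
        real_inner_self_pos.2 (sub_ne_zero.2 (hnot _))
      rw [inner_sub_left, inner_sub_right, inner_sub_right, real_inner_smul_left,
        real_inner_smul_left, real_inner_smul_right, real_inner_smul_right,
        real_inner_comm β α] at hne
      have hl := hlong β hβ
      have h3 : (c β : ℝ) ^ 2 * ⟪α, α⟫ < 4 * ⟪α, α⟫ := by
        have e : ⟪β, α⟫ = c β * ⟪α, α⟫ / 2 := by linarith
        rw [e] at hne
        nlinarith
      have h4 : (c β : ℝ) ^ 2 < 4 := lt_of_mul_lt_mul_right h3 hαpos.le
      have h5 : c β ^ 2 < 4 := by exact_mod_cast h4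
      constructor <;> nlinarith
    rw [hht, abs_le]
    rcases hsign β hβ with hs | hs
    · have p1 : 0 ≤ ∑ γ ∈ Nbr, n β γ := Finset.sum_nonneg fun γ hγ => hs γ (hcN γ hγ).2
      have p2 : ∑ γ ∈ Nbr, n β γ * c γ ≤ ∑ γ ∈ Nbr, -n β γ :=
        Finset.sum_le_sum fun γ hγ => by
          have := hs γ (hcN γ hγ).2
          have := (hcN γ hγ).1
          nlinarith
      rw [Finset.sum_neg_distrib] at p2
      constructor <;> omega
    · have p1 : ∑ γ ∈ Nbr, n β γ ≤ 0 := Finset.sum_nonpos fun γ hγ => hs γ (hcN γ hγ).2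
      have p2 : ∑ γ ∈ Nbr, -n β γ ≤ ∑ γ ∈ Nbr, n β γ * c γ :=
        Finset.sum_le_sum fun γ hγ => by
          have := hs γ (hcN γ hγ).2
          have := (hcN γ hγ).1
          nlinarith
      rw [Finset.sum_neg_distrib] at p2
      constructor <;> omega
  have hbr : ∀ k : ℤ, (k = 1 ∨ k = -1) →
      ∀ β ∈ {β : E | β ∈ Φ ∧ n β α = 0 ∧ htq β = k},
      ∀ γ ∈ {β : E | β ∈ Φ ∧ n β α = 0 ∧ htq β = k},
      ∀ x ∈ g β, ∀ y ∈ g γ, ⁅x, y⁆ = 0 := by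
    rintro k hk β ⟨hβ, hβα, hβk⟩ γ ⟨hγ, hγα, hγk⟩ x hx y hy
    refine (hgg β hβ γ hγ x hx y hy).2.2 ?_ ?_
    · intro hs
      have h1 := hmain _ hs (by rw [hadd β hβ γ hγ hs α hαΔ, hβα, hγα, add_zero])
      rw [haddht β hβ γ hγ hs, abs_le] at h1
      omega
    · intro h0
      have := hadd0 β hβ γ hγ h0
      omega
  refine ⟨hmain, ?_, ?_, ?_, ?_⟩
  · rw [hq1V, hp0]
    refine aux_inter Φ h g hindh hindg _ _ _ (fun β hβ => hβ.1) (fun β hβ => hβ.1) ?_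
    ext β
    simp only [Set.mem_ofPred_eq, Set.mem_inter_iff]
    constructor
    · rintro ⟨h1, h2, h3⟩
      exact ⟨⟨h1, h2⟩, h1, by omega⟩
    · rintro ⟨⟨h1, h2⟩, -, h3⟩
      have := abs_le.1 (hmain β h1 h2)
      exact ⟨h1, h2, by omega⟩
  · rw [hqm1V, hp0]
    refine aux_inter Φ h g hindh hindg _ _ _ (fun β hβ => hβ.1) (fun β hβ => hβ.1) ?_
    ext β
    simp only [Set.mem_ofPred_eq, Set.mem_inter_iff]
    constructor
    · rintro ⟨h1, h2, h3⟩
      exact ⟨⟨h1, h2⟩, h1, by omega⟩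
    · rintro ⟨⟨h1, h2⟩, -, h3⟩
      have := abs_le.1 (hmain β h1 h2)
      exact ⟨h1, h2, by omega⟩
  · rw [hq1V]
    exact aux_abel g _ (hbr 1 (Or.inl rfl))
  · rw [hqm1V]
    exact aux_abel g _ (hbr (-1) (Or.inr rfl))
end

section
/- Let 𝔤 be a finite-dimensional complex simple Lie algebra with root system Φ, base Δ, and let α ∈ Δ be a long simple root; set Σ_q := {α} ∪ N(α), where N(α) is the set of Dynkin neighbors of α. Then every root δ with ht_{Σ_q}(δ) = 2 satisfies n_α(δ) = 1 and Σ_{γ∈N(α)} n_γ(δ) = 1, and moreover δ − α ∈ Φ. -/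
open scoped RealInnerProductSpace Classical

/-- Let `Φ` be the root system of a finite-dimensional complex simple Lie algebra
(an irreducible reduced crystallographic root system) with base `Δ`, and let `α ∈ Δ` be a
long simple root; set `Σ_q := {α} ∪ N(α)` where `N(α)` is the set of Dynkin neighbors of
`α`.  Then every root `δ` with `ht_{Σ_q}(δ) = 2` satisfies `n_α(δ) = 1` and
`Σ_{γ∈N(α)} n_γ(δ) = 1`, and moreover `δ − α ∈ Φ`. -/
theorem roots_of_q_height_two
    {E : Type*} [NormedAddCommGroup E] [InnerProductSpace ℝ E]
    (Φ : Finset E)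
    (hΦ0 : (0 : E) ∉ Φ)
    (hspan : Submodule.span ℝ (Φ : Set E) = ⊤)
    (hrefl : ∀ α ∈ Φ, ∀ β ∈ Φ, β - (2 * ⟪β, α⟫ / ⟪α, α⟫) • α ∈ Φ)
    (hcrys : ∀ α ∈ Φ, ∀ β ∈ Φ, ∃ m : ℤ, 2 * ⟪β, α⟫ / ⟪α, α⟫ = (m : ℝ))
    (hred : ∀ α ∈ Φ, ∀ t : ℝ, t • α ∈ Φ → t = 1 ∨ t = -1)
    (hirr : ∀ S : Set E,
      (∀ β ∈ Φ, ∀ γ ∈ Φ, β ∈ S → ⟪β, γ⟫ ≠ 0 → γ ∈ S) →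
      (∃ β ∈ Φ, β ∈ S) → ∀ β ∈ Φ, β ∈ S)
    (Δ : Finset E) (hΔΦ : (Δ : Set E) ⊆ (Φ : Set E))
    (hΔli : LinearIndependent ℝ (fun γ : Δ => (γ : E)))
    (n : E → E → ℤ)
    (hn : ∀ β ∈ Φ, β = ∑ γ ∈ Δ, (n β γ : ℝ) • γ)
    (hsign : ∀ β ∈ Φ, (∀ γ ∈ Δ, 0 ≤ n β γ) ∨ (∀ γ ∈ Δ, n β γ ≤ 0))
    (α : E) (hαΔ : α ∈ Δ)
    (hlong : ∀ γ ∈ Φ, ⟪γ, γ⟫ ≤ ⟪α, α⟫)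
    -- the Dynkin neighbors of `α`, the set `Σ_q = {α} ∪ N(α)` and the height `ht_{Σ_q}`
    (Nbr : Finset E) (hNbr : Nbr = Δ.filter fun γ => γ ≠ α ∧ ⟪γ, α⟫ ≠ 0)
    (Sq : Finset E) (hSq : Sq = insert α Nbr)
    (htq : E → ℤ) (hhtq : ∀ β, htq β = ∑ γ ∈ Sq, n β γ)
    (δ : E) (hδ : δ ∈ Φ) (hδ2 : htq δ = 2) :
    n δ α = 1 ∧ (∑ γ ∈ Nbr, n δ γ) = 1 ∧ δ - α ∈ Φ := by
  have hαΦ : α ∈ Φ := hΔΦ hαΔ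
  have hα0 : α ≠ 0 := fun h => hΦ0 (h ▸ hαΦ)
  have hαpos : 0 < ⟪α, α⟫ := real_inner_self_pos.mpr hα0
  -- uniqueness of coefficients
  have huniq : ∀ β ∈ Φ, ∀ c : E → ℝ, β = ∑ γ ∈ Δ, c γ • γ → ∀ γ ∈ Δ, (n β γ : ℝ) = c γ := by
    intro β hβ c hc γ hγ
    have h1 : ∑ γ ∈ Δ, ((n β γ : ℝ) - c γ) • γ = 0 := by
      simp only [sub_smul, Finset.sum_sub_distrib]
      rw [← hn β hβ, ← hc, sub_self]
    rw [← Finset.sum_coe_sort] at h1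
    have h2 := Fintype.linearIndependent_iff.mp hΔli
      (fun γ : Δ => (n β γ : ℝ) - c γ) h1 ⟨γ, hγ⟩
    exact sub_eq_zero.mp h2
  have hmul : ∀ t : ℝ, t • α ∈ Φ → ∀ γ ∈ Δ, (n (t • α) γ : ℝ) = if γ = α then t else 0 := by
    intro t ht
    apply huniq _ ht
    simp [ite_smul, hαΔ]
  -- long roots have small pairings
  have key : ∀ β ∈ Φ, ∀ m : ℤ, 2 * ⟪β, α⟫ = m * ⟪α, α⟫ →
      (-1 ≤ m ∧ m ≤ 1) ∨ β = (1 : ℝ) • α ∨ β = (-1 : ℝ) • α := by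
    intro β hβ m hm
    by_cases hsmall : -1 ≤ m ∧ m ≤ 1
    · exact Or.inl hsmall
    right
    have hm4 : (4 : ℝ) ≤ (m : ℝ) ^ 2 := by
      have : (4 : ℤ) ≤ m ^ 2 := by
        rcases not_and_or.mp hsmall with h | h
        · have : m ≤ -2 := by omega
          nlinarith
        · have : 2 ≤ m := by omega
          nlinarith
      exact_mod_cast this
    have hexp : ⟪β - ((m : ℝ) / 2) • α, β - ((m : ℝ) / 2) • α⟫
        = ⟪β, β⟫ - (m : ℝ) ^ 2 / 4 * ⟪α, α⟫ := by
      simp only [inner_sub_left, inner_sub_right, real_inner_smul_left, real_inner_smul_right,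
        real_inner_comm β α]
      have h' : ⟪β, α⟫ = m * ⟪α, α⟫ / 2 := by linarith
      rw [h']
      ring
    have hle : ⟪β - ((m : ℝ) / 2) • α, β - ((m : ℝ) / 2) • α⟫ ≤ 0 := by
      rw [hexp]
      have := hlong β hβ
      nlinarith
    have hz : β - ((m : ℝ) / 2) • α = 0 := real_inner_self_nonpos.mp hle
    have hβe : β = ((m : ℝ) / 2) • α := sub_eq_zero.mp hz
    rcases hred α hαΦ ((m : ℝ) / 2) (hβe ▸ hβ) with h | h
    · left; rw [hβe, h]
    · right; rw [hβe, h]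
  have hpair : ∀ β ∈ Φ, ∃ m : ℤ, 2 * ⟪β, α⟫ = m * ⟪α, α⟫ ∧ β - (m : ℝ) • α ∈ Φ := by
    intro β hβ
    obtain ⟨m, hm⟩ := hcrys α hαΦ β hβ
    refine ⟨m, ?_, ?_⟩
    · rw [← hm]; field_simp
    · rw [← hm]; exact hrefl α hαΦ β hβ
  -- neighbors pair to -1
  have hnb : ∀ γ ∈ Nbr, 2 * ⟪γ, α⟫ = - ⟪α, α⟫ := by
    intro γ hγ
    rw [hNbr, Finset.mem_filter] at hγ
    obtain ⟨hγΔ, hγα, hne⟩ := hγ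
    have hγΦ : γ ∈ Φ := hΔΦ hγΔ
    have hself : (n γ γ : ℝ) = 1 := by
      have := huniq γ hγΦ (fun x => if x = γ then 1 else 0) (by simp [ite_smul, hγΔ]) γ hγΔ
      simpa using this
    obtain ⟨m, hm, hmΦ⟩ := hpair γ hγΦ
    have hmul0 : ∀ t : ℝ, γ ≠ t • α := by
      intro t ht
      have h := hmul t (ht ▸ hγΦ) γ hγΔ
      rw [← ht, hself, if_neg hγα] at h
      exact one_ne_zero h
    rcases key γ hγΦ m hm with ⟨h1, h2⟩ | h | h
    · have hm0 : m ≠ 0 := by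
        rintro rfl
        apply hne
        simp at hm
        exact hm
      have hm1 : m ≠ 1 := by
        rintro rfl
        have hc := huniq _ hmΦ (fun x => (if x = γ then 1 else 0) + (if x = α then -1 else 0))
          (by simp [add_smul, Finset.sum_add_distrib, ite_smul, hγΔ, hαΔ, sub_eq_add_neg])
        have ha := hc α hαΔ
        have hg := hc γ hγΔ
        simp only [if_neg hγα, if_neg (Ne.symm hγα), if_true] at ha hg
        have ha' : n (γ - ((1 : ℤ) : ℝ) • α) α = -1 := by
          have : (n (γ - ((1 : ℤ) : ℝ) • α) α : ℝ) = ((-1 : ℤ) : ℝ) := by rw [ha]; simp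
          exact_mod_cast this
        have hg' : n (γ - ((1 : ℤ) : ℝ) • α) γ = 1 := by
          have : (n (γ - ((1 : ℤ) : ℝ) • α) γ : ℝ) = ((1 : ℤ) : ℝ) := by rw [hg]; simp
          exact_mod_cast this
        rcases hsign _ hmΦ with h | h
        · have := h α hαΔ; omega
        · have := h γ hγΔ; omega
      have : m = -1 := by omega
      rw [hm, this]; push_cast; ring
    · exact absurd h (hmul0 _)
    · exact absurd h (hmul0 _)
  have hαN : α ∉ Nbr := by simp [hNbr]
  have hSqΔ : Sq ⊆ Δ := by
    rw [hSq, hNbr]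
    exact Finset.insert_subset hαΔ (Finset.filter_subset _ _)
  have hsum : n δ α + ∑ γ ∈ Nbr, n δ γ = 2 := by
    rw [← hδ2, hhtq, hSq, Finset.sum_insert hαN]
  obtain ⟨m, hm, hmΦ⟩ := hpair δ hδ
  have hcomp : 2 * ⟪δ, α⟫ = (2 * (n δ α : ℝ) - ∑ γ ∈ Nbr, (n δ γ : ℝ)) * ⟪α, α⟫ := by
    have h1 : ⟪δ, α⟫ = ∑ γ ∈ Δ, (n δ γ : ℝ) * ⟪γ, α⟫ := by
      conv_lhs => rw [hn δ hδ]
      simp [sum_inner, real_inner_smul_left]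
    have h2 : ∑ γ ∈ Δ, (n δ γ : ℝ) * ⟪γ, α⟫ = ∑ γ ∈ Sq, (n δ γ : ℝ) * ⟪γ, α⟫ := by
      symm
      apply Finset.sum_subset hSqΔ
      intro x hx hxS
      have : ⟪x, α⟫ = 0 := by
        by_contra hne
        apply hxS
        rw [hSq, hNbr, Finset.mem_insert, Finset.mem_filter]
        by_cases hxa : x = α
        · exact Or.inl hxa
        · exact Or.inr ⟨hx, hxa, hne⟩
      rw [this, mul_zero]
    have h3 : ∑ γ ∈ Nbr, (n δ γ : ℝ) * ⟪γ, α⟫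
        = ∑ γ ∈ Nbr, (n δ γ : ℝ) * (- ⟪α, α⟫ / 2) := by
      apply Finset.sum_congr rfl
      intro γ hγ
      have := hnb γ hγ
      rw [show ⟪γ, α⟫ = - ⟪α, α⟫ / 2 by linarith]
    rw [h1, h2, hSq, Finset.sum_insert hαN, h3, ← Finset.sum_mul]
    ring
  have hmval : m = 2 * n δ α - ∑ γ ∈ Nbr, n δ γ := by
    have : (m : ℝ) = 2 * (n δ α : ℝ) - ∑ γ ∈ Nbr, (n δ γ : ℝ) :=
      mul_right_cancel₀ hαpos.ne' (hm.symm.trans hcomp)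
    exact_mod_cast this
  have hbad : ∀ t : ℝ, t ≤ 1 → δ ≠ t • α := by
    intro t ht1 hte
    have h := hmul t (hte ▸ hδ)
    rw [← hte] at h
    have hNz : ∑ γ ∈ Nbr, n δ γ = 0 := by
      apply Finset.sum_eq_zero
      intro γ hγ
      have hγΔ : γ ∈ Δ := hSqΔ (by rw [hSq]; exact Finset.mem_insert_of_mem hγ)
      have := h γ hγΔ
      rw [if_neg (fun e : γ = α => hαN (e ▸ hγ))] at this
      exact_mod_cast this
    have ha := h α hαΔ
    rw [if_pos rfl] at ha
    have : n δ α = 2 := by omega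
    rw [this] at ha
    norm_num at ha
    linarith
  rcases key δ hδ m hm with ⟨h1, h2⟩ | h | h
  · have ha : n δ α = 1 := by omega
    have hb : ∑ γ ∈ Nbr, n δ γ = 1 := by omega
    have hm1 : m = 1 := by omega
    refine ⟨ha, hb, ?_⟩
    rw [hm1] at hmΦ
    simpa using hmΦ
  · exact absurd h (hbad _ le_rfl)
  · exact absurd h (hbad _ (by norm_num))
end

section
/- Let 𝔤 be a finite-dimensional complex simple Lie algebra with root system Φ, base Δ, and let α ∈ Δ be a long simple root; set Σ_q := {α} ∪ N(α). Then: (a) for every root β with n_α(β) = 0 and ht_{Σ_q}(β) = 1, one has β + α ∈ Φ and β − α ∉ Φ; (b) for every root δ with ht_{Σ_q}(δ) = 2, one has δ + α ∉ Φ. In terms of root spaces: ⁅𝔤_α, q_{-1}^V⁆ = 0, ⁅𝔤_α, q_2⁆ = 0, and ⁅𝔤_{-α}, q_{-2}⁆ = 0, where q_{±1}^V := ⊕{𝔤_{±β} : n_α(β)=0, ht_{Σ_q}(β)=1} and q_{±2} := ⊕_{ht_{Σ_q}(δ)=±2} 𝔤_δ. -/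
open scoped RealInnerProductSpace Classical

/-- Let `𝔤 = L` be a finite-dimensional complex simple Lie algebra with root system `Φ`
(realized in a real inner product space `E`, with root spaces `g β` and root space
decomposition), base `Δ`, and let `α ∈ Δ` be a long simple root; set
`Σ_q := {α} ∪ N(α)`.  Then:
(a) for every root `β` with `n_α(β) = 0` and `ht_{Σ_q}(β) = 1`, one has `β + α ∈ Φ` and
`β − α ∉ Φ`;
(b) for every root `δ` with `ht_{Σ_q}(δ) = 2`, one has `δ + α ∉ Φ`.
In terms of root spaces: `⁅𝔤_α, q_{-1}^V⁆ = 0`, `⁅𝔤_α, q_2⁆ = 0` and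
`⁅𝔤_{-α}, q_{-2}⁆ = 0`, where `q_{±1}^V := ⊕{𝔤_{±β} : n_α(β)=0, ht_{Σ_q}(β)=1}` and
`q_{±2} := ⊕_{ht_{Σ_q}(δ)=±2} 𝔤_δ`. -/
theorem long_root_space_brackets_vanish
    {E : Type*} [NormedAddCommGroup E] [InnerProductSpace ℝ E]
    {L : Type*} [LieRing L] [LieAlgebra ℂ L] [FiniteDimensional ℂ L]
    [LieAlgebra.IsSimple ℂ L]
    (Φ : Finset E)
    (hΦ0 : (0 : E) ∉ Φ)
    (hspan : Submodule.span ℝ (Φ : Set E) = ⊤)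
    (hrefl : ∀ α ∈ Φ, ∀ β ∈ Φ, β - (2 * ⟪β, α⟫ / ⟪α, α⟫) • α ∈ Φ)
    (hcrys : ∀ α ∈ Φ, ∀ β ∈ Φ, ∃ m : ℤ, 2 * ⟪β, α⟫ / ⟪α, α⟫ = (m : ℝ))
    (hred : ∀ α ∈ Φ, ∀ t : ℝ, t • α ∈ Φ → t = 1 ∨ t = -1)
    (hirr : ∀ S : Set E,
      (∀ β ∈ Φ, ∀ γ ∈ Φ, β ∈ S → ⟪β, γ⟫ ≠ 0 → γ ∈ S) →
      (∃ β ∈ Φ, β ∈ S) → ∀ β ∈ Φ, β ∈ S)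
    (Δ : Finset E) (hΔΦ : (Δ : Set E) ⊆ (Φ : Set E))
    (hΔli : LinearIndependent ℝ (fun γ : Δ => (γ : E)))
    (n : E → E → ℤ)
    (hn : ∀ β ∈ Φ, β = ∑ γ ∈ Δ, (n β γ : ℝ) • γ)
    (hsign : ∀ β ∈ Φ, (∀ γ ∈ Δ, 0 ≤ n β γ) ∨ (∀ γ ∈ Δ, n β γ ≤ 0))
    -- the Cartan subalgebra and the root space decomposition
    (h : Submodule ℂ L) (g : E → Submodule ℂ L)
    (habel : ∀ x ∈ h, ∀ y ∈ h, ⁅x, y⁆ = 0)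
    (hgne : ∀ β ∈ Φ, g β ≠ ⊥)
    (hhg : ∀ β ∈ Φ, ∀ x ∈ h, ∀ y ∈ g β, ⁅x, y⁆ ∈ g β)
    (hgg : ∀ β ∈ Φ, ∀ γ ∈ Φ, ∀ x ∈ g β, ∀ y ∈ g γ,
      (β + γ ∈ Φ → ⁅x, y⁆ ∈ g (β + γ)) ∧ (β + γ = 0 → ⁅x, y⁆ ∈ h) ∧
      (β + γ ∉ Φ → β + γ ≠ 0 → ⁅x, y⁆ = 0))
    (hdec : h ⊔ (⨆ β ∈ Φ, g β) = ⊤)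
    (hindh : Disjoint h (⨆ β ∈ Φ, g β))
    (hindg : ∀ β ∈ Φ, Disjoint (g β) (h ⊔ ⨆ γ ∈ Φ.erase β, g γ))
    -- the long simple root `α`, its Dynkin neighbors, `Σ_q` and the height `ht_{Σ_q}`
    (α : E) (hαΔ : α ∈ Δ)
    (hlong : ∀ γ ∈ Φ, ⟪γ, γ⟫ ≤ ⟪α, α⟫)
    (Nbr : Finset E) (hNbr : Nbr = Δ.filter fun γ => γ ≠ α ∧ ⟪γ, α⟫ ≠ 0)
    (Sq : Finset E) (hSq : Sq = insert α Nbr)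
    (htq : E → ℤ) (hhtq : ∀ β, htq β = ∑ γ ∈ Sq, n β γ)
    -- the subspaces `q_{±1}^V` and `q_{±2}`
    (q1V qm1V q2 qm2 : Submodule ℂ L)
    (hq1V : q1V = ⨆ β ∈ {β : E | β ∈ Φ ∧ n β α = 0 ∧ htq β = 1}, g β)
    (hqm1V : qm1V = ⨆ β ∈ {β : E | β ∈ Φ ∧ n β α = 0 ∧ htq β = -1}, g β)
    (hq2 : q2 = ⨆ δ ∈ {δ : E | δ ∈ Φ ∧ htq δ = 2}, g δ)
    (hqm2 : qm2 = ⨆ δ ∈ {δ : E | δ ∈ Φ ∧ htq δ = -2}, g δ) :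
    -- (a)
    (∀ β ∈ Φ, n β α = 0 → htq β = 1 → (β + α ∈ Φ ∧ β - α ∉ Φ)) ∧
    -- (b)
    (∀ δ ∈ Φ, htq δ = 2 → δ + α ∉ Φ) ∧
    -- in terms of root spaces
    (∀ x ∈ g α, ∀ y ∈ qm1V, ⁅x, y⁆ = 0) ∧
    (∀ x ∈ g α, ∀ y ∈ q2, ⁅x, y⁆ = 0) ∧
    (∀ x ∈ g (-α), ∀ y ∈ qm2, ⁅x, y⁆ = 0) := by
  have hαΦ : α ∈ Φ := hΔΦ hαΔ
  have hα0 : α ≠ 0 := fun e => hΦ0 (e ▸ hαΦ)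
  have hpos : 0 < ⟪α, α⟫ := real_inner_self_pos.2 hα0
  have huniq : ∀ f : E → ℝ, ∑ γ ∈ Δ, f γ • γ = 0 → ∀ γ ∈ Δ, f γ = 0 := by
    intro f hf γ hγ
    have h1 := Fintype.linearIndependent_iff.1 hΔli (fun i => f i)
    have h2 : ∑ i : Δ, f i • (i : E) = 0 := by
      rw [← hf]; exact Finset.sum_coe_sort Δ (fun γ => f γ • γ)
    exact h1 h2 ⟨γ, hγ⟩
  have hexpP : ∀ β : E, ⟪β + α, β + α⟫ = ⟪β, β⟫ + 2 * ⟪β, α⟫ + ⟪α, α⟫ := by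
    intro β; rw [real_inner_add_add_self]
  have hexpM : ∀ β : E, ⟪β - α, β - α⟫ = ⟪β, β⟫ - 2 * ⟪β, α⟫ + ⟪α, α⟫ := by
    intro β; rw [real_inner_sub_sub_self]
  -- bounds on the Cartan integer
  have hbd : ∀ β ∈ Φ, ∀ m : ℤ, 2 * ⟪β, α⟫ = m * ⟪α, α⟫ → -2 ≤ m ∧ m ≤ 2 := by
    intro β hβ m hm
    have h1 := hlong β hβ
    have h2 : 0 ≤ ⟪β + α, β + α⟫ := real_inner_self_nonneg
    have h3 : 0 ≤ ⟪β - α, β - α⟫ := real_inner_self_nonneg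
    rw [hexpP, hm] at h2
    rw [hexpM, hm] at h3
    constructor
    · have : (-2 : ℝ) ≤ m := by
        by_contra! hc
        nlinarith
      exact_mod_cast this
    · have : (m : ℝ) ≤ 2 := by
        by_contra! hc
        nlinarith
      exact_mod_cast this
  have hm2 : ∀ β ∈ Φ, 2 * ⟪β, α⟫ = (-2) * ⟪α, α⟫ → β + α = 0 := by
    intro β hβ hm
    have h1 := hlong β hβ
    refine real_inner_self_nonpos.1 ?_
    rw [hexpP, hm]; linarith
  have hp2 : ∀ β ∈ Φ, 2 * ⟪β, α⟫ = 2 * ⟪α, α⟫ → β - α = 0 := by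
    intro β hβ hm
    have h1 := hlong β hβ
    refine real_inner_self_nonpos.1 ?_
    rw [hexpM, hm]; linarith
  have hnbr : ∀ γ ∈ Δ, γ ≠ α → ⟪γ, α⟫ ≠ 0 → 2 * ⟪γ, α⟫ = -⟪α, α⟫ := by
    intro γ hγ hne hin
    have hγΦ : γ ∈ Φ := hΔΦ hγ
    obtain ⟨m, hm⟩ := hcrys α hαΦ γ hγΦ
    have hρ := hrefl α hαΦ γ hγΦ
    rw [hm] at hρ
    have hm' : 2 * ⟪γ, α⟫ = m * ⟪α, α⟫ := by
      rw [← hm]; field_simp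
    have hb := hbd γ hγΦ m hm'
    have hcoef := huniq (fun δ => (n (γ - (m : ℝ) • α) δ : ℝ) - (if δ = γ then 1 else 0)
      + (if δ = α then (m : ℝ) else 0)) (by
        simp only [add_smul, sub_smul, Finset.sum_add_distrib, Finset.sum_sub_distrib, ite_smul,
          zero_smul, one_smul, Finset.sum_ite_eq', hγ, hαΔ, if_true]
        rw [← hn _ hρ]; abel)
    have h1 := hcoef γ hγ
    have h2 := hcoef α hαΔ
    simp only [hne, hne.symm, if_true, if_false] at h1 h2
    have h1' : n (γ - (m : ℝ) • α) γ = 1 := by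
      have : (n (γ - (m : ℝ) • α) γ : ℝ) = 1 := by linarith
      exact_mod_cast this
    have h2' : n (γ - (m : ℝ) • α) α = -m := by
      have : (n (γ - (m : ℝ) • α) α : ℝ) = -m := by linarith
      exact_mod_cast this
    have hle : m ≤ 0 := by
      rcases hsign _ hρ with hs | hs
      · have := hs α hαΔ; omega
      · have := hs γ hγ; omega
    have hm0 : m ≠ 0 := by
      rintro rfl
      apply hin
      simp at hm'
      exact hm'
    have hmn2 : m ≠ -2 := by
      rintro rfl
      have h0 := hm2 γ hγΦ (by rw [hm']; push_cast; ring)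
      have := huniq (fun δ => (if δ = γ then 1 else 0) + (if δ = α then 1 else 0)) (by
        simp only [add_smul, Finset.sum_add_distrib, ite_smul,
          zero_smul, one_smul, Finset.sum_ite_eq', hγ, hαΔ, if_true]
        exact h0) α hαΔ
      simp [hne.symm] at this
    have : m = -1 := by omega
    rw [hm', this]; push_cast; ring
  have hsum : ∀ β, htq β = n β α + ∑ γ ∈ Nbr, n β γ := by
    intro β
    rw [hhtq, hSq, Finset.sum_insert]
    rw [hNbr]; simp
  have key : ∀ β ∈ Φ, 2 * ⟪β, α⟫ = ((3 * n β α - htq β : ℤ) : ℝ) * ⟪α, α⟫ := by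
    intro β hβ
    have e1 : 2 * ⟪β, α⟫ = ∑ γ ∈ Δ, (n β γ : ℝ) * (2 * ⟪γ, α⟫) := by
      conv_lhs => rw [hn β hβ]
      rw [sum_inner, Finset.mul_sum]
      refine Finset.sum_congr rfl fun γ _ => ?_
      rw [real_inner_smul_left]; ring
    have e2 : ∀ γ ∈ Δ, (n β γ : ℝ) * (2 * ⟪γ, α⟫) =
        (if γ = α then 2 * (n β γ : ℝ) * ⟪α, α⟫ else 0) +
        (if γ ≠ α ∧ ⟪γ, α⟫ ≠ 0 then -(n β γ : ℝ) * ⟪α, α⟫ else 0) := by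
      intro γ hγ
      by_cases h1 : γ = α
      · subst h1; simp; ring
      · by_cases h2 : ⟪γ, α⟫ = 0
        · simp [h1, h2]
        · rw [hnbr γ hγ h1 h2]; simp [h1, h2]
    rw [e1, Finset.sum_congr rfl e2, Finset.sum_add_distrib, Finset.sum_ite_eq', if_pos hαΔ,
      ← Finset.sum_filter, ← hNbr, hsum, ← Finset.sum_mul, Finset.sum_neg_distrib]
    push_cast
    ring
  have hnegΦ : -α ∈ Φ := by
    have := hrefl α hαΦ α hαΦ
    have e : 2 * ⟪α, α⟫ / ⟪α, α⟫ = 2 := by field_simp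
    rw [e] at this
    have e2 : α - (2 : ℝ) • α = -α := by rw [two_smul]; abel
    rwa [e2] at this
  have shiftP : ∀ β, ∀ k : ℤ, 2 * ⟪β, α⟫ = (k : ℝ) * ⟪α, α⟫ →
      2 * ⟪β + α, α⟫ = ((k + 2 : ℤ) : ℝ) * ⟪α, α⟫ := by
    intro β k hk
    rw [inner_add_left]; push_cast; linarith
  have shiftM : ∀ β, ∀ k : ℤ, 2 * ⟪β, α⟫ = (k : ℝ) * ⟪α, α⟫ →
      2 * ⟪β - α, α⟫ = ((k - 2 : ℤ) : ℝ) * ⟪α, α⟫ := by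
    intro β k hk
    rw [inner_sub_left]; push_cast; linarith
  -- the coefficient at `α` of `±α`
  have hnα : n α α = 1 := by
    have := huniq (fun δ => (n α δ : ℝ) - (if δ = α then 1 else 0)) (by
      simp only [sub_smul, Finset.sum_sub_distrib, ite_smul,
          zero_smul, one_smul, Finset.sum_ite_eq', hαΔ, if_true]
      rw [← hn _ hαΦ]; abel) α hαΔ
    simp only [if_true] at this
    have h2 : (n α α : ℝ) = 1 := by linarith
    exact_mod_cast h2
  have hnmα : n (-α) α = -1 := by
    have := huniq (fun δ => (n (-α) δ : ℝ) + (if δ = α then 1 else 0)) (by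
      simp only [add_smul, Finset.sum_add_distrib, ite_smul,
          zero_smul, one_smul, Finset.sum_ite_eq', hαΔ, if_true]
      rw [← hn _ hnegΦ]; abel) α hαΔ
    simp only [if_true] at this
    have h2 : (n (-α) α : ℝ) = -1 := by linarith
    exact_mod_cast h2
  have eqcancel : ∀ a b : ℤ, (a : ℝ) * ⟪α, α⟫ = (b : ℝ) * ⟪α, α⟫ → a = b := by
    intro a b hab
    have := mul_right_cancel₀ hpos.ne' hab
    exact_mod_cast this
  have hB : ∀ δ ∈ Φ, htq δ = 2 → δ + α ∉ Φ := by
    intro δ hδ ht hmem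
    have hk := key δ hδ
    have b1 := hbd _ hδ _ hk
    have b2 := hbd _ hmem _ (shiftP _ _ hk)
    have hn0 : n δ α = 0 := by omega
    refine hΦ0 ?_
    rw [← hm2 δ hδ (by rw [hk, hn0, ht]; push_cast; ring)]
    exact hmem
  have hB' : ∀ δ ∈ Φ, htq δ = -2 → δ - α ∉ Φ := by
    intro δ hδ ht hmem
    have hk := key δ hδ
    have b1 := hbd _ hδ _ hk
    have b2 := hbd _ hmem _ (shiftM _ _ hk)
    have hn0 : n δ α = 0 := by omega
    refine hΦ0 ?_
    rw [← hp2 δ hδ (by rw [hk, hn0, ht]; push_cast; ring)]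
    exact hmem
  have hlift : ∀ (x : L) (S : Set E), (∀ β ∈ S, ∀ y ∈ g β, ⁅x, y⁆ = 0) →
      ∀ y ∈ ⨆ β ∈ S, g β, ⁅x, y⁆ = 0 := by
    intro x S hS
    have : (⨆ β ∈ S, g β) ≤ LinearMap.ker (LieAlgebra.ad ℂ L x : L →ₗ[ℂ] L) := by
      refine iSup₂_le fun β hβ y hy => ?_
      rw [LinearMap.mem_ker]
      exact hS β hβ y hy
    intro y hy
    exact LinearMap.mem_ker.1 (this hy)
  have hA : ∀ β ∈ Φ, n β α = 0 → htq β = 1 → (β + α ∈ Φ ∧ β - α ∉ Φ) := by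
    intro β hβ h0 ht
    have hk := key β hβ
    constructor
    · have := hrefl α hαΦ β hβ
      have e : 2 * ⟪β, α⟫ / ⟪α, α⟫ = -1 := by
        rw [hk, h0, ht]; push_cast; field_simp
      rw [e] at this
      have e2 : β - (-1 : ℝ) • α = β + α := by rw [neg_one_smul]; abel
      rwa [e2] at this
    · intro hmem
      have := hbd _ hmem _ (shiftM _ _ hk)
      omega
  refine ⟨hA, hB, ?_, ?_, ?_⟩
  · intro x hx
    rw [hqm1V]
    refine hlift x _ ?_
    rintro β ⟨hβ, h0, ht⟩ y hy
    have hk := shiftP _ _ (key β hβ)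
    refine (hgg α hαΦ β hβ x hx y hy).2.2 ?_ ?_
    · rw [add_comm]
      intro hmem
      have := hbd _ hmem _ hk
      omega
    · rw [add_comm]
      intro e
      rw [eq_neg_of_add_eq_zero_left e, hnmα] at h0
      omega
  · intro x hx
    rw [hq2]
    refine hlift x _ ?_
    rintro β ⟨hβ, ht⟩ y hy
    refine (hgg α hαΦ β hβ x hx y hy).2.2 ?_ ?_
    · rw [add_comm]; exact hB β hβ ht
    · rw [add_comm]
      intro e
      have hk := shiftP _ _ (key β hβ)
      have h1 : n β α = -1 := by rw [eq_neg_of_add_eq_zero_left e, hnmα]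
      have := eqcancel _ 0 (by rw [← hk, e]; simp)
      omega
  · intro x hx
    rw [hqm2]
    refine hlift x _ ?_
    rintro β ⟨hβ, ht⟩ y hy
    refine (hgg (-α) hnegΦ β hβ x hx y hy).2.2 ?_ ?_
    · rw [neg_add_eq_sub]; exact hB' β hβ ht
    · rw [neg_add_eq_sub]
      intro e
      have hk := shiftM _ _ (key β hβ)
      have h1 : n β α = 1 := by rw [sub_eq_zero.1 e, hnα]
      have := eqcancel _ 0 (by rw [← hk, e]; simp)
      omega
end

section
/- Let 𝔤 be a finite-dimensional complex simple Lie algebra with root system Φ, base Δ, and let α ∈ Δ be a long simple root; set Σ_q := {α} ∪ N(α), q_1^V := ⊕{𝔤_β : n_α(β) = 0, ht_{Σ_q}(β) = 1} and q_2 := ⊕_{ht_{Σ_q}(δ)=2} 𝔤_δ. Then the Lie bracket induces a linear isomorphism 𝔤_α ⊗ q_1^V → q_2, X ⊗ Y ↦ ⁅X, Y⁆; similarly 𝔤_{-α} ⊗ q_{-1}^V → q_{-2} is an isomorphism. -/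
open scoped RealInnerProductSpace Classical TensorProduct

namespace BracketIso

section Grading

variable {E : Type*} [NormedAddCommGroup E] [InnerProductSpace ℝ E]
variable {L : Type*} [LieRing L] [LieAlgebra ℂ L]

/-- Projections and degree maps attached to an internal direct sum decomposition. -/
lemma exists_proj (G : E → Submodule ℂ L) (hind : iSupIndep G) (hsup : ⨆ β, G β = ⊤) :
    ∃ (p : E → L →ₗ[ℂ] L) (D : E → L →ₗ[ℂ] L),
      (∀ β z, p β z ∈ G β) ∧ (∀ β, ∀ z ∈ G β, p β z = z) ∧
      (∀ β γ, β ≠ γ → ∀ z ∈ G γ, p β z = 0) ∧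
      (∀ z, (∀ β, p β z = 0) → z = 0) ∧
      (∀ v β, ∀ z ∈ G β, D v z = ((⟪β, v⟫ : ℝ) : ℂ) • z) := by
  have hint := DirectSum.isInternal_submodule_of_iSupIndep_of_iSup_eq_top hind hsup
  let _ := hint.chooseDecomposition
  refine ⟨fun β => (G β).subtype ∘ₗ DirectSum.component ℂ E (fun i => G i) β ∘ₗ
      (DirectSum.decomposeLinearEquiv G).toLinearMap,
    fun v => DirectSum.toModule ℂ E L (fun β => ((⟪β, v⟫ : ℝ) : ℂ) • (G β).subtype) ∘ₗ
      (DirectSum.decomposeLinearEquiv G).toLinearMap, ?_, ?_, ?_, ?_, ?_⟩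
  · intro β z
    exact Submodule.coe_mem _
  · intro β z hz
    exact DirectSum.decompose_of_mem_same G hz
  · intro β γ hne z hz
    exact DirectSum.decompose_of_mem_ne G hz hne.symm
  · intro z hz
    apply (DirectSum.decompose G).injective
    rw [DirectSum.decompose_zero]
    ext β
    exact hz β
  · intro v β z hz
    simp only [LinearMap.comp_apply, LinearEquiv.coe_coe, DirectSum.decomposeLinearEquiv_apply]
    rw [DirectSum.decompose_of_mem G hz]
    have := DirectSum.toModule_lof ℂ (φ := fun β => ((⟪β, v⟫ : ℝ) : ℂ) • (G β).subtype) β ⟨z, hz⟩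
    exact this

variable [FiniteDimensional ℂ L] [LieAlgebra.IsKilling ℂ L]

/-- The degree derivations are inner, given by elements of the degree zero part. -/
lemma exists_degree (G : E → Submodule ℂ L) (hind : iSupIndep G) (hsup : ⨆ β, G β = ⊤)
    (hbr : ∀ β γ, ∀ x ∈ G β, ∀ y ∈ G γ, ⁅x, y⁆ ∈ G (β + γ)) :
    ∃ d : E → L, (∀ v, d v ∈ G 0) ∧
      (∀ v β, ∀ z ∈ G β, ⁅d v, z⁆ = ((⟪β, v⟫ : ℝ) : ℂ) • z) ∧
      (∀ β z, (∀ v, ⁅d v, z⁆ = ((⟪β, v⟫ : ℝ) : ℂ) • z) → z ∈ G β) := by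
  obtain ⟨p, D, hp1, hp2, hp3, hp4, hD⟩ := exists_proj G hind hsup
  have hder : ∀ v x y, D v ⁅x, y⁆ = ⁅x, D v y⁆ - ⁅y, D v x⁆ := by
    intro v x y
    have hx : x ∈ ⨆ β, G β := hsup ▸ Submodule.mem_top
    have hy : y ∈ ⨆ β, G β := hsup ▸ Submodule.mem_top
    induction hx using Submodule.iSup_induction' with
    | mem β x hx =>
      induction hy using Submodule.iSup_induction' with
      | mem γ y hy =>
        rw [hD v _ _ (hbr _ _ _ hx _ hy), hD v _ _ hx, hD v _ _ hy, inner_add_left]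
        simp only [lie_smul, Complex.ofReal_add, add_smul]
        rw [← lie_skew x y]
        module
      | zero => simp
      | add y z _ _ h1 h2 => simp only [lie_add, add_lie, map_add, h1, h2]; abel
    | zero => simp
    | add y z _ _ h1 h2 => simp only [lie_add, add_lie, map_add, h1, h2]; abel
  have hex : ∀ v, ∃ d : L, ∀ z, ⁅d, z⁆ = D v z := by
    intro v
    let DD : LieDerivation ℂ L L := { D v with leibniz' := hder v }
    obtain ⟨d, hd⟩ := LieDerivation.IsKilling.exists_eq_ad DD
    refine ⟨d, fun z => ?_⟩
    have := congrArg (fun f : LieDerivation ℂ L L => f z) hd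
    have h2 : ⁅d, z⁆ = DD z := by simpa using this
    exact h2
  choose d hd using hex
  have hpD : ∀ v γ z, p γ (D v z) = ((⟪γ, v⟫ : ℝ) : ℂ) • p γ z := by
    intro v γ z
    have hz : z ∈ ⨆ β, G β := hsup ▸ Submodule.mem_top
    induction hz using Submodule.iSup_induction' with
    | mem β z hz =>
      rw [hD v _ _ hz, map_smul]
      by_cases h : γ = β
      · rw [h]
      · rw [hp3 _ _ h _ hz]; simp
    | zero => simp
    | add y z _ _ h1 h2 => simp only [map_add, h1, h2, smul_add]
  have hchar : ∀ β z, (∀ v, ⁅d v, z⁆ = ((⟪β, v⟫ : ℝ) : ℂ) • z) → z ∈ G β := by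
    intro β z hz
    have h0 : ∀ γ, γ ≠ β → p γ z = 0 := by
      intro γ hγ
      have h1 := hpD (γ - β) γ z
      rw [← hd, hz, map_smul] at h1
      have h2 : (((⟪γ - β, γ - β⟫ : ℝ)) : ℂ) • p γ z = 0 := by
        rw [inner_sub_left, Complex.ofReal_sub, sub_smul, ← h1, sub_self]
      rcases smul_eq_zero.mp h2 with h3 | h3
      · exfalso
        rw [Complex.ofReal_eq_zero, inner_self_eq_zero, sub_eq_zero] at h3
        exact hγ h3
      · exact h3
    have : z - p β z = 0 := by
      apply hp4
      intro γ
      rw [map_sub]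
      by_cases h : γ = β
      · subst h
        rw [hp2 γ _ (hp1 γ z), sub_self]
      · rw [h0 _ h, hp3 _ _ h _ (hp1 β z), sub_self]
    rw [sub_eq_zero.mp this]
    exact hp1 _ _
  have hdz : ∀ v β, ∀ z ∈ G β, ⁅d v, z⁆ = ((⟪β, v⟫ : ℝ) : ℂ) • z := by
    intro v β z hz
    rw [hd, hD v _ _ hz]
  refine ⟨d, ?_, hdz, hchar⟩
  intro v
  apply hchar
  intro w
  rw [inner_zero_left, Complex.ofReal_zero, zero_smul]
  rw [← LieDerivation.IsKilling.ad_apply_eq_zero_iff ℂ]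
  ext z
  have hz : z ∈ ⨆ β, G β := hsup ▸ Submodule.mem_top
  simp only [LieDerivation.ad_apply_apply, LieDerivation.coe_zero, Pi.zero_apply]
  induction hz using Submodule.iSup_induction' with
  | mem β z hz =>
    rw [lie_lie, hdz _ _ _ hz, hdz _ _ _ hz, lie_smul, lie_smul, hdz _ _ _ hz, hdz _ _ _ hz,
      smul_comm, sub_self]
  | zero => simp
  | add y z _ _ h1 h2 => simp only [lie_add, h1, h2, add_zero]

/-- Existence of an `sl₂`-triple in degrees `0, α, -α` with `e`, `f` being eigenvectors of the
degree zero part. -/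
lemma exists_triple (G : E → Submodule ℂ L) (hind : iSupIndep G) (hsup : ⨆ β, G β = ⊤)
    (hbr : ∀ β γ, ∀ x ∈ G β, ∀ y ∈ G γ, ⁅x, y⁆ ∈ G (β + γ))
    (hab : ∀ x ∈ G 0, ∀ y ∈ G 0, ⁅x, y⁆ = 0)
    (α : E) (hα : α ≠ 0) (hGα : G α ≠ ⊥) :
    ∃ t e f : L, IsSl2Triple t e f ∧ e ∈ G α ∧ f ∈ G (-α) ∧ t ∈ G 0 ∧
      (∃ χ : L → ℂ, ∀ z ∈ G 0, ⁅z, e⁆ = χ z • e ∧ ⁅z, f⁆ = - χ z • f) ∧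
      (⨆ k : ℂ, Module.End.eigenspace (LieAlgebra.ad ℂ L t) k = ⊤) := by
  obtain ⟨d, hd0, hd, hchar⟩ := exists_degree G hind hsup hbr
  obtain ⟨p, D, hp1, hp2, hp3, hp4, hD⟩ := exists_proj G hind hsup
  let H : LieSubalgebra ℂ L := { G 0 with
    lie_mem' := by
      intro x y hx hy
      have : ⁅x, y⁆ = 0 := hab x hx y hy
      change ⁅x, y⁆ ∈ G 0
      rw [this]; exact zero_mem _ }
  have hH : ∀ z, z ∈ H ↔ z ∈ G 0 := fun z => Iff.rfl
  have : IsLieAbelian H := ⟨fun x y => Subtype.ext (hab x x.2 y y.2)⟩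
  have : H.IsCartanSubalgebra := by
    refine ⟨inferInstance, le_antisymm ?_ H.le_normalizer⟩
    intro z hz
    rw [LieSubalgebra.mem_normalizer_iff] at hz
    rw [hH]
    apply hchar
    intro v
    rw [inner_zero_left, Complex.ofReal_zero, zero_smul]
    have h1 : ∀ v, ⁅d v, z⁆ ∈ G 0 := by
      intro v
      have := hz (d v) (hd0 v)
      rw [← lie_skew]
      exact neg_mem this
    have h2 : z ∈ G 0 := by
      have h3 : z - p 0 z = 0 := by
        apply hp4
        intro γ
        by_cases h : γ = 0
        · rw [h, map_sub, hp2 0 _ (hp1 0 z), sub_self]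
        · rw [map_sub, hp3 _ _ h _ (hp1 0 z), sub_zero]
          have h4 := hp3 _ _ h _ (h1 γ)
          have h5 : ∀ z, p γ ⁅d γ, z⁆ = ((⟪γ, γ⟫ : ℝ) : ℂ) • p γ z := by
            intro z
            have hz : z ∈ ⨆ β, G β := hsup ▸ Submodule.mem_top
            induction hz using Submodule.iSup_induction' with
            | mem β z hz =>
              rw [hd _ _ _ hz, map_smul]
              by_cases h : γ = β
              · rw [h]
              · rw [hp3 _ _ h _ hz]; simp
            | zero => simp
            | add y z _ _ h1 h2 => simp only [lie_add, map_add, h1, h2, smul_add]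
          rw [h5] at h4
          rcases smul_eq_zero.mp h4 with h6 | h6
          · rw [Complex.ofReal_eq_zero, inner_self_eq_zero] at h6
            exact absurd h6 h
          · exact h6
      rw [sub_eq_zero.mp h3]
      exact hp1 _ _
    exact hab _ (hd0 v) _ h2
  have hwt := LieModule.iSup_genWeightSpace_eq_top' ℂ H L
  have hwt' : ⨆ χ : LieModule.Weight ℂ H L,
      (LieAlgebra.rootSpace H χ).toSubmodule = ⊤ := by
    rw [← LieSubmodule.iSup_toSubmodule, hwt, LieSubmodule.top_toSubmodule]
  have hpH : ∀ a ∈ G 0, ∀ z, p α ⁅a, z⁆ = ⁅a, p α z⁆ := by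
    intro a ha z
    have hz : z ∈ ⨆ β, G β := hsup ▸ Submodule.mem_top
    induction hz using Submodule.iSup_induction' with
    | mem β z hz =>
      have h1 : ⁅a, z⁆ ∈ G β := by simpa using hbr _ _ _ ha _ hz
      by_cases h : α = β
      · subst h
        rw [hp2 _ _ h1, hp2 _ _ hz]
      · rw [hp3 _ _ h _ h1, hp3 _ _ h _ hz, lie_zero]
    | zero => simp
    | add y z _ _ h1 h2 => simp only [lie_add, map_add, h1, h2]
  obtain ⟨χ, z, hz, hpz⟩ : ∃ χ : LieModule.Weight ℂ H L, ∃ z ∈ LieAlgebra.rootSpace H χ,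
      p α z ≠ 0 := by
    by_contra hcon
    push Not at hcon
    apply hGα
    rw [Submodule.eq_bot_iff]
    intro x hx
    rw [← hp2 _ _ hx]
    have hx' : x ∈ ⨆ χ : LieModule.Weight ℂ H L, (LieAlgebra.rootSpace H χ).toSubmodule :=
      hwt' ▸ Submodule.mem_top
    clear hx
    induction hx' using Submodule.iSup_induction' with
    | mem χ z hz => exact hcon χ z hz
    | zero => simp
    | add y z _ _ h1 h2 => rw [map_add, h1, h2, add_zero]
  have hχd : ∀ v, χ ⟨d v, hd0 v⟩ = ((⟪α, v⟫ : ℝ) : ℂ) := by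
    intro v
    have h1 := LieAlgebra.IsKilling.lie_eq_smul_of_mem_rootSpace hz ⟨d v, hd0 v⟩
    have h2 : ⁅d v, z⁆ = χ ⟨d v, hd0 v⟩ • z := h1
    have h3 := hpH _ (hd0 v) z
    rw [h2, map_smul, hd _ _ _ (hp1 α z)] at h3
    exact smul_left_injective ℂ hpz h3
  have hne : χ.IsNonZero := by
    intro h0
    have h1 := hχd α
    have h2 : χ ⟨d α, hd0 α⟩ = 0 := by
      have := congrFun h0 ⟨d α, hd0 α⟩
      simpa using this
    rw [h2, eq_comm, Complex.ofReal_eq_zero, inner_self_eq_zero] at h1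
    exact hα h1
  obtain ⟨t, e, f, htr, he, hf⟩ := LieAlgebra.IsKilling.exists_isSl2Triple_of_weight_isNonZero hne
  have heG : e ∈ G α := by
    apply hchar
    intro v
    rw [← hχd v]
    exact LieAlgebra.IsKilling.lie_eq_smul_of_mem_rootSpace he ⟨d v, hd0 v⟩
  have hfG : f ∈ G (-α) := by
    apply hchar
    intro v
    rw [inner_neg_left, Complex.ofReal_neg, ← hχd v]
    exact LieAlgebra.IsKilling.lie_eq_smul_of_mem_rootSpace hf ⟨d v, hd0 v⟩
  have htG : t ∈ G 0 := by
    rw [← htr.lie_e_f]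
    simpa using hbr _ _ _ heG _ hfG
  refine ⟨t, e, f, htr, heG, hfG, htG, ⟨fun z => if h : z ∈ G 0 then χ ⟨z, h⟩ else 0, ?_⟩, ?_⟩
  · intro z hz
    simp only [hz, dif_pos]
    exact ⟨LieAlgebra.IsKilling.lie_eq_smul_of_mem_rootSpace he ⟨z, hz⟩,
      LieAlgebra.IsKilling.lie_eq_smul_of_mem_rootSpace hf ⟨z, hz⟩⟩
  · rw [eq_top_iff, ← hwt', iSup_le_iff]
    intro χ' z hz
    apply Submodule.mem_iSup_of_mem (χ' ⟨t, htG⟩)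
    rw [Module.End.mem_eigenspace_iff]
    exact LieAlgebra.IsKilling.lie_eq_smul_of_mem_rootSpace hz ⟨t, htG⟩

set_option linter.unusedSectionVars false in
lemma eigen_pos (G : E → Submodule ℂ L)
    (hbr : ∀ β γ, ∀ x ∈ G β, ∀ y ∈ G γ, ⁅x, y⁆ ∈ G (β + γ))
    (α : E) (hα : α ≠ 0) (hlong : ∀ β, G β ≠ ⊥ → ⟪β, β⟫ ≤ ⟪α, α⟫)
    (t e f : L) (htr : IsSl2Triple t e f) (he : e ∈ G α) (hf : f ∈ G (-α))
    (hχ : ∀ z ∈ G 0, ∃ c : ℂ, ⁅z, e⁆ = c • e)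
    (β : E) (z : L) (hz : z ∈ G β) (hz0 : z ≠ 0) (k : ℂ) (hk : k ≠ 0) (htz : ⁅t, z⁆ = k • z)
    (m : ℤ) (hm : 2 * ⟪β, α⟫ = (m : ℝ) * ⟪α, α⟫) (hm1 : 1 ≤ m) : k = (m : ℂ) := by
  have ha : 0 < ⟪α, α⟫ := real_inner_self_pos.mpr hα
  have hβ0 : 0 ≤ ⟪β, β⟫ := real_inner_self_nonneg
  have hvan : ∀ γ, ⟪α, α⟫ < ⟪γ, γ⟫ → ∀ x ∈ G γ, x = 0 := by
    intro γ hγ x hx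
    by_contra hx0
    exact absurd (hlong γ (fun h => hx0 (by simpa [h] using hx))) (not_le.mpr hγ)
  have hβa : ⟪β, β⟫ ≤ ⟪α, α⟫ := hlong β (fun h => hz0 (by simpa [h] using hz))
  have hmR : (1 : ℝ) ≤ m := by exact_mod_cast hm1
  have hez : ⁅e, z⁆ = 0 := by
    apply hvan _ _ _ (hbr _ _ _ he _ hz)
    rw [inner_add_left, inner_add_right, inner_add_right, real_inner_comm β α]
    nlinarith
  have hw : ⁅f, z⁆ ∈ G (-α + β) := hbr _ _ _ hf _ hz
  have hew : ⁅e, ⁅f, z⁆⁆ = k • z := by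
    rw [← htz, ← htr.lie_e_f, lie_lie, hez, lie_zero, sub_zero]
  have hw0 : ⁅f, z⁆ ≠ 0 := by
    intro h
    rw [h, lie_zero, eq_comm] at hew
    exact (smul_ne_zero hk hz0) hew
  have htw : ⁅t, ⁅f, z⁆⁆ = (k - 2) • ⁅f, z⁆ := by
    rw [leibniz_lie, htr.lie_h_f_nsmul, htz, lie_smul, neg_lie, nsmul_lie, ← Nat.cast_smul_eq_nsmul ℂ]
    push_cast
    module
  rcases eq_or_lt_of_le hm1 with h1 | h2
  · subst h1
    have hfw : ⁅f, ⁅f, z⁆⁆ = 0 := by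
      apply hvan _ _ _ (hbr _ _ _ hf _ hw)
      simp only [inner_add_left, inner_add_right, inner_neg_left, inner_neg_right,
        real_inner_comm β α] at hm ⊢
      push_cast at hm
      linarith
    have h3 : ⁅t, ⁅f, z⁆⁆ = -k • ⁅f, z⁆ := by
      conv_lhs => rw [← htr.lie_e_f, lie_lie, hfw, hew, lie_zero, lie_smul]
      module
    rw [htw] at h3
    have h4 := smul_left_injective ℂ hw0 h3
    push_cast
    linear_combination h4 / 2
  · have hm2 : (2 : ℝ) ≤ m := by exact_mod_cast h2
    have hβα : β = α := by
      rw [← sub_eq_zero, ← inner_self_eq_zero (𝕜 := ℝ)]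
      apply le_antisymm _ real_inner_self_nonneg
      simp only [inner_sub_left, inner_sub_right, real_inner_comm β α]
      nlinarith
    subst hβα
    rw [neg_add_cancel] at hw
    obtain ⟨c, hc⟩ := hχ _ hw
    rw [← lie_skew, hc] at hew
    have h3 : z = (-(k⁻¹ * c)) • e := by
      have : z = k⁻¹ • (k • z) := by rw [smul_smul, inv_mul_cancel₀ hk, one_smul]
      rw [this, ← hew]; module
    have h4 : ⁅t, z⁆ = (2 : ℂ) • z := by
      rw [h3, lie_smul, htr.lie_h_e_nsmul, ← Nat.cast_smul_eq_nsmul ℂ]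
      push_cast
      module
    rw [htz] at h4
    have h5 : k = 2 := smul_left_injective ℂ hz0 h4
    have h6 : (m : ℝ) = 2 := by
      have : (2 - (m : ℝ)) * ⟪β, β⟫ = 0 := by linarith
      rcases mul_eq_zero.mp this with h | h
      · linarith
      · linarith
    have h7 : m = 2 := by exact_mod_cast h6
    rw [h5, h7]; norm_num

/-- The key structural fact for a long root `α`. -/
lemma long_root_structure [LieAlgebra.IsSimple ℂ L]
    (G : E → Submodule ℂ L) (hind : iSupIndep G) (hsup : ⨆ β, G β = ⊤)
    (hbr : ∀ β γ, ∀ x ∈ G β, ∀ y ∈ G γ, ⁅x, y⁆ ∈ G (β + γ))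
    (hab : ∀ x ∈ G 0, ∀ y ∈ G 0, ⁅x, y⁆ = 0)
    (α : E) (hα : α ≠ 0) (hGα : G α ≠ ⊥)
    (hlong : ∀ β, G β ≠ ⊥ → ⟪β, β⟫ ≤ ⟪α, α⟫)
    (hcr : ∀ β, G β ≠ ⊥ → ∃ m : ℤ, 2 * ⟪β, α⟫ = (m : ℝ) * ⟪α, α⟫) :
    ∃ e f : L, e ≠ 0 ∧ f ≠ 0 ∧ e ∈ G α ∧ f ∈ G (-α) ∧
      G α = Submodule.span ℂ {e} ∧ G (-α) = Submodule.span ℂ {f} ∧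
      ∀ β, ∀ z ∈ G β, ⁅⁅e, f⁆, z⁆ = ((2 * ⟪β, α⟫ / ⟪α, α⟫ : ℝ) : ℂ) • z := by
  obtain ⟨d, hd0, hd, hchar⟩ := exists_degree G hind hsup hbr
  obtain ⟨p, _, hp1, hp2, hp3, hp4, _⟩ := exists_proj G hind hsup
  obtain ⟨t, e, f, htr, he, hf, ht, ⟨χ, hχ⟩, hdiag⟩ :=
    exists_triple G hind hsup hbr hab α hα hGα
  have ha : 0 < ⟪α, α⟫ := real_inner_self_pos.mpr hα
  have hvan : ∀ γ, ⟪α, α⟫ < ⟪γ, γ⟫ → ∀ x ∈ G γ, x = 0 := by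
    intro γ hγ x hx
    by_contra hx0
    exact absurd (hlong γ (fun h => hx0 (by simpa [h] using hx))) (not_le.mpr hγ)
  set t0 := d ((2 / ⟪α, α⟫) • α) with ht0
  have ht0z : ∀ β, ∀ z ∈ G β, ⁅t0, z⁆ = ((2 * ⟪β, α⟫ / ⟪α, α⟫ : ℝ) : ℂ) • z := by
    intro β z hz
    rw [ht0, hd _ _ _ hz, inner_smul_right]
    congr 2
    ring
  -- homogeneous case
  have hhom : ∀ β, ∀ z ∈ G β, ∀ k : ℂ, k ≠ 0 → ⁅t, z⁆ = k • z → ⁅t0, z⁆ = k • z := by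
    intro β z hz k hk htz
    by_cases hz0 : z = 0
    · simp [hz0]
    have hGβ : G β ≠ ⊥ := fun h => hz0 (by simpa [h] using hz)
    obtain ⟨m, hm⟩ := hcr β hGβ
    have hmval : 2 * ⟪β, α⟫ / ⟪α, α⟫ = (m : ℝ) := by
      rw [hm]; field_simp
    rw [ht0z _ _ hz, hmval]
    suffices h : k = (m : ℂ) by rw [h]; norm_num
    rcases lt_trichotomy m 0 with hneg | hzero | hpos
    · have h1 := eigen_pos G hbr (-α) (neg_ne_zero.mpr hα)
        (fun β hβ => by simpa using hlong β hβ) (-t) f e htr.symm hf (by simpa using he)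
        (fun z hz => ⟨_, (hχ z hz).2⟩) β z hz hz0 (-k) (neg_ne_zero.mpr hk)
        (by rw [neg_lie, htz, neg_smul]) (-m)
        (by
          push_cast
          rw [inner_neg_right, inner_neg_left, inner_neg_right]
          linarith) (by omega)
      push_cast at h1
      exact neg_injective h1
    · exfalso
      subst hzero
      have hβα : ⟪β, α⟫ = 0 := by simpa using hm
      by_cases hβ0 : β = 0
      · subst hβ0
        rw [hab _ ht _ hz, eq_comm] at htz
        exact smul_ne_zero hk hz0 htz
      have hβp : 0 < ⟪β, β⟫ := real_inner_self_pos.mpr hβ0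
      have h1 : ⁅e, z⁆ = 0 := by
        apply hvan _ _ _ (hbr _ _ _ he _ hz)
        simp only [inner_add_left, inner_add_right, real_inner_comm β α, hβα]
        linarith
      have h2 : ⁅f, z⁆ = 0 := by
        apply hvan _ _ _ (hbr _ _ _ hf _ hz)
        simp only [inner_add_left, inner_add_right, inner_neg_left, inner_neg_right,
          real_inner_comm β α, hβα]
        linarith
      rw [← htr.lie_e_f, lie_lie, h1, h2, lie_zero, lie_zero, sub_zero, eq_comm] at htz
      exact smul_ne_zero hk hz0 htz
    · exact eigen_pos G hbr α hα hlong t e f htr he hf (fun z hz => ⟨_, (hχ z hz).1⟩)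
        β z hz hz0 k hk htz m hm (by omega)
  have hpH : ∀ a ∈ G 0, ∀ γ z, p γ ⁅a, z⁆ = ⁅a, p γ z⁆ := by
    intro a ha γ z
    have hz : z ∈ ⨆ β, G β := hsup ▸ Submodule.mem_top
    induction hz using Submodule.iSup_induction' with
    | mem β z hz =>
      have h1 : ⁅a, z⁆ ∈ G β := by simpa using hbr _ _ _ ha _ hz
      by_cases h : γ = β
      · subst h
        rw [hp2 _ _ h1, hp2 _ _ hz]
      · rw [hp3 _ _ h _ h1, hp3 _ _ h _ hz, lie_zero]
    | zero => simp
    | add y z _ _ h1 h2 => simp only [lie_add, map_add, h1, h2]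
  have hall : ∀ k : ℂ, k ≠ 0 → ∀ z : L, ⁅t, z⁆ = k • z → ⁅t0 - t, z⁆ = 0 := by
    intro k hk z hz
    apply hp4
    intro γ
    have h1 : ⁅t, p γ z⁆ = k • p γ z := by rw [← hpH t ht, hz, map_smul]
    rw [hpH _ (sub_mem (hd0 _) ht), sub_lie, h1, hhom γ _ (hp1 γ z) k hk h1, sub_self]
  -- the ideal
  let I : LieIdeal ℂ L :=
    { carrier := {w | ⁅t, w⁆ = 0 ∧ ∀ k : ℂ, k ≠ 0 → ∀ z : L, ⁅t, z⁆ = k • z → ⁅w, z⁆ = 0}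
      add_mem' := by
        rintro a b ⟨h1, h2⟩ ⟨h3, h4⟩
        refine ⟨by rw [lie_add, h1, h3, add_zero], fun k hk z hz => ?_⟩
        rw [add_lie, h2 k hk z hz, h4 k hk z hz, add_zero]
      zero_mem' := ⟨lie_zero _, fun _ _ _ _ => zero_lie _⟩
      smul_mem' := by
        rintro c a ⟨h1, h2⟩
        refine ⟨by rw [lie_smul, h1, smul_zero], fun k hk z hz => ?_⟩
        rw [smul_lie, h2 k hk z hz, smul_zero]
      lie_mem := by
        rintro u w ⟨h1, h2⟩
        have hu : u ∈ ⨆ k : ℂ, Module.End.eigenspace (LieAlgebra.ad ℂ L t) k :=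
          hdiag ▸ Submodule.mem_top
        change ⁅t, ⁅u, w⁆⁆ = 0 ∧ ∀ k : ℂ, k ≠ 0 → ∀ z : L, ⁅t, z⁆ = k • z → ⁅⁅u, w⁆, z⁆ = 0
        induction hu using Submodule.iSup_induction' with
        | mem l u hu =>
          rw [Module.End.mem_eigenspace_iff, LieAlgebra.ad_apply] at hu
          by_cases hl : l = 0
          · rw [hl, zero_smul] at hu
            refine ⟨by rw [leibniz_lie, hu, h1, zero_lie, lie_zero, add_zero],
              fun k hk z hz => ?_⟩
            have h3 : ⁅t, ⁅u, z⁆⁆ = k • ⁅u, z⁆ := by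
              rw [leibniz_lie, hu, hz, zero_lie, zero_add, lie_smul]
            rw [lie_lie, h2 k hk z hz, h2 k hk _ h3, lie_zero, sub_zero]
          · have h3 : ⁅u, w⁆ = 0 := by rw [← lie_skew, h2 l hl u hu, neg_zero]
            rw [h3]
            exact ⟨lie_zero _, fun _ _ _ _ => zero_lie _⟩
        | zero => simp
        | add y z _ _ h3 h4 =>
          refine ⟨by rw [add_lie, lie_add, h3.1, h4.1, add_zero], fun k hk z hz => ?_⟩
          rw [add_lie, add_lie, h3.2 k hk z hz, h4.2 k hk z hz, add_zero] }
  have htt : t = t0 := by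
    have hmem : t0 - t ∈ I := ⟨hab _ ht _ (sub_mem (hd0 _) ht), hall⟩
    rcases LieAlgebra.IsSimple.eq_bot_or_eq_top I with h | h
    · rw [h, LieSubmodule.mem_bot, sub_eq_zero] at hmem
      exact hmem.symm
    · exfalso
      have h1 : e ∈ I := h ▸ LieSubmodule.mem_top e
      have h2 : ⁅t, e⁆ = 0 := h1.1
      rw [htr.lie_h_e_nsmul, ← Nat.cast_smul_eq_nsmul ℂ] at h2
      exact smul_ne_zero (by norm_num) htr.e_ne_zero h2
  have h4a : ⟪α, α⟫ < ⟪α + α, α + α⟫ := by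
    simp only [inner_add_left, inner_add_right]; linarith
  refine ⟨e, f, htr.e_ne_zero, htr.f_ne_zero, he, hf, ?_, ?_, ?_⟩
  · apply le_antisymm
    · intro x hx
      have h1 : ⁅e, x⁆ = 0 := hvan _ h4a _ (hbr _ _ _ he _ hx)
      have h2 : ⁅f, x⁆ ∈ G 0 := by simpa using hbr _ _ _ hf _ hx
      have h3 : ⁅e, ⁅f, x⁆⁆ = (2 : ℂ) • x := by
        have h4 := ht0z _ _ hx
        rw [← htt, ← htr.lie_e_f, lie_lie, h1, lie_zero, sub_zero] at h4
        rw [h4]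
        congr 1
        rw [mul_div_assoc, div_self ha.ne']; norm_num
      rw [← lie_skew, (hχ _ h2).1] at h3
      rw [Submodule.mem_span_singleton]
      refine ⟨-(χ ⁅f, x⁆ / 2), ?_⟩
      have : x = (1 / 2 : ℂ) • ((2 : ℂ) • x) := by module
      refine Eq.trans ?_ this.symm
      rw [← h3]; module
    · rw [Submodule.span_singleton_le_iff_mem]; exact he
  · apply le_antisymm
    · intro x hx
      have h1 : ⁅f, x⁆ = 0 :=
        hvan _ (by rw [← neg_add, inner_neg_neg]; exact h4a) _ (hbr _ _ _ hf _ hx)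
      have h2 : ⁅e, x⁆ ∈ G 0 := by simpa using hbr _ _ _ he _ hx
      have h3 : ⁅f, ⁅e, x⁆⁆ = (2 : ℂ) • x := by
        have h4 := ht0z _ _ hx
        rw [← htt, ← htr.lie_e_f, lie_lie, h1, lie_zero, zero_sub, neg_eq_iff_eq_neg] at h4
        rw [h4, ← neg_smul]
        congr 1
        rw [inner_neg_left, mul_div_assoc, neg_div, div_self ha.ne']; norm_num
      rw [← lie_skew, (hχ _ h2).2] at h3
      rw [Submodule.mem_span_singleton]
      refine ⟨(χ ⁅e, x⁆ / 2), ?_⟩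
      have : x = (1 / 2 : ℂ) • ((2 : ℂ) • x) := by module
      refine Eq.trans ?_ this.symm
      rw [← h3]; module
    · rw [Submodule.span_singleton_le_iff_mem]; exact hf
  · rw [htr.lie_e_f, htt]
    exact ht0z

end Grading

/-- The final linear algebra step. -/
lemma tensor_iso {L : Type*} [LieRing L] [LieAlgebra ℂ L] (x y : L) (hx : x ≠ 0)
    (X P Q : Submodule ℂ L) (hX : X = Submodule.span ℂ {x})
    (hPQ : ∀ p ∈ P, ⁅x, p⁆ ∈ Q) (hQP : ∀ q ∈ Q, ⁅y, q⁆ ∈ P)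
    (h1 : ∀ p ∈ P, ⁅y, ⁅x, p⁆⁆ = p) (h2 : ∀ q ∈ Q, ⁅x, ⁅y, q⁆⁆ = q) :
    ∃ e : (↥X ⊗[ℂ] ↥P) ≃ₗ[ℂ] ↥Q,
      ∀ (a : X) (b : P), (e (a ⊗ₜ[ℂ] b) : L) = ⁅(a : L), (b : L)⁆ := by
  subst hX
  let E1 : ℂ ≃ₗ[ℂ] ↥(Submodule.span ℂ {x}) := LinearEquiv.toSpanNonzeroSingleton ℂ L x hx
  let F : P →ₗ[ℂ] Q := ((LieAlgebra.ad ℂ L x : L →ₗ[ℂ] L)).restrict hPQ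
  let F' : Q →ₗ[ℂ] P := ((LieAlgebra.ad ℂ L y : L →ₗ[ℂ] L)).restrict hQP
  let E2 : P ≃ₗ[ℂ] Q := LinearEquiv.ofLinearMap F F'
    (LinearMap.ext fun q => Subtype.ext (h2 q q.2)) (LinearMap.ext fun p => Subtype.ext (h1 p p.2))
  refine ⟨(TensorProduct.congr E1.symm E2).trans (TensorProduct.lid ℂ Q), ?_⟩
  intro a b
  obtain ⟨c, rfl⟩ := E1.surjective a
  simp only [LinearEquiv.trans_apply, TensorProduct.congr_tmul, LinearEquiv.symm_apply_apply,
    TensorProduct.lid_tmul]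
  have h3 : ((E1 c : Submodule.span ℂ {x}) : L) = c • x := rfl
  have h4 : ((E2 b : Q) : L) = ⁅x, (b : L)⁆ := rfl
  rw [h3, Submodule.coe_smul, h4, smul_lie]

lemma tensor_iso_iSup {E : Type*} {L : Type*} [LieRing L] [LieAlgebra ℂ L] (x y : L) (hx : x ≠ 0)
    (X P Q : Submodule ℂ L) (hX : X = Submodule.span ℂ {x}) (g : E → Submodule ℂ L) (A B : Set E)
    (hP : P = ⨆ β ∈ A, g β) (hQ : Q = ⨆ β ∈ B, g β)
    (hA : ∀ β ∈ A, ∀ z ∈ g β, (∃ γ ∈ B, ⁅x, z⁆ ∈ g γ) ∧ ⁅y, ⁅x, z⁆⁆ = z)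
    (hB : ∀ β ∈ B, ∀ z ∈ g β, (∃ γ ∈ A, ⁅y, z⁆ ∈ g γ) ∧ ⁅x, ⁅y, z⁆⁆ = z) :
    ∃ e : (↥X ⊗[ℂ] ↥P) ≃ₗ[ℂ] ↥Q,
      ∀ (a : X) (b : P), (e (a ⊗ₜ[ℂ] b) : L) = ⁅(a : L), (b : L)⁆ := by
  have aux : ∀ (u v : L) (A B : Set E),
      (∀ β ∈ A, ∀ z ∈ g β, (∃ γ ∈ B, ⁅u, z⁆ ∈ g γ) ∧ ⁅v, ⁅u, z⁆⁆ = z) →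
      (∀ z ∈ ⨆ β ∈ A, g β, ⁅u, z⁆ ∈ (⨆ β ∈ B, g β) ∧ ⁅v, ⁅u, z⁆⁆ = z) := by
    intro u v A B h
    have h1 : (⨆ β ∈ A, g β) ≤ (⨆ β ∈ B, g β).comap (LieAlgebra.ad ℂ L u : L →ₗ[ℂ] L) := by
      refine iSup₂_le fun β hβ z hz => ?_
      obtain ⟨⟨γ, hγ, hz'⟩, -⟩ := h β hβ z hz
      exact Submodule.mem_iSup_of_mem γ (Submodule.mem_iSup_of_mem hγ hz')
    have h2 : (⨆ β ∈ A, g β) ≤ LinearMap.eqLocus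
        ((LieAlgebra.ad ℂ L v : L →ₗ[ℂ] L) ∘ₗ (LieAlgebra.ad ℂ L u : L →ₗ[ℂ] L))
        LinearMap.id := by
      refine iSup₂_le fun β hβ z hz => ?_
      exact (h β hβ z hz).2
    exact fun z hz => ⟨h1 hz, h2 hz⟩
  subst hP hQ
  exact tensor_iso x y hx X _ _ hX (fun p hp => (aux x y A B hA p hp).1)
    (fun p hp => (aux y x B A hB p hp).1) (fun p hp => (aux x y A B hA p hp).2)
    (fun p hp => (aux y x B A hB p hp).2)

end BracketIso

/-- Let `𝔤 = L` be a finite-dimensional complex simple Lie algebra with root system `Φ`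
(realized in a real inner product space `E`, with root spaces `g β` and root space
decomposition), base `Δ`, and let `α ∈ Δ` be a long simple root; set
`Σ_q := {α} ∪ N(α)`, `q_1^V := ⊕{𝔤_β : n_α(β) = 0, ht_{Σ_q}(β) = 1}` and
`q_2 := ⊕_{ht_{Σ_q}(δ)=2} 𝔤_δ`.  Then the Lie bracket induces a linear isomorphism
`𝔤_α ⊗ q_1^V → q_2`, `X ⊗ Y ↦ ⁅X, Y⁆`; similarly `𝔤_{-α} ⊗ q_{-1}^V → q_{-2}` is an
isomorphism. -/
theorem bracket_tensor_iso_q2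
    {E : Type*} [NormedAddCommGroup E] [InnerProductSpace ℝ E]
    {L : Type*} [LieRing L] [LieAlgebra ℂ L] [FiniteDimensional ℂ L]
    [LieAlgebra.IsSimple ℂ L]
    (Φ : Finset E)
    (hΦ0 : (0 : E) ∉ Φ)
    (hspan : Submodule.span ℝ (Φ : Set E) = ⊤)
    (hrefl : ∀ α ∈ Φ, ∀ β ∈ Φ, β - (2 * ⟪β, α⟫ / ⟪α, α⟫) • α ∈ Φ)
    (hcrys : ∀ α ∈ Φ, ∀ β ∈ Φ, ∃ m : ℤ, 2 * ⟪β, α⟫ / ⟪α, α⟫ = (m : ℝ))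
    (hred : ∀ α ∈ Φ, ∀ t : ℝ, t • α ∈ Φ → t = 1 ∨ t = -1)
    (hirr : ∀ S : Set E,
      (∀ β ∈ Φ, ∀ γ ∈ Φ, β ∈ S → ⟪β, γ⟫ ≠ 0 → γ ∈ S) →
      (∃ β ∈ Φ, β ∈ S) → ∀ β ∈ Φ, β ∈ S)
    (Δ : Finset E) (hΔΦ : (Δ : Set E) ⊆ (Φ : Set E))
    (hΔli : LinearIndependent ℝ (fun γ : Δ => (γ : E)))
    (n : E → E → ℤ)
    (hn : ∀ β ∈ Φ, β = ∑ γ ∈ Δ, (n β γ : ℝ) • γ)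
    (hsign : ∀ β ∈ Φ, (∀ γ ∈ Δ, 0 ≤ n β γ) ∨ (∀ γ ∈ Δ, n β γ ≤ 0))
    -- the Cartan subalgebra and the root space decomposition
    (h : Submodule ℂ L) (g : E → Submodule ℂ L)
    (habel : ∀ x ∈ h, ∀ y ∈ h, ⁅x, y⁆ = 0)
    (hgne : ∀ β ∈ Φ, g β ≠ ⊥)
    (hhg : ∀ β ∈ Φ, ∀ x ∈ h, ∀ y ∈ g β, ⁅x, y⁆ ∈ g β)
    (hgg : ∀ β ∈ Φ, ∀ γ ∈ Φ, ∀ x ∈ g β, ∀ y ∈ g γ,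
      (β + γ ∈ Φ → ⁅x, y⁆ ∈ g (β + γ)) ∧ (β + γ = 0 → ⁅x, y⁆ ∈ h) ∧
      (β + γ ∉ Φ → β + γ ≠ 0 → ⁅x, y⁆ = 0))
    (hdec : h ⊔ (⨆ β ∈ Φ, g β) = ⊤)
    (hindh : Disjoint h (⨆ β ∈ Φ, g β))
    (hindg : ∀ β ∈ Φ, Disjoint (g β) (h ⊔ ⨆ γ ∈ Φ.erase β, g γ))
    -- the long simple root `α`, its Dynkin neighbors, `Σ_q` and the height `ht_{Σ_q}`
    (α : E) (hαΔ : α ∈ Δ)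
    (hlong : ∀ γ ∈ Φ, ⟪γ, γ⟫ ≤ ⟪α, α⟫)
    (Nbr : Finset E) (hNbr : Nbr = Δ.filter fun γ => γ ≠ α ∧ ⟪γ, α⟫ ≠ 0)
    (Sq : Finset E) (hSq : Sq = insert α Nbr)
    (htq : E → ℤ) (hhtq : ∀ β, htq β = ∑ γ ∈ Sq, n β γ)
    -- the subspaces `q_{±1}^V` and `q_{±2}`
    (q1V qm1V q2 qm2 : Submodule ℂ L)
    (hq1V : q1V = ⨆ β ∈ {β : E | β ∈ Φ ∧ n β α = 0 ∧ htq β = 1}, g β)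
    (hqm1V : qm1V = ⨆ β ∈ {β : E | β ∈ Φ ∧ n β α = 0 ∧ htq β = -1}, g β)
    (hq2 : q2 = ⨆ δ ∈ {δ : E | δ ∈ Φ ∧ htq δ = 2}, g δ)
    (hqm2 : qm2 = ⨆ δ ∈ {δ : E | δ ∈ Φ ∧ htq δ = -2}, g δ) :
    (∃ e : (↥(g α) ⊗[ℂ] ↥q1V) ≃ₗ[ℂ] ↥q2,
      ∀ (x : g α) (y : q1V), (e (x ⊗ₜ[ℂ] y) : L) = ⁅(x : L), (y : L)⁆) ∧
    (∃ e : (↥(g (-α)) ⊗[ℂ] ↥qm1V) ≃ₗ[ℂ] ↥qm2,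
      ∀ (x : g (-α)) (y : qm1V), (e (x ⊗ₜ[ℂ] y) : L) = ⁅(x : L), (y : L)⁆) := by
  have hαΦ : α ∈ Φ := hΔΦ hαΔ
  have hα0 : α ≠ 0 := fun h => hΦ0 (h ▸ hαΦ)
  have ha : 0 < ⟪α, α⟫ := real_inner_self_pos.mpr hα0
  -- the extended grading
  obtain ⟨G, hG⟩ : ∃ G : E → Submodule ℂ L,
      G = fun β => if β = 0 then h else if β ∈ Φ then g β else ⊥ := ⟨_, rfl⟩
  have hG0 : G 0 = h := by simp [hG]
  have hGΦ : ∀ β ∈ Φ, G β = g β := by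
    intro β hβ
    have : β ≠ 0 := fun h => hΦ0 (h ▸ hβ)
    simp [hG, this, hβ]
  have hGn : ∀ β, β ≠ 0 → β ∉ Φ → G β = ⊥ := by
    intro β h1 h2
    simp [hG, h1, h2]
  have hsup : ⨆ β, G β = ⊤ := by
    rw [eq_top_iff, ← hdec]
    refine sup_le (hG0 ▸ le_iSup G 0) (iSup₂_le fun β hβ => ?_)
    exact hGΦ β hβ ▸ le_iSup G β
  have hind : iSupIndep G := by
    intro β
    by_cases hβ0 : β = 0
    · subst hβ0
      rw [hG0]
      refine hindh.mono_right (iSup₂_le fun γ hγ => ?_)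
      by_cases hγΦ : γ ∈ Φ
      · rw [hGΦ γ hγΦ]
        exact le_iSup₂_of_le γ hγΦ le_rfl
      · rw [hGn γ hγ hγΦ]; exact bot_le
    by_cases hβΦ : β ∈ Φ
    · rw [hGΦ β hβΦ]
      refine (hindg β hβΦ).mono_right (iSup₂_le fun γ hγ => ?_)
      by_cases hγ0 : γ = 0
      · subst hγ0
        rw [hG0]; exact le_sup_left
      by_cases hγΦ : γ ∈ Φ
      · rw [hGΦ γ hγΦ]
        exact le_sup_of_le_right
          (le_iSup₂_of_le γ (Finset.mem_erase.mpr ⟨hγ, hγΦ⟩) le_rfl)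
      · rw [hGn γ hγ0 hγΦ]; exact bot_le
    · rw [hGn β hβ0 hβΦ]; exact disjoint_bot_left
  have hbr : ∀ β γ, ∀ x ∈ G β, ∀ y ∈ G γ, ⁅x, y⁆ ∈ G (β + γ) := by
    intro β γ x hx y hy
    by_cases hβ0 : β = 0
    · subst hβ0
      rw [hG0] at hx
      rw [zero_add]
      by_cases hγ0 : γ = 0
      · subst hγ0
        rw [hG0] at hy
        rw [habel x hx y hy]; exact zero_mem _
      by_cases hγΦ : γ ∈ Φ
      · rw [hGΦ γ hγΦ] at hy ⊢
        exact hhg γ hγΦ x hx y hy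
      · rw [hGn γ hγ0 hγΦ, Submodule.mem_bot] at hy
        rw [hy, lie_zero]; exact zero_mem _
    by_cases hβΦ : β ∈ Φ
    · rw [hGΦ β hβΦ] at hx
      by_cases hγ0 : γ = 0
      · subst hγ0
        rw [hG0] at hy
        rw [add_zero, hGΦ β hβΦ, ← lie_skew]
        exact neg_mem (hhg β hβΦ y hy x hx)
      by_cases hγΦ : γ ∈ Φ
      · rw [hGΦ γ hγΦ] at hy
        obtain ⟨h1, h2, h3⟩ := hgg β hβΦ γ hγΦ x hx y hy
        by_cases hs : β + γ ∈ Φ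
        · rw [hGΦ _ hs]; exact h1 hs
        by_cases hs0 : β + γ = 0
        · rw [hs0, hG0]; exact h2 hs0
        · rw [h3 hs hs0]; exact zero_mem _
      · rw [hGn γ hγ0 hγΦ, Submodule.mem_bot] at hy
        rw [hy, lie_zero]; exact zero_mem _
    · rw [hGn β hβ0 hβΦ, Submodule.mem_bot] at hx
      rw [hx, zero_lie]; exact zero_mem _
  have hab : ∀ x ∈ G 0, ∀ y ∈ G 0, ⁅x, y⁆ = 0 := by
    rw [hG0]; exact habel
  have hcr : ∀ β ∈ Φ, ∃ m : ℤ, 2 * ⟪β, α⟫ = (m : ℝ) * ⟪α, α⟫ := by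
    intro β hβ
    obtain ⟨m, hm⟩ := hcrys α hαΦ β hβ
    exact ⟨m, by rw [← hm]; field_simp⟩
  have hGsupp : ∀ β, G β ≠ ⊥ → β = 0 ∨ β ∈ Φ := by
    intro β hβ
    by_contra hcon
    push Not at hcon
    exact hβ (hGn β hcon.1 hcon.2)
  have hGlong : ∀ β, G β ≠ ⊥ → ⟪β, β⟫ ≤ ⟪α, α⟫ := by
    intro β hβ
    rcases hGsupp β hβ with rfl | h1
    · rw [inner_zero_left]; exact ha.le
    · exact hlong β h1
  have hGcr : ∀ β, G β ≠ ⊥ → ∃ m : ℤ, 2 * ⟪β, α⟫ = (m : ℝ) * ⟪α, α⟫ := by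
    intro β hβ
    rcases hGsupp β hβ with rfl | h1
    · exact ⟨0, by simp⟩
    · exact hcr β h1
  have hvan : ∀ γ, ⟪α, α⟫ < ⟪γ, γ⟫ → ∀ x ∈ G γ, x = 0 := by
    intro γ hγ x hx
    by_contra hx0
    exact absurd (hGlong γ (fun h => hx0 (by simpa [h] using hx))) (not_le.mpr hγ)
  have hrefl' : ∀ β ∈ Φ, ∀ m : ℤ, 2 * ⟪β, α⟫ = (m : ℝ) * ⟪α, α⟫ → β - (m : ℝ) • α ∈ Φ := by
    intro β hβ m hm
    have h1 := hrefl α hαΦ β hβ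
    rwa [hm, mul_div_assoc, div_self ha.ne', mul_one] at h1
  have hnegα : -α ∈ Φ := by
    have h1 := hrefl' α hαΦ 2 (by norm_num)
    have h2 : α - ((2 : ℤ) : ℝ) • α = -α := by push_cast; module
    rwa [h2] at h1
  obtain ⟨e, f, he0, hf0, he, hf, hse, hsf, hact⟩ :=
    BracketIso.long_root_structure G hind hsup hbr hab α hα0 (by rw [hGΦ α hαΦ]; exact hgne α hαΦ)
      hGlong hGcr
  rw [hGΦ α hαΦ] at hse
  rw [hGΦ _ hnegα] at hsf
  -- bounds on the pairing
  have hbd : ∀ β ∈ Φ, ∀ m : ℤ, 2 * ⟪β, α⟫ = (m : ℝ) * ⟪α, α⟫ →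
      m ≤ 2 ∧ -2 ≤ m ∧ (m = 2 → β = α) ∧ (m = -2 → β = -α) := by
    intro β hβ m hm
    have h1 := hlong β hβ
    have h2 : ⟪β - α, β - α⟫ = ⟪β, β⟫ + ⟪α, α⟫ - m * ⟪α, α⟫ := by
      simp only [inner_sub_left, inner_sub_right, real_inner_comm β α]; linarith
    have h3 : ⟪β + α, β + α⟫ = ⟪β, β⟫ + ⟪α, α⟫ + m * ⟪α, α⟫ := by
      simp only [inner_add_left, inner_add_right, real_inner_comm β α]; linarith
    have h4 : 0 ≤ ⟪β - α, β - α⟫ := real_inner_self_nonneg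
    have h5 : 0 ≤ ⟪β + α, β + α⟫ := real_inner_self_nonneg
    refine ⟨?_, ?_, ?_, ?_⟩
    · by_contra hcon
      have : (3 : ℝ) ≤ m := by exact_mod_cast (by omega : 3 ≤ m)
      nlinarith
    · by_contra hcon
      have : (m : ℝ) ≤ -3 := by exact_mod_cast (by omega : m ≤ -3)
      nlinarith
    · rintro rfl
      push_cast at h2
      rw [← sub_eq_zero, ← inner_self_eq_zero (𝕜 := ℝ)]
      linarith
    · rintro rfl
      push_cast at h3
      rw [← add_eq_zero_iff_eq_neg, ← inner_self_eq_zero (𝕜 := ℝ)]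
      linarith
  -- uniqueness of coefficients
  have huniq : ∀ c : E → ℝ, ∑ γ ∈ Δ, c γ • γ = 0 → ∀ γ ∈ Δ, c γ = 0 := by
    intro c hc γ hγ
    rw [Fintype.linearIndependent_iff] at hΔli
    refine hΔli (fun γ => c γ) ?_ ⟨γ, hγ⟩
    rw [← hc]
    exact Finset.sum_coe_sort Δ (fun γ => c γ • γ)
  have hnadd : ∀ β ∈ Φ, ∀ γ ∈ Φ, β + γ ∈ Φ → ∀ δ ∈ Δ, n (β + γ) δ = n β δ + n γ δ := by
    intro β hβ γ hγ hs δ hδ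
    have h1 := huniq (fun δ => (n (β + γ) δ : ℝ) - (n β δ + n γ δ)) (by
      simp only [sub_smul, add_smul, Finset.sum_sub_distrib, Finset.sum_add_distrib]
      rw [← hn β hβ, ← hn γ hγ, ← hn _ hs, sub_self]) δ hδ
    have h2 : (n (β + γ) δ : ℝ) = ((n β δ + n γ δ : ℤ) : ℝ) := by push_cast; linarith
    exact_mod_cast h2
  have hnsimple : ∀ γ ∈ Δ, ∀ δ ∈ Δ, n γ δ = if δ = γ then 1 else 0 := by
    intro γ hγ δ hδ
    have h1 := huniq (fun δ => (n γ δ : ℝ) - (if δ = γ then 1 else 0)) (by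
      simp only [sub_smul, Finset.sum_sub_distrib, ite_smul, one_smul, zero_smul]
      rw [← hn γ (hΔΦ hγ), Finset.sum_ite_eq' Δ γ (fun x => x), if_pos hγ, sub_self]) δ hδ
    have h2 : (n γ δ : ℝ) = ((if δ = γ then 1 else 0 : ℤ) : ℝ) := by
      push_cast
      linarith
    exact_mod_cast h2
  -- pairing of simple roots with `α`
  have hsimp : ∀ γ ∈ Δ, 2 * ⟪γ, α⟫ =
      ((3 * (if γ = α then 1 else 0) - (if γ ∈ Sq then 1 else 0) : ℤ) : ℝ) * ⟪α, α⟫ := by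
    intro γ hγ
    by_cases hγα : γ = α
    · subst hγα
      have : γ ∈ Sq := by rw [hSq]; exact Finset.mem_insert_self _ _
      simp only [this, if_true]
      push_cast
      ring
    by_cases hin : ⟪γ, α⟫ = 0
    · have : γ ∉ Sq := by
        rw [hSq, Finset.mem_insert, hNbr, Finset.mem_filter]
        tauto
      simp [this, hγα, hin]
    have hmem : γ ∈ Sq := by
      rw [hSq, Finset.mem_insert, hNbr, Finset.mem_filter]
      tauto
    obtain ⟨m, hm⟩ := hcr γ (hΔΦ hγ)
    obtain ⟨h1, h2, h3, h4⟩ := hbd γ (hΔΦ hγ) m hm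
    have hm2 : m ≠ 2 := fun h => hγα (h3 h)
    have hm0 : m ≠ 0 := by
      rintro rfl
      apply hin
      simpa using hm
    have hm2' : m ≠ -2 := by
      intro h
      have h5 := h4 h
      have h6 := huniq (fun δ => (n γ δ : ℝ) + n α δ) (by
        simp only [add_smul, Finset.sum_add_distrib]
        rw [← hn γ (hΔΦ hγ), ← hn α hαΦ, h5, neg_add_cancel]) γ hγ
      simp only [hnsimple γ hγ γ hγ, hnsimple α hαΔ γ hγ, hγα, if_true, if_false] at h6
      norm_num at h6
    have hm1 : m ≠ 1 := by
      rintro rfl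
      have h5 := hrefl' γ (hΔΦ hγ) 1 hm
      have h6 : γ - ((1 : ℤ) : ℝ) • α = γ - α := by push_cast; module
      rw [h6] at h5
      have h7 : ∀ δ ∈ Δ, n γ δ = n (γ - α) δ + n α δ := by
        intro δ hδ
        have := hnadd (γ - α) h5 α hαΦ (by rw [sub_add_cancel]; exact hΔΦ hγ) δ hδ
        rwa [sub_add_cancel] at this
      have h8 := h7 γ hγ
      have h9 := h7 α hαΔ
      simp only [hnsimple γ hγ γ hγ, hnsimple α hαΔ γ hγ, hnsimple γ hγ α hαΔ,
        hnsimple α hαΔ α hαΔ, hγα, Ne.symm hγα, if_true, if_false] at h8 h9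
      rcases hsign _ h5 with h10 | h10
      · have := h10 α hαΔ; omega
      · have := h10 γ hγ; omega
    have hmm : m = -1 := by omega
    rw [hm, hmm]
    simp [hmem, hγα]
  have hSqΔ : Sq ⊆ Δ := by
    rw [hSq, hNbr]
    exact Finset.insert_subset hαΔ (Finset.filter_subset _ _)
  have hαSq : α ∈ Sq := by rw [hSq]; exact Finset.mem_insert_self _ _
  have hpair : ∀ β ∈ Φ, 2 * ⟪β, α⟫ = ((3 * n β α - htq β : ℤ) : ℝ) * ⟪α, α⟫ := by
    intro β hβ
    have h1 : 2 * ⟪β, α⟫ = ∑ γ ∈ Δ, (n β γ : ℝ) * (2 * ⟪γ, α⟫) := by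
      conv_lhs => rw [hn β hβ, sum_inner, Finset.mul_sum]
      refine Finset.sum_congr rfl fun γ _ => ?_
      rw [real_inner_smul_left]; ring
    have h2 : ∑ γ ∈ Δ, (n β γ : ℝ) * (2 * ⟪γ, α⟫) =
        ((∑ γ ∈ Δ, n β γ * (3 * (if γ = α then 1 else 0) - (if γ ∈ Sq then 1 else 0)) : ℤ) : ℝ)
          * ⟪α, α⟫ := by
      rw [Int.cast_sum, Finset.sum_mul]
      refine Finset.sum_congr rfl fun γ hγ => ?_
      rw [hsimp γ hγ, Int.cast_mul]; ring
    have h3 : ∑ γ ∈ Δ, n β γ * (3 * (if γ = α then 1 else 0) - (if γ ∈ Sq then 1 else 0)) =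
        3 * n β α - htq β := by
      rw [hhtq]
      simp only [mul_sub, Finset.sum_sub_distrib, mul_ite, mul_one, mul_zero]
      rw [Finset.sum_ite_eq' Δ α, if_pos hαΔ, Finset.sum_ite_mem,
        Finset.inter_eq_right.mpr hSqΔ]
      ring
    rw [h1, h2, h3]
  have hhtα : htq α = 1 := by
    rw [hhtq, Finset.sum_congr rfl (fun γ hγ => hnsimple α hαΔ γ (hSqΔ hγ)),
      Finset.sum_ite_eq' Sq α, if_pos hαSq]
  have hnα : n α α = 1 := by rw [hnsimple α hαΔ α hαΔ, if_pos rfl]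
  have hhtadd : ∀ β ∈ Φ, β + α ∈ Φ → htq (β + α) = htq β + 1 ∧ n (β + α) α = n β α + 1 := by
    intro β hβ hs
    constructor
    · rw [← hhtα, hhtq, hhtq, hhtq, ← Finset.sum_add_distrib]
      exact Finset.sum_congr rfl (fun γ hγ => hnadd β hβ α hαΦ hs γ (hSqΔ hγ))
    · rw [hnadd β hβ α hαΦ hs α hαΔ, hnα]
  -- raising and lowering
  have hraise : ∀ β ∈ Φ, 3 * n β α - htq β = -1 → β + α ∈ Φ ∧
      ∀ z ∈ g β, ⁅e, z⁆ ∈ g (β + α) ∧ ⁅f, ⁅e, z⁆⁆ = z := by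
    intro β hβ hm
    have h1 := hpair β hβ
    rw [hm] at h1
    have h2 := hrefl' β hβ _ h1
    have h3 : β - ((-1 : ℤ) : ℝ) • α = β + α := by push_cast; module
    rw [h3] at h2
    refine ⟨h2, fun z hz => ?_⟩
    rw [← hGΦ β hβ] at hz
    constructor
    · rw [← hGΦ _ h2, add_comm]
      exact hbr _ _ _ he _ hz
    · have h4 : ⁅f, z⁆ = 0 := by
        apply hvan _ _ _ (hbr _ _ _ hf _ hz)
        have := real_inner_self_nonneg (x := β) (F := E)
        push_cast at h1
        simp only [inner_add_left, inner_add_right, inner_neg_left, inner_neg_right,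
          real_inner_comm β α]
        linarith
      have h5 := hact β z hz
      rw [lie_lie, h4, lie_zero, zero_sub, h1, mul_div_assoc, div_self ha.ne'] at h5
      push_cast at h5
      rw [mul_one, neg_smul, one_smul] at h5
      exact neg_injective h5
  have hlower : ∀ β ∈ Φ, 3 * n β α - htq β = 1 → β - α ∈ Φ ∧
      ∀ z ∈ g β, ⁅f, z⁆ ∈ g (β - α) ∧ ⁅e, ⁅f, z⁆⁆ = z := by
    intro β hβ hm
    have h1 := hpair β hβ
    rw [hm] at h1
    have h2 := hrefl' β hβ _ h1
    have h3 : β - ((1 : ℤ) : ℝ) • α = β - α := by push_cast; module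
    rw [h3] at h2
    refine ⟨h2, fun z hz => ?_⟩
    rw [← hGΦ β hβ] at hz
    constructor
    · rw [← hGΦ _ h2, sub_eq_neg_add]
      exact hbr _ _ _ hf _ hz
    · have h4 : ⁅e, z⁆ = 0 := by
        apply hvan _ _ _ (hbr _ _ _ he _ hz)
        have := real_inner_self_nonneg (x := β) (F := E)
        push_cast at h1
        simp only [inner_add_left, inner_add_right, real_inner_comm β α]
        linarith
      have h5 := hact β z hz
      rw [lie_lie, h4, lie_zero, sub_zero, h1, mul_div_assoc, div_self ha.ne'] at h5
      push_cast at h5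
      rwa [mul_one, one_smul] at h5
  have hhtsub : ∀ β ∈ Φ, β - α ∈ Φ → htq (β - α) = htq β - 1 ∧ n (β - α) α = n β α - 1 := by
    intro β hβ hs
    have h1 := hhtadd (β - α) hs (by rw [sub_add_cancel]; exact hβ)
    rw [sub_add_cancel] at h1
    omega
  have hnnegα : n (-α) α = -1 := by
    have h1 := huniq (fun δ => (n (-α) δ : ℝ) + n α δ) (by
      simp only [add_smul, Finset.sum_add_distrib]
      rw [← hn _ hnegα, ← hn α hαΦ, neg_add_cancel]) α hαΔ
    rw [hnα] at h1
    have h2 : (n (-α) α : ℝ) = ((-1 : ℤ) : ℝ) := by push_cast at h1 ⊢; linarith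
    exact_mod_cast h2
  have hB : ∀ δ ∈ Φ, htq δ = 2 → n δ α = 1 := by
    intro δ hδ h2
    obtain ⟨h3, h4, h5, h6⟩ := hbd δ hδ _ (hpair δ hδ)
    by_contra hcon
    have h7 : n δ α = 0 := by omega
    have h8 := h6 (by omega)
    rw [h8, hnnegα] at h7
    omega
  have hB' : ∀ δ ∈ Φ, htq δ = -2 → n δ α = -1 := by
    intro δ hδ h2
    obtain ⟨h3, h4, h5, h6⟩ := hbd δ hδ _ (hpair δ hδ)
    by_contra hcon
    have h7 : n δ α = 0 := by omega
    have h8 := h5 (by omega)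
    rw [h8, hnα] at h7
    omega
  constructor
  · refine BracketIso.tensor_iso_iSup e f he0 _ _ _ hse g _ _ hq1V hq2 ?_ ?_
    · rintro β ⟨hβ, h1, h2⟩ z hz
      obtain ⟨h3, h4⟩ := hraise β hβ (by omega)
      exact ⟨⟨β + α, ⟨h3, by have := hhtadd β hβ h3; omega⟩, (h4 z hz).1⟩, (h4 z hz).2⟩
    · rintro β ⟨hβ, h2⟩ z hz
      have h1 := hB β hβ h2
      obtain ⟨h3, h4⟩ := hlower β hβ (by omega)
      have h5 := hhtsub β hβ h3
      exact ⟨⟨β - α, ⟨h3, by omega, by omega⟩, (h4 z hz).1⟩, (h4 z hz).2⟩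
  · refine BracketIso.tensor_iso_iSup f e hf0 _ _ _ hsf g _ _ hqm1V hqm2 ?_ ?_
    · rintro β ⟨hβ, h1, h2⟩ z hz
      obtain ⟨h3, h4⟩ := hlower β hβ (by omega)
      exact ⟨⟨β - α, ⟨h3, by have := hhtsub β hβ h3; omega⟩, (h4 z hz).1⟩, (h4 z hz).2⟩
    · rintro β ⟨hβ, h2⟩ z hz
      have h1 := hB' β hβ h2
      obtain ⟨h3, h4⟩ := hraise β hβ (by omega)
      have h5 := hhtadd β hβ h3
      exact ⟨⟨β + α, ⟨h3, by omega, by omega⟩, (h4 z hz).1⟩, (h4 z hz).2⟩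
end

section
/- Let 𝔤 be a finite-dimensional complex simple Lie algebra with root system Φ, base Δ, and let α ∈ Δ be a long simple root; set Σ_q := {α} ∪ N(α) and write ⟨β, α^∨⟩ := 2(β,α)/(α,α). Then: (a) every root β with ht_{Σ_q}(β) = 1 is either equal to α, in which case ⟨β,α^∨⟩ = 2, or satisfies n_α(β) = 0 and ⟨β,α^∨⟩ = −1; (b) every root δ with ht_{Σ_q}(δ) = 2 satisfies ⟨δ,α^∨⟩ = 1. In particular β(H_α) ≠ 0 for every root β with ht_{Σ_q}(β) ∈ {1,2}, where H_α is the element of the Cartan subalgebra representing α via the Killing form. -/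
open scoped RealInnerProductSpace Classical

/-- Let `Φ` be the root system of a finite-dimensional complex simple Lie algebra
(an irreducible reduced crystallographic root system) with base `Δ`, and let `α ∈ Δ` be a
long simple root; set `Σ_q := {α} ∪ N(α)` and `⟨β, α^∨⟩ := 2(β,α)/(α,α)`.  Then:
(a) every root `β` with `ht_{Σ_q}(β) = 1` is either equal to `α`, in which case
`⟨β,α^∨⟩ = 2`, or satisfies `n_α(β) = 0` and `⟨β,α^∨⟩ = −1`;
(b) every root `δ` with `ht_{Σ_q}(δ) = 2` satisfies `⟨δ,α^∨⟩ = 1`.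
In particular `β(H_α) ≠ 0`, i.e. `(β, α) ≠ 0`, for every root `β` with
`ht_{Σ_q}(β) ∈ {1, 2}` (where `H_α` is the element of the Cartan subalgebra representing
`α` via the Killing form, so that `β(H_α)` is a positive multiple of `(β,α)`). -/
theorem pairing_with_long_coroot_on_low_heights
    {E : Type*} [NormedAddCommGroup E] [InnerProductSpace ℝ E]
    (Φ : Finset E)
    (hΦ0 : (0 : E) ∉ Φ)
    (hspan : Submodule.span ℝ (Φ : Set E) = ⊤)
    (hrefl : ∀ α ∈ Φ, ∀ β ∈ Φ, β - (2 * ⟪β, α⟫ / ⟪α, α⟫) • α ∈ Φ)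
    (hcrys : ∀ α ∈ Φ, ∀ β ∈ Φ, ∃ m : ℤ, 2 * ⟪β, α⟫ / ⟪α, α⟫ = (m : ℝ))
    (hred : ∀ α ∈ Φ, ∀ t : ℝ, t • α ∈ Φ → t = 1 ∨ t = -1)
    (hirr : ∀ S : Set E,
      (∀ β ∈ Φ, ∀ γ ∈ Φ, β ∈ S → ⟪β, γ⟫ ≠ 0 → γ ∈ S) →
      (∃ β ∈ Φ, β ∈ S) → ∀ β ∈ Φ, β ∈ S)
    (Δ : Finset E) (hΔΦ : (Δ : Set E) ⊆ (Φ : Set E))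
    (hΔli : LinearIndependent ℝ (fun γ : Δ => (γ : E)))
    (n : E → E → ℤ)
    (hn : ∀ β ∈ Φ, β = ∑ γ ∈ Δ, (n β γ : ℝ) • γ)
    (hsign : ∀ β ∈ Φ, (∀ γ ∈ Δ, 0 ≤ n β γ) ∨ (∀ γ ∈ Δ, n β γ ≤ 0))
    (α : E) (hαΔ : α ∈ Δ)
    (hlong : ∀ γ ∈ Φ, ⟪γ, γ⟫ ≤ ⟪α, α⟫)
    (Nbr : Finset E) (hNbr : Nbr = Δ.filter fun γ => γ ≠ α ∧ ⟪γ, α⟫ ≠ 0)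
    (Sq : Finset E) (hSq : Sq = insert α Nbr)
    (htq : E → ℤ) (hhtq : ∀ β, htq β = ∑ γ ∈ Sq, n β γ) :
    (∀ β ∈ Φ, htq β = 1 →
      (β = α ∧ 2 * ⟪β, α⟫ / ⟪α, α⟫ = 2) ∨
      (n β α = 0 ∧ 2 * ⟪β, α⟫ / ⟪α, α⟫ = -1)) ∧
    (∀ δ ∈ Φ, htq δ = 2 → 2 * ⟪δ, α⟫ / ⟪α, α⟫ = 1) ∧
    (∀ β ∈ Φ, (htq β = 1 ∨ htq β = 2) → ⟪β, α⟫ ≠ 0) := by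
  have hαΦ : α ∈ Φ := hΔΦ hαΔ
  have hα0 : α ≠ 0 := fun h => hΦ0 (h ▸ hαΦ)
  have hpos : 0 < ⟪α, α⟫ := real_inner_self_pos.2 hα0
  -- uniqueness of coefficients
  have huniq : ∀ f g : E → ℝ, ∑ γ ∈ Δ, f γ • γ = ∑ γ ∈ Δ, g γ • γ → ∀ γ ∈ Δ, f γ = g γ := by
    intro f g h γ hγ
    have h1 : ∑ γ : Δ, (f γ - g γ) • (γ : E) = 0 := by
      rw [Finset.sum_coe_sort Δ (fun γ => (f γ - g γ) • γ)]
      simp only [sub_smul, Finset.sum_sub_distrib, h, sub_self]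
    have := (Fintype.linearIndependent_iff.1 hΔli) (fun γ => f γ - g γ) h1 ⟨γ, hγ⟩
    simpa [sub_eq_zero] using this
  have hsingle : ∀ (c : ℝ), ∀ γ ∈ Δ, ∑ δ ∈ Δ, (if δ = γ then c else 0) • δ = c • γ := by
    intro c γ hγ
    simp [ite_smul, Finset.sum_ite_eq', hγ]
  have hle2 : ∀ β ∈ Φ, ∀ m : ℤ, 2 * ⟪β, α⟫ / ⟪α, α⟫ = (m : ℝ) →
      -2 ≤ m ∧ m ≤ 2 ∧ (m = 2 → β = α) ∧ (m = -2 → β = -α) := by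
    intro β hβ m hm
    have hm' : 2 * ⟪β, α⟫ = m * ⟪α, α⟫ := by rwa [div_eq_iff hpos.ne'] at hm
    have hl := hlong β hβ
    have h1 : ⟪β - α, β - α⟫ = ⟪β, β⟫ - 2 * ⟪β, α⟫ + ⟪α, α⟫ := real_inner_sub_sub_self β α
    have h2 : ⟪β + α, β + α⟫ = ⟪β, β⟫ + 2 * ⟪β, α⟫ + ⟪α, α⟫ := real_inner_add_add_self β α
    have h3 : 0 ≤ ⟪β - α, β - α⟫ := real_inner_self_nonneg
    have h4 : 0 ≤ ⟪β + α, β + α⟫ := real_inner_self_nonneg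
    refine ⟨?_, ?_, ?_, ?_⟩
    · have : (-2 : ℝ) ≤ m := by
        by_contra! h
        nlinarith
      exact_mod_cast this
    · have : (m : ℝ) ≤ 2 := by
        by_contra! h
        nlinarith
      exact_mod_cast this
    · rintro rfl
      push_cast at hm'
      have : ⟪β - α, β - α⟫ = 0 := by linarith
      exact sub_eq_zero.1 (inner_self_eq_zero.1 this)
    · rintro rfl
      push_cast at hm'
      have : ⟪β + α, β + α⟫ = 0 := by linarith
      exact eq_neg_of_add_eq_zero_left (inner_self_eq_zero.1 this)
  -- a root that is `-α` has coefficient `-1`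
  have hneg : -α ∈ Φ → n (-α) α = -1 := by
    intro h
    have h1 := hn _ h
    have h2 := hsingle (-1) α hαΔ
    have := huniq _ _ (h1.symm.trans ((neg_one_smul ℝ α).symm.trans h2.symm)) α hαΔ
    simp only [if_true] at this
    exact_mod_cast this
  -- neighbours pair to `-1`
  have hnb : ∀ γ ∈ Nbr, 2 * ⟪γ, α⟫ = - ⟪α, α⟫ := by
    intro γ hγ
    rw [hNbr, Finset.mem_filter] at hγ
    obtain ⟨hγΔ, hne, hip⟩ := hγ
    have hγΦ : γ ∈ Φ := hΔΦ hγΔ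
    obtain ⟨m, hm⟩ := hcrys α hαΦ γ hγΦ
    have hm' : 2 * ⟪γ, α⟫ = m * ⟪α, α⟫ := by rwa [div_eq_iff hpos.ne'] at hm
    obtain ⟨hl, -, -, h2⟩ := hle2 γ hγΦ m hm
    have hm0 : m ≠ 0 := by
      rintro rfl
      apply hip
      push_cast at hm'
      linarith
    have hm2 : m ≠ -2 := by
      intro h
      have hγα := h2 h
      have := huniq _ _ ((hsingle 1 γ hγΔ).trans (((one_smul ℝ γ).trans
        (hγα.trans (neg_one_smul ℝ α).symm)).trans (hsingle (-1) α hαΔ).symm)) γ hγΔ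
      simp [hne] at this
    have hmle : m ≤ 0 := by
      by_contra! hmp
      have hr := hrefl α hαΦ γ hγΦ
      rw [hm] at hr
      have e1 := hn _ hr
      have e2 : ∑ δ ∈ Δ, ((if δ = γ then (1 : ℝ) else 0) - (if δ = α then (m : ℝ) else 0)) • δ
          = γ - (m : ℝ) • α := by
        simp only [sub_smul, Finset.sum_sub_distrib]
        rw [hsingle 1 γ hγΔ, hsingle m α hαΔ, one_smul]
      have e3 := huniq _ _ (e1.symm.trans e2.symm)
      have eγ := e3 γ hγΔ
      have eα := e3 α hαΔ
      simp only [if_true, if_neg hne, sub_zero] at eγ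
      simp only [if_true, if_neg hne.symm, zero_sub] at eα
      have eγ' : n (γ - (m : ℝ) • α) γ = 1 := by exact_mod_cast eγ
      have eα' : n (γ - (m : ℝ) • α) α = -m := by exact_mod_cast eα
      rcases hsign _ hr with h | h
      · have := h α hαΔ
        omega
      · have := h γ hγΔ
        omega
    have : m = -1 := by omega
    subst this
    push_cast at hm'
    linarith
  have hαN : α ∉ Nbr := by simp [hNbr]
  have hNΔ : insert α Nbr ⊆ Δ := by
    intro x hx
    rcases Finset.mem_insert.1 hx with rfl | hx
    · exact hαΔ
    · rw [hNbr] at hx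
      exact (Finset.mem_filter.1 hx).1
  have key : ∀ β ∈ Φ, 2 * ⟪β, α⟫ / ⟪α, α⟫ = ((3 * n β α - htq β : ℤ) : ℝ) := by
    intro β hβ
    rw [div_eq_iff hpos.ne']
    have h1 : ⟪β, α⟫ = ∑ γ ∈ Δ, (n β γ : ℝ) * ⟪γ, α⟫ := by
      conv_lhs => rw [hn β hβ]
      rw [sum_inner]
      simp only [real_inner_smul_left]
    have h2 : ∑ γ ∈ insert α Nbr, (n β γ : ℝ) * ⟪γ, α⟫ = ∑ γ ∈ Δ, (n β γ : ℝ) * ⟪γ, α⟫ := by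
      apply Finset.sum_subset hNΔ
      intro x hx hx'
      rw [Finset.mem_insert, not_or, hNbr, Finset.mem_filter] at hx'
      have : ⟪x, α⟫ = 0 := by
        by_contra h
        exact hx'.2 ⟨hx, hx'.1, h⟩
      rw [this, mul_zero]
    have h3 : ∑ γ ∈ Nbr, (n β γ : ℝ) * ⟪γ, α⟫ = (∑ γ ∈ Nbr, (n β γ : ℝ)) * (- ⟪α, α⟫ / 2) := by
      rw [Finset.sum_mul]
      apply Finset.sum_congr rfl
      intro γ hγ
      have := hnb γ hγ
      rw [show ⟪γ, α⟫ = - ⟪α, α⟫ / 2 by linarith]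
    rw [Finset.sum_insert hαN, h3] at h2
    rw [hhtq, hSq, Finset.sum_insert hαN, h1, ← h2]
    push_cast
    ring
  have A : ∀ β ∈ Φ, htq β = 1 →
      (β = α ∧ 2 * ⟪β, α⟫ / ⟪α, α⟫ = 2) ∨
      (n β α = 0 ∧ 2 * ⟪β, α⟫ / ⟪α, α⟫ = -1) := by
    intro β hβ h
    have hk := key β hβ
    obtain ⟨h1, h2, h3, -⟩ := hle2 β hβ _ hk
    have h4 : n β α = 0 ∨ n β α = 1 := by omega
    rcases h4 with h4 | h4
    · right
      refine ⟨h4, ?_⟩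
      rw [hk, h, h4]
      norm_num
    · left
      refine ⟨h3 (by omega), ?_⟩
      rw [hk, h, h4]
      norm_num
  have B : ∀ δ ∈ Φ, htq δ = 2 → 2 * ⟪δ, α⟫ / ⟪α, α⟫ = 1 := by
    intro β hβ h
    have hk := key β hβ
    obtain ⟨h1, h2, -, h3⟩ := hle2 β hβ _ hk
    have h4 : n β α = 0 ∨ n β α = 1 := by omega
    rcases h4 with h4 | h4
    · exfalso
      have h5 := h3 (by omega)
      subst h5
      have := hneg hβ
      omega
    · rw [hk, h, h4]
      norm_num
  refine ⟨A, B, ?_⟩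
  intro β hβ h h0
  rcases h with h | h
  · rcases A β hβ h with ⟨-, h'⟩ | ⟨-, h'⟩ <;> rw [h0] at h' <;> norm_num at h'
  · have h' := B β hβ h
    rw [h0] at h'
    norm_num at h'
end

section
/- Let 𝔤 be a finite-dimensional complex simple Lie algebra with Cartan subalgebra 𝔥, Killing form κ, root system Φ, base Δ, and let α ∈ Δ be a long simple root; set Σ_q := {α} ∪ N(α) and for i ≠ 0 let q_i := ⊕_{ht_{Σ_q}(β)=i} 𝔤_β. Let H_α ∈ 𝔥 be the unique element with α = κ(H_α, ·)|_𝔥. Then for i = 1 and i = 2, the bilinear map q_i × q_{−i} → ℂ given by (Z, X) ↦ κ(H_α, ⁅Z, X⁆) is nondegenerate. -/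
open scoped RealInnerProductSpace Classical
set_option linter.unusedSectionVars false

/-- In an irreducible root system any two roots have a common non-orthogonal root. -/
lemma exists_common_nonorth {ι K M N : Type*} [Field K] [CharZero K] [AddCommGroup M] [Module K M]
    [AddCommGroup N] [Module K N] [Finite ι] (P : RootPairing ι K M N) [P.IsRootSystem]
    [P.IsIrreducible] (a b : ι) : ∃ d, P.pairing d a ≠ 0 ∧ P.pairing d b ≠ 0 := by
  have key : ∀ i j, (∃ d, P.pairing d a ≠ 0 ∧ P.pairing d i ≠ 0) → P.pairing i j ≠ 0 →
      (∃ d, P.pairing d a ≠ 0 ∧ P.pairing d j ≠ 0) := by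
    rintro i j ⟨d, h1, h2⟩ hij
    by_cases hdj : P.pairing d j = 0
    · by_cases hia : P.pairing i a = 0
      · have e : ∀ k, P.pairing (P.reflectionPerm i d) k =
            P.pairing d k - P.pairing d i * P.pairing i k := by
          intro k
          rw [← P.root_coroot'_eq_pairing, P.root_reflectionPerm, P.reflection_apply]
          simp
        refine ⟨P.reflectionPerm i d, ?_, ?_⟩
        · rw [e, hia]; simpa using h1
        · rw [e, hdj]; simpa using ⟨h2, hij⟩
      · exact ⟨i, hia, hij⟩
    · exact ⟨d, h1, hdj⟩
  by_contra hb
  let S : Set ι := {i | ∃ d, P.pairing d a ≠ 0 ∧ P.pairing d i ≠ 0}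
  have haS : a ∈ S := ⟨a, by simp, by simp⟩
  have hq := RootPairing.IsIrreducible.eq_top_of_invtSubmodule_reflection (P := P)
    (Submodule.span K (P.root '' S)) ?_ ?_
  · have h0 : Submodule.span K (P.root '' S) ≤ LinearMap.ker (P.coroot' b) := by
      rw [Submodule.span_le]
      rintro _ ⟨i, hi, rfl⟩
      by_contra hne
      exact hb (key i b hi (by simpa using hne))
    rw [hq] at h0
    have : P.root b ∈ LinearMap.ker (P.coroot' b) := h0 trivial
    simp at this
  · intro j
    rw [Module.End.mem_invtSubmodule, Submodule.span_le]
    rintro _ ⟨i, hi, rfl⟩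
    by_cases hij : P.pairing i j = 0
    · have : P.reflection j (P.root i) = P.root i := by
        simp [P.reflection_apply, hij]
      simp only [Submodule.comap_coe, Set.mem_preimage, SetLike.mem_coe]
      erw [this]
      exact Submodule.subset_span ⟨i, hi, rfl⟩
    · have hj := key i j hi hij
      have : P.reflection j (P.root i) = P.root i - P.pairing i j • P.root j := by
        simp [P.reflection_apply]
      simp only [Submodule.comap_coe, Set.mem_preimage, SetLike.mem_coe]
      erw [this]
      exact Submodule.sub_mem _ (Submodule.subset_span ⟨i, hi, rfl⟩)
        (Submodule.smul_mem _ _ (Submodule.subset_span ⟨j, hj, rfl⟩))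
  · intro hbot
    have : P.root a ∈ Submodule.span K (P.root '' S) := Submodule.subset_span ⟨a, haS, rfl⟩
    rw [hbot] at this
    exact P.ne_zero a (by simpa using this)

section A
variable {E : Type*} [NormedAddCommGroup E] [InnerProductSpace ℝ E]

lemma long_pairing_cases {Φ : Finset E} {α γ : E} (hα0 : α ≠ 0)
    (hlong : ∀ γ ∈ Φ, ⟪γ, γ⟫ ≤ ⟪α, α⟫) (hγ : γ ∈ Φ) :
    (2 * ⟪γ, α⟫ / ⟪α, α⟫ < 2 ∨ γ = α) ∧ (-2 < 2 * ⟪γ, α⟫ / ⟪α, α⟫ ∨ γ = -α) := by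
  have hpos : 0 < ⟪α, α⟫ := real_inner_self_pos.2 hα0
  have hl := hlong γ hγ
  constructor
  · by_contra! hc
    obtain ⟨h1, h2⟩ := hc
    rw [le_div_iff₀ hpos] at h1
    have : ⟪γ - α, γ - α⟫ ≤ 0 := by
      rw [real_inner_sub_sub_self]; linarith
    exact h2 (sub_eq_zero.1 (inner_self_eq_zero.1 (le_antisymm this real_inner_self_nonneg)))
  · by_contra! hc
    obtain ⟨h1, h2⟩ := hc
    rw [div_le_iff₀ hpos] at h1
    have : ⟪γ + α, γ + α⟫ ≤ 0 := by
      rw [real_inner_add_add_self]; linarith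
    exact h2 (eq_neg_of_add_eq_zero_left (inner_self_eq_zero.1 (le_antisymm this real_inner_self_nonneg)))

/-- If `γ` and `γ - mα` are both roots, `α` long and `m ≠ 0`
  (and `γ = ±α` only if `m = ±2`) then `m` is the pairing of `γ` with `α`. -/
lemma long_pairing_eq {Φ : Finset E} {α γ : E} (hα0 : α ≠ 0)
    (hcrys : ∀ α ∈ Φ, ∀ β ∈ Φ, ∃ m : ℤ, 2 * ⟪β, α⟫ / ⟪α, α⟫ = (m : ℝ))
    (hlong : ∀ γ ∈ Φ, ⟪γ, γ⟫ ≤ ⟪α, α⟫) (hα : α ∈ Φ) (hγ : γ ∈ Φ) (hγ1 : γ ≠ α) (hγ2 : γ ≠ -α)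
    (m : ℤ) (hm : m ≠ 0) (hγm : γ - (m : ℝ) • α ∈ Φ) (hm1 : γ - (m : ℝ) • α ≠ α)
    (hm2 : γ - (m : ℝ) • α ≠ -α) :
    2 * ⟪γ, α⟫ / ⟪α, α⟫ = (m : ℝ) := by
  have hpos : 0 < ⟪α, α⟫ := real_inner_self_pos.2 hα0
  obtain ⟨c, hc⟩ := hcrys α hα γ hγ
  obtain ⟨h1, h2⟩ := long_pairing_cases hα0 hlong hγ
  obtain ⟨h3, h4⟩ := long_pairing_cases hα0 hlong hγm
  replace h1 := h1.resolve_right hγ1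
  replace h2 := h2.resolve_right hγ2
  replace h3 := h3.resolve_right hm1
  replace h4 := h4.resolve_right hm2
  have e : 2 * ⟪γ - (m : ℝ) • α, α⟫ / ⟪α, α⟫ = c - 2 * m := by
    rw [inner_sub_left, real_inner_smul_left, ← hc]; field_simp
  rw [e] at h3 h4
  rw [hc] at h1 h2 ⊢
  have h1' : c < 2 := by exact_mod_cast h1
  have h2' : -2 < c := by exact_mod_cast h2
  have h3' : c - 2 * m < 2 := by exact_mod_cast h3
  have h4' : -2 < c - 2 * m := by exact_mod_cast h4
  have : c = m := by omega
  rw [this]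

lemma coeff_unique {Δ : Finset E} (hΔli : LinearIndependent ℝ (fun γ : Δ => (γ : E)))
    (a b : E → ℝ) (hab : ∑ γ ∈ Δ, a γ • γ = ∑ γ ∈ Δ, b γ • γ) : ∀ γ ∈ Δ, a γ = b γ := by
  intro γ hγ
  have := Fintype.linearIndependent_iff.1 hΔli (fun i => a i - b i) (by
    rw [Finset.univ_eq_attach, Finset.sum_attach Δ (fun γ => (a γ - b γ) • γ)]
    simp [sub_smul, hab]) ⟨γ, hγ⟩
  exact sub_eq_zero.1 this

lemma neg_mem_roots {Φ : Finset E} (hΦ0 : (0 : E) ∉ Φ)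
    (hrefl : ∀ α ∈ Φ, ∀ β ∈ Φ, β - (2 * ⟪β, α⟫ / ⟪α, α⟫) • α ∈ Φ) {β : E} (hβ : β ∈ Φ) :
    -β ∈ Φ := by
  have h0 : β ≠ 0 := fun h => hΦ0 (h ▸ hβ)
  have hpos : 0 < ⟪β, β⟫ := real_inner_self_pos.2 h0
  have := hrefl β hβ β hβ
  have e : 2 * ⟪β, β⟫ / ⟪β, β⟫ = (2 : ℝ) := by field_simp
  rw [e] at this
  convert this using 1
  rw [two_smul]; abel

lemma simple_pairing {Φ : Finset E} (hΦ0 : (0 : E) ∉ Φ)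
    (hrefl : ∀ α ∈ Φ, ∀ β ∈ Φ, β - (2 * ⟪β, α⟫ / ⟪α, α⟫) • α ∈ Φ)
    (hcrys : ∀ α ∈ Φ, ∀ β ∈ Φ, ∃ m : ℤ, 2 * ⟪β, α⟫ / ⟪α, α⟫ = (m : ℝ))
    {Δ : Finset E} (hΔΦ : (Δ : Set E) ⊆ (Φ : Set E))
    (hΔli : LinearIndependent ℝ (fun γ : Δ => (γ : E)))
    {n : E → E → ℤ}
    (hn : ∀ β ∈ Φ, β = ∑ γ ∈ Δ, (n β γ : ℝ) • γ)
    (hsign : ∀ β ∈ Φ, (∀ γ ∈ Δ, 0 ≤ n β γ) ∨ (∀ γ ∈ Δ, n β γ ≤ 0))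
    {α : E} (hαΔ : α ∈ Δ) (hlong : ∀ γ ∈ Φ, ⟪γ, γ⟫ ≤ ⟪α, α⟫)
    {γ : E} (hγ : γ ∈ Δ) (hγα : γ ≠ α) (hne : ⟪γ, α⟫ ≠ 0) :
    2 * ⟪γ, α⟫ / ⟪α, α⟫ = -1 := by
  have hα : α ∈ Φ := hΔΦ hαΔ
  have hγΦ : γ ∈ Φ := hΔΦ hγ
  have h0 : α ≠ 0 := fun h => hΦ0 (h ▸ hα)
  have hpos : 0 < ⟪α, α⟫ := real_inner_self_pos.2 h0
  obtain ⟨c, hc⟩ := hcrys α hα γ hγΦ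
  have hr := hrefl α hα γ hγΦ
  rw [hc] at hr
  -- coefficients of γ - cα
  have hco := coeff_unique hΔli (fun δ => (n (γ - (c : ℝ) • α) δ : ℝ))
    (fun δ => (if δ = γ then 1 else 0) - (if δ = α then (c : ℝ) else 0)) (by
      rw [← hn _ hr]; simp [sub_smul, ite_smul, hγ, hαΔ])
  have c1 := hco γ hγ
  have c2 := hco α hαΔ
  simp only [if_true, if_neg hγα, if_neg hγα.symm] at c1 c2
  have c1' : n (γ - (c : ℝ) • α) γ = 1 := by
    have : ((n (γ - (c : ℝ) • α) γ : ℤ) : ℝ) = ((1 : ℤ) : ℝ) := by rw [c1]; simp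
    exact_mod_cast this
  have c2' : n (γ - (c : ℝ) • α) α = -c := by
    have : ((n (γ - (c : ℝ) • α) α : ℤ) : ℝ) = ((-c : ℤ) : ℝ) := by rw [c2]; simp
    exact_mod_cast this
  have hc0 : c ≤ 0 := by
    rcases hsign _ hr with h | h
    · have := h α hαΔ; omega
    · have := h γ hγ; omega
  have hcne : c ≠ 0 := by
    rintro rfl
    apply hne
    have : 2 * ⟪γ, α⟫ / ⟪α, α⟫ = 0 := by simpa using hc
    field_simp at this
    linarith
  have hna : γ ≠ -α := by
    intro h
    have hγ' : -α ∈ Δ := h ▸ hγ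
    have := coeff_unique hΔli (fun δ => (if δ = γ then (1 : ℝ) else 0) )
      (fun δ => (if δ = α then (-1 : ℝ) else 0)) (by
        simp [ite_smul, hγ', hαΔ, h]) γ hγ
    simp [hγα] at this
  have h2 := (long_pairing_cases h0 hlong hγΦ).2.resolve_right hna
  rw [hc] at h2 ⊢
  have h2' : -2 < c := by exact_mod_cast h2
  have : c = -1 := by omega
  rw [this]; simp

lemma inner_ne_zero_of_htq {Φ : Finset E} (hΦ0 : (0 : E) ∉ Φ)
    (hrefl : ∀ α ∈ Φ, ∀ β ∈ Φ, β - (2 * ⟪β, α⟫ / ⟪α, α⟫) • α ∈ Φ)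
    (hcrys : ∀ α ∈ Φ, ∀ β ∈ Φ, ∃ m : ℤ, 2 * ⟪β, α⟫ / ⟪α, α⟫ = (m : ℝ))
    {Δ : Finset E} (hΔΦ : (Δ : Set E) ⊆ (Φ : Set E))
    (hΔli : LinearIndependent ℝ (fun γ : Δ => (γ : E)))
    {n : E → E → ℤ}
    (hn : ∀ β ∈ Φ, β = ∑ γ ∈ Δ, (n β γ : ℝ) • γ)
    (hsign : ∀ β ∈ Φ, (∀ γ ∈ Δ, 0 ≤ n β γ) ∨ (∀ γ ∈ Δ, n β γ ≤ 0))
    {α : E} (hαΔ : α ∈ Δ) (hlong : ∀ γ ∈ Φ, ⟪γ, γ⟫ ≤ ⟪α, α⟫)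
    {β : E} (hβ : β ∈ Φ)
    (h3 : ¬ (3 : ℤ) ∣ ∑ γ ∈ insert α (Δ.filter fun γ => γ ≠ α ∧ ⟪γ, α⟫ ≠ 0), n β γ) :
    ⟪β, α⟫ ≠ 0 := by
  intro hzero
  apply h3
  have hα : α ∈ Φ := hΔΦ hαΔ
  have h0 : α ≠ 0 := fun h => hΦ0 (h ▸ hα)
  have hpos : 0 < ⟪α, α⟫ := real_inner_self_pos.2 h0
  have e0 : ∑ γ ∈ Δ, (n β γ : ℝ) * (2 * ⟪γ, α⟫ / ⟪α, α⟫) = 0 := by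
    have : ∑ γ ∈ Δ, (n β γ : ℝ) * (2 * ⟪γ, α⟫ / ⟪α, α⟫) = 2 * ⟪β, α⟫ / ⟪α, α⟫ := by
      conv_rhs => rw [hn β hβ]
      rw [sum_inner, Finset.mul_sum, Finset.sum_div]
      refine Finset.sum_congr rfl fun γ _ => ?_
      rw [real_inner_smul_left]; ring
    rw [this, hzero]; simp
  set S := insert α (Δ.filter fun γ => γ ≠ α ∧ ⟪γ, α⟫ ≠ 0) with hS
  have hSΔ : S ⊆ Δ := by
    intro x hx
    rw [hS, Finset.mem_insert, Finset.mem_filter] at hx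
    rcases hx with rfl | hx
    · exact hαΔ
    · exact hx.1
  have e1 : ∀ γ ∈ Δ, 2 * ⟪γ, α⟫ / ⟪α, α⟫ = (if γ = α then (3 : ℝ) else 0) -
      (if γ ∈ S then 1 else 0) := by
    intro γ hγ
    by_cases h1 : γ = α
    · subst h1
      have : γ ∈ S := by simp [hS]
      simp only [this, if_true]
      field_simp; norm_num
    · by_cases h2 : ⟪γ, α⟫ = 0
      · have : γ ∉ S := by simp [hS, h1, h2]
        simp [this, h1, h2]
      · have : γ ∈ S := by simp [hS, h1, h2, hγ]
        rw [simple_pairing hΦ0 hrefl hcrys hΔΦ hΔli hn hsign hαΔ hlong hγ h1 h2]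
        simp [this, h1]
  rw [Finset.sum_congr rfl (fun γ hγ => by rw [e1 γ hγ])] at e0
  simp only [mul_sub, Finset.sum_sub_distrib, mul_ite, mul_zero, mul_one,
    Finset.sum_ite_eq' , hαΔ, if_true] at e0
  rw [← Finset.sum_filter, Finset.filter_mem_eq_inter, Finset.inter_eq_right.2 hSΔ] at e0
  refine ⟨n β α, ?_⟩
  have : ((∑ γ ∈ S, n β γ : ℤ) : ℝ) = ((3 * n β α : ℤ) : ℝ) := by push_cast; linarith
  exact_mod_cast this

lemma coeff_neg {Φ : Finset E} 
    {Δ : Finset E} 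
    (hΔli : LinearIndependent ℝ (fun γ : Δ => (γ : E)))
    {n : E → E → ℤ}
    (hn : ∀ β ∈ Φ, β = ∑ γ ∈ Δ, (n β γ : ℝ) • γ) {β : E} (hβ : β ∈ Φ) (hnβ : -β ∈ Φ) :
    ∀ γ ∈ Δ, n (-β) γ = - n β γ := by
  intro γ hγ
  have := coeff_unique hΔli (fun δ => (n (-β) δ : ℝ)) (fun δ => -(n β δ : ℝ)) (by
    rw [← hn _ hnβ]; simp only [neg_smul, Finset.sum_neg_distrib]; rw [← hn _ hβ]) γ hγ
  exact_mod_cast this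

/-- The height functional. -/
lemma exists_height {Φ : Finset E} (hΦ0 : (0 : E) ∉ Φ)
    {Δ : Finset E}
    (hΔli : LinearIndependent ℝ (fun γ : Δ => (γ : E)))
    {n : E → E → ℤ}
    (hn : ∀ β ∈ Φ, β = ∑ γ ∈ Δ, (n β γ : ℝ) • γ)
    (hsign : ∀ β ∈ Φ, (∀ γ ∈ Δ, 0 ≤ n β γ) ∨ (∀ γ ∈ Δ, n β γ ≤ 0)) :
    ∃ f : E →ₗ[ℝ] ℝ, ∀ β ∈ Φ, f β ≠ 0 := by
  let b := Module.Basis.span hΔli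
  obtain ⟨f, hf⟩ := LinearMap.exists_extend (b.constr ℝ (fun _ => (1 : ℝ)))
  have hf1 : ∀ γ ∈ Δ, f γ = 1 := by
    intro γ hγ
    have h1 := LinearMap.congr_fun hf (b ⟨γ, hγ⟩)
    rw [Module.Basis.constr_basis] at h1
    rw [← h1]
    simp [b, Module.Basis.span_apply]
  refine ⟨f, fun β hβ h0 => ?_⟩
  have e : ((∑ γ ∈ Δ, n β γ : ℤ) : ℝ) = 0 := by
    rw [← h0, hn β hβ, map_sum]
    push_cast
    rw [← hn β hβ]
    exact Finset.sum_congr rfl fun γ hγ => by rw [map_smul, hf1 γ hγ]; simp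
  have e' : ∑ γ ∈ Δ, n β γ = 0 := by exact_mod_cast e
  have hz : ∀ γ ∈ Δ, n β γ = 0 := by
    rcases hsign β hβ with h | h
    · exact (Finset.sum_eq_zero_iff_of_nonneg h).1 e'
    · exact (Finset.sum_eq_zero_iff_of_nonpos h).1 e'
  apply hΦ0
  have : β = 0 := by
    rw [hn β hβ]
    exact Finset.sum_eq_zero fun γ hγ => by simp [hz γ hγ]
  exact this ▸ hβ
end A

section C
variable {E : Type*} [NormedAddCommGroup E] [InnerProductSpace ℝ E]
    {L : Type*} [LieRing L] [LieAlgebra ℂ L]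

/-- The grading of `L` by `E`. -/
noncomputable def gradA (Φ : Finset E) (h : Submodule ℂ L) (g : E → Submodule ℂ L) :
    E → Submodule ℂ L := fun e => if e = 0 then h else if e ∈ Φ then g e else ⊥

lemma gradA_zero (Φ : Finset E) (h : Submodule ℂ L) (g : E → Submodule ℂ L) :
    gradA Φ h g 0 = h := by simp [gradA]

lemma gradA_root {Φ : Finset E} (hΦ0 : (0 : E) ∉ Φ) (h : Submodule ℂ L) (g : E → Submodule ℂ L)
    {β : E} (hβ : β ∈ Φ) : gradA Φ h g β = g β := by
  have : β ≠ 0 := fun h => hΦ0 (h ▸ hβ)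
  simp [gradA, this, hβ]

lemma gradA_other {Φ : Finset E} (h : Submodule ℂ L) (g : E → Submodule ℂ L)
    {β : E} (hβ : β ∉ Φ) (h0 : β ≠ 0) : gradA Φ h g β = ⊥ := by
  simp [gradA, h0, hβ]

/-- The graded Lie algebra structure. -/
@[reducible] noncomputable def gradedLie {Φ : Finset E} (hΦ0 : (0 : E) ∉ Φ)
    (h : Submodule ℂ L) (g : E → Submodule ℂ L) (ev : E → L → ℂ)
    (habel : ∀ x ∈ h, ∀ y ∈ h, ⁅x, y⁆ = 0)
    (hev : ∀ β ∈ Φ, ∀ x ∈ h, ∀ y ∈ g β, ⁅x, y⁆ = ev β x • y)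
    (hgg : ∀ β ∈ Φ, ∀ γ ∈ Φ, ∀ x ∈ g β, ∀ y ∈ g γ,
      (β + γ ∈ Φ → ⁅x, y⁆ ∈ g (β + γ)) ∧ (β + γ = 0 → ⁅x, y⁆ ∈ h) ∧
      (β + γ ∉ Φ → β + γ ≠ 0 → ⁅x, y⁆ = 0))
    (hdec : h ⊔ (⨆ β ∈ Φ, g β) = ⊤)
    (hindh : Disjoint h (⨆ β ∈ Φ, g β))
    (hindg : ∀ β ∈ Φ, Disjoint (g β) (h ⊔ ⨆ γ ∈ Φ.erase β, g γ)) :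
    GradedLieAlgebra (gradA Φ h g) := by
  have hInt : DirectSum.IsInternal (gradA Φ h g) := by
    refine DirectSum.isInternal_submodule_of_iSupIndep_of_iSup_eq_top ?_ ?_
    · intro e
      by_cases h0 : e = 0
      · subst h0
        rw [gradA_zero]
        refine hindh.mono_right (iSup₂_le fun j hj => ?_)
        by_cases hjΦ : j ∈ Φ
        · rw [gradA_root hΦ0 h g hjΦ]; exact le_iSup₂_of_le j hjΦ le_rfl
        · rw [gradA_other h g hjΦ hj]; exact bot_le
      · by_cases heΦ : e ∈ Φ
        · rw [gradA_root hΦ0 h g heΦ]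
          refine (hindg e heΦ).mono_right (iSup₂_le fun j hj => ?_)
          by_cases hj0 : j = 0
          · subst hj0; rw [gradA_zero]; exact le_sup_left
          · by_cases hjΦ : j ∈ Φ
            · rw [gradA_root hΦ0 h g hjΦ]
              exact le_sup_of_le_right (le_iSup₂_of_le j (Finset.mem_erase.2 ⟨hj, hjΦ⟩) le_rfl)
            · rw [gradA_other h g hjΦ hj0]; exact bot_le
        · rw [gradA_other h g heΦ h0]; exact disjoint_bot_left
    · rw [eq_top_iff, ← hdec]
      refine sup_le ?_ (iSup₂_le fun β hβ => ?_)
      · exact le_iSup_of_le 0 (gradA_zero Φ h g).ge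
      · exact le_iSup_of_le β (gradA_root hΦ0 h g hβ).ge
  have hbr : ∀ ⦃i j : E⦄ {x y : L}, x ∈ gradA Φ h g i → y ∈ gradA Φ h g j →
      ⁅x, y⁆ ∈ gradA Φ h g (i + j) := by
    intro i j x y hx hy
    by_cases hi0 : i = 0
    · subst hi0
      rw [gradA_zero] at hx
      rw [zero_add]
      by_cases hj0 : j = 0
      · subst hj0
        rw [gradA_zero] at hy
        rw [habel x hx y hy]; exact Submodule.zero_mem _
      · by_cases hjΦ : j ∈ Φ
        · rw [gradA_root hΦ0 h g hjΦ] at hy ⊢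
          rw [hev j hjΦ x hx y hy]; exact Submodule.smul_mem _ _ hy
        · rw [gradA_other h g hjΦ hj0, Submodule.mem_bot] at hy
          subst hy; simp
    · by_cases hiΦ : i ∈ Φ
      · by_cases hj0 : j = 0
        · subst hj0
          rw [gradA_zero] at hy
          rw [add_zero]
          rw [gradA_root hΦ0 h g hiΦ] at hx ⊢
          rw [← lie_skew, hev i hiΦ y hy x hx]
          exact Submodule.neg_mem _ (Submodule.smul_mem _ _ hx)
        · by_cases hjΦ : j ∈ Φ
          · rw [gradA_root hΦ0 h g hiΦ] at hx
            rw [gradA_root hΦ0 h g hjΦ] at hy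
            obtain ⟨h1, h2, h3⟩ := hgg i hiΦ j hjΦ x hx y hy
            by_cases hs : i + j ∈ Φ
            · rw [gradA_root hΦ0 h g hs]; exact h1 hs
            · by_cases hs0 : i + j = 0
              · rw [hs0, gradA_zero]; exact h2 hs0
              · rw [h3 hs hs0]; exact Submodule.zero_mem _
          · rw [gradA_other h g hjΦ hj0, Submodule.mem_bot] at hy
            subst hy; simp
      · rw [gradA_other h g hiΦ hi0, Submodule.mem_bot] at hx
        subst hx; simp
  exact { bracket_mem := hbr, toDecomposition := hInt.chooseDecomposition }

variable (A : E → Submodule ℂ L)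

lemma decompose_lie_of_scalar [DirectSum.Decomposition A] (y : L) (c : E → ℂ)
    (hy : ∀ e, ∀ x ∈ A e, ⁅y, x⁆ = c e • x) (x : L) (e : E) :
    (DirectSum.decompose A ⁅y, x⁆ e : L) = c e • (DirectSum.decompose A x e : L) := by
  induction x using DirectSum.Decomposition.inductionOn A with
  | zero => simp
  | @homogeneous i m =>
    rw [hy i m m.2]
    by_cases hie : i = e
    · subst hie
      rw [DirectSum.decompose_of_mem_same A (Submodule.smul_mem _ _ m.2),
        DirectSum.decompose_of_mem_same A m.2]
    · rw [DirectSum.decompose_of_mem_ne A (Submodule.smul_mem _ _ m.2) hie,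
        DirectSum.decompose_of_mem_ne A m.2 hie, smul_zero]
  | add a b ha hb =>
    rw [lie_add, DirectSum.decompose_add, DirectSum.decompose_add, DirectSum.add_apply,
      DirectSum.add_apply, Submodule.coe_add, Submodule.coe_add, ha, hb, smul_add]

lemma exists_grading_element [FiniteDimensional ℂ L] [LieAlgebra.IsKilling ℂ L]
    [GradedLieAlgebra A] (f : E →ₗ[ℝ] ℝ) :
    ∃ H : L, ∀ e, ∀ x ∈ A e, ⁅H, x⁆ = (f e : ℂ) • x := by
  let φ : E →+ ℂ := (Complex.ofRealHom : ℝ →+ ℂ).comp f.toAddMonoidHom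
  obtain ⟨H, hH⟩ := LieDerivation.IsKilling.exists_eq_ad (LieDerivation.ofGrading A φ)
  refine ⟨H, fun e x hx => ?_⟩
  have h1 := LieDerivation.ofGrading_apply_apply A φ hx
  rw [← hH] at h1
  simpa [φ] using h1

lemma mem_of_decompose_eq_zero [DirectSum.Decomposition A] (x : L) (i : E)
    (hx : ∀ e, e ≠ i → (DirectSum.decompose A x e : L) = 0) : x ∈ A i := by
  rw [← DirectSum.sum_support_decompose A x]
  refine Submodule.sum_mem _ fun e _ => ?_
  by_cases he : e = i
  · subst he; exact (DirectSum.decompose A x e).2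
  · rw [hx e he]; exact Submodule.zero_mem _

lemma eq_zero_of_decompose_eq_zero [DirectSum.Decomposition A] (x : L)
    (hx : ∀ e, (DirectSum.decompose A x e : L) = 0) : x = 0 := by
  rw [← DirectSum.sum_support_decompose A x]
  exact Finset.sum_eq_zero fun e _ => hx e

/-- All grading elements lie in degree zero. -/
lemma exists_grading_element_zero [FiniteDimensional ℂ L] [LieAlgebra.IsKilling ℂ L]
    [GradedLieAlgebra A] (ρ : E →ₗ[ℝ] ℝ) (hρ : ∀ e, e ≠ 0 → A e ≠ ⊥ → ρ e ≠ 0)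
    (f : E →ₗ[ℝ] ℝ) :
    ∃ H ∈ A 0, ∀ e, ∀ x ∈ A e, ⁅H, x⁆ = (f e : ℂ) • x := by
  obtain ⟨R, hR⟩ := exists_grading_element A ρ
  have aux : ∀ x : L, ⁅R, x⁆ = 0 → x ∈ A 0 := by
    intro x hx
    refine mem_of_decompose_eq_zero A x 0 fun e he => ?_
    by_cases hA : A e = ⊥
    · exact (Submodule.eq_bot_iff _).1 hA _ (DirectSum.decompose A x e).2
    · have := decompose_lie_of_scalar A R (fun e => (ρ e : ℂ)) hR x e
      rw [hx] at this
      simp only [DirectSum.decompose_zero, DirectSum.zero_apply, Submodule.coe_zero] at this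
      have h2 := hρ e he hA
      rcases smul_eq_zero.1 this.symm with h3 | h3
      · exact absurd (by exact_mod_cast h3) h2
      · exact h3
  have hR0 : R ∈ A 0 := aux R (lie_self R)
  obtain ⟨H, hH⟩ := exists_grading_element A f
  refine ⟨H, aux H ?_, hH⟩
  rw [← lie_skew, hH 0 R hR0]; simp

lemma killing_graded [FiniteDimensional ℂ L] [LieAlgebra.IsKilling ℂ L]
    [GradedLieAlgebra A] {a b : E} (hab : a + b ≠ 0) {x y : L} (hx : x ∈ A a) (hy : y ∈ A b) :
    killingForm ℂ L x y = 0 := by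
  obtain ⟨H, hH⟩ := exists_grading_element A (innerₗ E (a + b))
  have h1 := LieModule.traceForm_apply_lie_apply' ℂ L L H x y
  change killingForm ℂ L _ _ = - killingForm ℂ L _ _ at h1
  rw [hH a x hx, hH b y hy, map_smul, map_smul, LinearMap.smul_apply, smul_eq_mul, smul_eq_mul,
    eq_neg_iff_add_eq_zero, ← add_mul, ← Complex.ofReal_add, ← map_add] at h1
  rcases mul_eq_zero.1 h1 with h2 | h2
  · have : ⟪a + b, a + b⟫ = 0 := by exact_mod_cast h2
    exact absurd (inner_self_eq_zero.1 this) hab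
  · exact h2

/-- The nondegeneracy argument. -/
lemma left_nondeg [FiniteDimensional ℂ L] [LieAlgebra.IsKilling ℂ L]
    [GradedLieAlgebra A] (S T : Set E) (hST : ∀ β ∈ S, -β ∈ T) (H : L) (c : E → ℂ)
    (hH : ∀ e, ∀ x ∈ A e, ⁅H, x⁆ = c e • x) (hc : ∀ β ∈ S, c β ≠ 0)
    (Z : L) (hZ : Z ∈ ⨆ β ∈ S, A β)
    (hZX : ∀ X ∈ ⨆ β ∈ T, A β, killingForm ℂ L H ⁅Z, X⁆ = 0) : Z = 0 := by
  have hZe : ∀ e, e ∉ S → (DirectSum.decompose A Z e : L) = 0 := by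
    intro e he
    clear hZX
    induction hZ using Submodule.iSup_induction' with
    | mem i x hx =>
      by_cases hi : i ∈ S
      · simp only [hi, iSup_pos] at hx
        exact DirectSum.decompose_of_mem_ne A hx (fun h => he (h ▸ hi))
      · simp only [hi, iSup_neg, not_false_eq_true, Submodule.mem_bot] at hx
        subst hx; simp
    | zero => simp
    | add x y _ _ hx hy =>
      rw [DirectSum.decompose_add, DirectSum.add_apply, Submodule.coe_add, hx, hy, add_zero]
  have hWe := decompose_lie_of_scalar A H c hH Z
  have hW : ⁅H, Z⁆ = 0 := by
    have hk : killingForm ℂ L ⁅H, Z⁆ = 0 := by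
      ext y
      rw [LinearMap.zero_apply]
      induction y using DirectSum.Decomposition.inductionOn A with
      | zero => simp
      | @homogeneous e m =>
        by_cases he : e ∈ T
        · have := hZX m (Submodule.mem_iSup_of_mem e (by simp [he]))
          rw [← this]
          exact LieModule.traceForm_apply_lie_apply ℂ L L H Z m
        · rw [← DirectSum.sum_support_decompose A ⁅H, Z⁆, map_sum, LinearMap.sum_apply]
          refine Finset.sum_eq_zero fun a _ => ?_
          by_cases ha : a ∈ S
          · refine killing_graded A (a := a) (b := e) (fun h0 => he ?_)
              (DirectSum.decompose A ⁅H, Z⁆ a).2 m.2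
            rw [← neg_eq_of_add_eq_zero_right h0]
            exact hST a ha
          · rw [hWe, hZe a ha]; simp
      | add a b ha hb => rw [map_add, ha, hb, add_zero]
    have : ⁅H, Z⁆ ∈ LinearMap.ker (killingForm ℂ L) := hk
    rwa [LieAlgebra.IsKilling.ker_killingForm_eq_bot, Submodule.mem_bot] at this
  refine eq_zero_of_decompose_eq_zero A Z fun e => ?_
  by_cases he : e ∈ S
  · have := hWe e
    rw [hW] at this
    simp only [DirectSum.decompose_zero, DirectSum.zero_apply, Submodule.coe_zero] at this
    exact (smul_eq_zero.1 this.symm).resolve_left (hc e he)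
  · exact hZe e he

/-- Comparison of orthogonality in the two root systems. -/
lemma inner_eq_zero_of_pairing_eq_zero {ι M N : Type*} [Finite ι] [AddCommGroup M] [Module ℂ M]
    [AddCommGroup N] [Module ℂ N] (P : RootPairing ι ℂ M N) [P.IsRootSystem] [P.IsIrreducible]
    [P.IsCrystallographic] {Φ : Finset E} (hΦ0 : (0 : E) ∉ Φ)
    (hcrys : ∀ α ∈ Φ, ∀ β ∈ Φ, ∃ m : ℤ, 2 * ⟪β, α⟫ / ⟪α, α⟫ = (m : ℝ))
    (b : ι → E) (hb : ∀ i, b i ∈ Φ) (hinj : ∀ i j, b i = b j → i = j)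
    (hlin : ∀ i j k, ∀ m : ℤ, P.root k = P.root i - (m : ℂ) • P.root j →
      b k = b i - (m : ℝ) • b j)
    (a : ι) (hlong : ∀ γ ∈ Φ, ⟪γ, γ⟫ ≤ ⟪b a, b a⟫) (i : ι) (hi : P.pairing i a = 0) :
    ⟪b i, b a⟫ = 0 := by
  have h0 : b a ≠ 0 := fun h => hΦ0 (h ▸ hb a)
  have hpos : 0 < ⟪b a, b a⟫ := real_inner_self_pos.2 h0
  have hInt : ∀ i j, ∃ m : ℤ, P.pairing i j = m := by
    intro i j
    obtain ⟨m, hm⟩ := P.exists_value (S := ℤ) i j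
    exact ⟨m, by simpa using hm.symm⟩
  have hrefl : ∀ i j, ∀ m : ℤ, P.pairing i j = m →
      b (P.reflectionPerm j i) = b i - (m : ℝ) • b j := by
    intro i j m hm
    refine hlin i j _ m ?_
    rw [P.root_reflectionPerm, P.reflection_apply, ← hm]
    simp
  have hneg : b (P.reflectionPerm a a) = - b a := by
    rw [hrefl a a 2 (by simp)]
    push_cast; rw [two_smul]; abel
  have hii : ∀ i, ∀ m : ℤ, P.pairing i a = m → m ≠ 0 →
      2 * ⟪b i, b a⟫ / ⟪b a, b a⟫ = (m : ℝ) := by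
    intro i m hm hm0
    by_cases c1 : b i = b a
    · have := hinj _ _ c1
      subst this
      have : (m : ℂ) = ((2 : ℤ) : ℂ) := by rw [← hm]; simp
      have : m = 2 := by exact_mod_cast this
      subst this
      field_simp; norm_num
    by_cases c2 : b i = - b a
    · have := hinj _ _ (c2.trans hneg.symm)
      subst this
      have : (m : ℂ) = ((-2 : ℤ) : ℂ) := by rw [← hm]; simp
      have : m = -2 := by exact_mod_cast this
      subst this
      rw [hneg, inner_neg_left]
      field_simp; norm_num
    have hr := hrefl i a m hm
    refine long_pairing_eq h0 hcrys hlong (hb a) (hb i) c1 c2 m hm0 (hr ▸ hb _) ?_ ?_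
    · rw [← hr]
      intro h
      have h1 := hinj _ _ h
      have h2 : i = P.reflectionPerm a a := by
        rw [Equiv.eq_symm_apply (P.reflectionPerm a) |>.2 h1, P.reflectionPerm_symm]
      exact c2 (h2 ▸ hneg)
    · rw [← hr]
      intro h
      have h1 := hinj _ _ (h.trans hneg.symm)
      have h2 : i = a := (P.reflectionPerm a).injective h1
      exact c1 (by rw [h2])
  obtain ⟨d, hda, hdi⟩ := exists_common_nonorth P a i
  obtain ⟨m, hm⟩ := hInt d a
  obtain ⟨k, hk⟩ := hInt d i
  have hm0 : m ≠ 0 := by rintro rfl; exact hda (by simpa using hm)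
  have hk0 : (k : ℝ) ≠ 0 := by
    intro h
    have : k = 0 := by exact_mod_cast h
    subst this; exact hdi (by simpa using hk)
  have hd' : P.pairing (P.reflectionPerm i d) a = m := by
    rw [← P.root_coroot'_eq_pairing, P.root_reflectionPerm, P.reflection_apply]
    simp [hi, hm]
  have e1 := hii d m hm hm0
  have e2 := hii _ m hd' hm0
  rw [hrefl d i k hk, ← e1, inner_sub_left, real_inner_smul_left] at e2
  field_simp at e2
  have : (k : ℝ) * ⟪b i, b a⟫ = 0 := by linarith
  exact (mul_eq_zero.1 this).resolve_left hk0
end C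

section D
variable {E : Type*} [NormedAddCommGroup E] [InnerProductSpace ℝ E]
    {L : Type*} [LieRing L] [LieAlgebra ℂ L] [FiniteDimensional ℂ L] [LieAlgebra.IsSimple ℂ L]

lemma ev_ne_zero_of_inner_ne_zero {Φ : Finset E} (hΦ0 : (0 : E) ∉ Φ)
    (hcrys : ∀ α ∈ Φ, ∀ β ∈ Φ, ∃ m : ℤ, 2 * ⟪β, α⟫ / ⟪α, α⟫ = (m : ℝ))
    (h : Submodule ℂ L) (g : E → Submodule ℂ L) (ev : E → L → ℂ)
    (habel : ∀ x ∈ h, ∀ y ∈ h, ⁅x, y⁆ = 0)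
    (hgne : ∀ β ∈ Φ, g β ≠ ⊥)
    (hev : ∀ β ∈ Φ, ∀ x ∈ h, ∀ y ∈ g β, ⁅x, y⁆ = ev β x • y)
    [GradedLieAlgebra (gradA Φ h g)]
    (ρ : E →ₗ[ℝ] ℝ) (hρ : ∀ β ∈ Φ, ρ β ≠ 0)
    (α : E) (hα : α ∈ Φ)
    (hlong : ∀ γ ∈ Φ, ⟪γ, γ⟫ ≤ ⟪α, α⟫)
    (Hα : L) (hHαh : Hα ∈ h)
    (hHα : ∀ x ∈ h, ev α x = killingForm ℂ L Hα x) (β : E) (hβ : β ∈ Φ) (hβα : ⟪β, α⟫ ≠ 0) :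
    ev β Hα ≠ 0 := by
  have hgrad : ∀ f : E →ₗ[ℝ] ℝ, ∃ H ∈ h, ∀ γ ∈ Φ, ev γ H = (f γ : ℂ) := by
    intro f
    obtain ⟨H, hH, hH2⟩ := exists_grading_element_zero (gradA Φ h g) ρ (by
      intro e he hA
      by_cases heΦ : e ∈ Φ
      · exact hρ e heΦ
      · exact absurd (gradA_other h g heΦ he) hA) f
    rw [gradA_zero] at hH
    refine ⟨H, hH, fun γ hγ => ?_⟩
    obtain ⟨x, hx, hx0⟩ := Submodule.exists_mem_ne_zero_of_ne_bot (hgne γ hγ)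
    have h1 := hH2 γ x (by rwa [gradA_root hΦ0 h g hγ])
    rw [hev γ hγ H hH x hx] at h1
    exact smul_left_injective ℂ hx0 h1
  have hscal : ∀ y ∈ h, ∀ e, ∀ x ∈ gradA Φ h g e,
      ⁅y, x⁆ = (if e = 0 then 0 else ev e y) • x := by
    intro y hy e x hx
    by_cases he : e = 0
    · subst he
      rw [gradA_zero] at hx
      simp [habel y hy x hx]
    · by_cases heΦ : e ∈ Φ
      · rw [gradA_root hΦ0 h g heΦ] at hx
        simp [he, hev e heΦ y hy x hx]
      · rw [gradA_other h g heΦ he, Submodule.mem_bot] at hx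
        subst hx; simp
  have hlm : ∀ {x y : L}, x ∈ h.carrier → y ∈ h.carrier → ⁅x, y⁆ ∈ h.carrier := by
    intro x y hx hy
    rw [habel x hx y hy]
    exact h.zero_mem
  let H : LieSubalgebra ℂ L := { h with lie_mem' := hlm }
  have memH : ∀ x, x ∈ H ↔ x ∈ h := fun x => Iff.rfl
  obtain ⟨R, hR, hR2⟩ := hgrad ρ
  have hab : IsLieAbelian H := ⟨fun x y => Subtype.ext (habel x x.2 y y.2)⟩
  have hcartan : H.IsCartanSubalgebra := by
    refine ⟨inferInstance, le_antisymm (fun x hx => ?_) H.le_normalizer⟩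
    rw [LieSubalgebra.mem_normalizer_iff] at hx
    have h1 := hx R hR
    rw [memH] at h1 ⊢
    rw [← gradA_zero Φ h g] at h1 ⊢
    refine mem_of_decompose_eq_zero _ x 0 fun e he => ?_
    have h2 := decompose_lie_of_scalar (gradA Φ h g) R _ (hscal R hR) x e
    have h3 : ⁅R, x⁆ ∈ gradA Φ h g 0 := by
      first
      | exact h1
      | (rw [← lie_skew]; exact Submodule.neg_mem _ h1)
    rw [DirectSum.decompose_of_mem_ne _ h3 (Ne.symm he)] at h2
    by_cases heΦ : e ∈ Φ
    · simp only [he, if_false] at h2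
      refine (smul_eq_zero.1 h2.symm).resolve_left ?_
      rw [hR2 e heΦ]
      exact_mod_cast hρ e heΦ
    · exact (Submodule.eq_bot_iff _).1 (gradA_other h g heΦ he) _
        (DirectSum.decompose (gradA Φ h g) x e).2
  -- the weights
  have hwt : ∀ γ ∈ Φ, ∃ ψ : H.root, ∀ y : H, (ψ : LieModule.Weight ℂ H L) y = ev γ y := by
    intro γ hγ
    obtain ⟨x, hx, hx0⟩ := Submodule.exists_mem_ne_zero_of_ne_bot (hgne γ hγ)
    have hmem : x ∈ LieModule.genWeightSpace L (fun y : H => ev γ y) := by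
      apply LieModule.weightSpace_le_genWeightSpace
      rw [LieModule.mem_weightSpace]
      intro y
      exact hev γ hγ y y.2 x hx
    let w : LieModule.Weight ℂ H L := ⟨fun y => ev γ y, fun hbot => hx0 (by
      rw [hbot] at hmem; simpa using hmem)⟩
    refine ⟨⟨w, ?_⟩, fun y => rfl⟩
    rw [LieSubalgebra.root]
    simp only [Finset.mem_filter, Finset.mem_univ, true_and]
    intro hz
    have h1 : w ⟨R, hR⟩ = 0 := by rw [hz]; rfl
    have h2 : ev γ R = 0 := h1
    rw [hR2 γ hγ] at h2
    exact hρ γ hγ (by exact_mod_cast h2)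
  have hwt' : ∀ ψ : H.root, ∃ γ ∈ Φ, ∀ y : H, (ψ : LieModule.Weight ℂ H L) y = ev γ y := by
    intro ψ
    obtain ⟨x, hx, hx0⟩ := (ψ : LieModule.Weight ℂ H L).exists_ne_zero
    have hψ0 : (ψ : LieModule.Weight ℂ H L).IsNonZero := LieSubalgebra.isNonZero_coe_root ψ
    have hl : ∀ y : H, ⁅(y : L), x⁆ = (ψ : LieModule.Weight ℂ H L) y • x :=
      fun y => LieAlgebra.IsKilling.lie_eq_smul_of_mem_rootSpace hx y
    have hne : ∃ e, (DirectSum.decompose (gradA Φ h g) x e : L) ≠ 0 := by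
      by_contra! hc
      exact hx0 (eq_zero_of_decompose_eq_zero _ x hc)
    obtain ⟨e, he⟩ := hne
    have hc : ∀ y : H, (ψ : LieModule.Weight ℂ H L) y = if e = 0 then 0 else ev e y := by
      intro y
      have h2 := decompose_lie_of_scalar (gradA Φ h g) y _ (hscal y y.2) x e
      rw [hl y, DirectSum.decompose_smul, DirectSum.smul_apply, Submodule.coe_smul] at h2
      exact smul_left_injective ℂ he h2
    by_cases he0 : e = 0
    · exfalso
      apply hψ0
      funext y
      simpa [he0] using hc y
    · simp only [he0, if_false] at hc
      refine ⟨e, ?_, hc⟩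
      by_contra heΦ
      exact he ((Submodule.eq_bot_iff _).1 (gradA_other h g heΦ he0) _
        (DirectSum.decompose (gradA Φ h g) x e).2)
  choose b hbΦ hbev using hwt'
  let P := LieAlgebra.IsKilling.rootSystem H
  have hinj : ∀ i j, b i = b j → i = j := by
    intro i j hij
    apply Subtype.ext
    apply DFunLike.ext
    intro y
    rw [hbev, hbev, hij]
  have hlin : ∀ i j k : H.root, ∀ m : ℤ, P.root k = P.root i - (m : ℂ) • P.root j →
      b k = b i - (m : ℝ) • b j := by
    intro i j k m hm
    rw [← sub_eq_zero]
    set v := b k - (b i - (m : ℝ) • b j) with hv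
    obtain ⟨Y, hY, hY2⟩ := hgrad (innerₗ E v)
    have h1 := LinearMap.congr_fun hm ⟨Y, hY⟩
    have h2 : (k : LieModule.Weight ℂ H L) ⟨Y, hY⟩ = (i : LieModule.Weight ℂ H L) ⟨Y, hY⟩
      - (m : ℂ) * (j : LieModule.Weight ℂ H L) ⟨Y, hY⟩ := by simpa [P] using h1
    rw [hbev, hbev, hbev, hY2 _ (hbΦ _), hY2 _ (hbΦ _), hY2 _ (hbΦ _)] at h2
    have h3 : innerₗ E v (b k) = innerₗ E v (b i) - (m : ℝ) * innerₗ E v (b j) := by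
      exact_mod_cast h2
    have h4 : ⟪v, v⟫ = 0 := by
      conv_lhs => rw [hv]
      rw [← hv, inner_sub_right, inner_sub_right, real_inner_smul_right]
      simp only [innerₗ_apply_apply] at h3
      linarith
    exact inner_self_eq_zero.1 h4
  have hbuniq : ∀ γ ∈ Φ, ∀ ψ : H.root, (∀ y : H, (ψ : LieModule.Weight ℂ H L) y = ev γ y) →
      b ψ = γ := by
    intro γ hγ ψ hψ
    rw [← sub_eq_zero]
    obtain ⟨Y, hY, hY2⟩ := hgrad (innerₗ E (b ψ - γ))
    have h1 := hψ ⟨Y, hY⟩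
    rw [hbev, hY2 _ (hbΦ _), hY2 _ hγ] at h1
    have h3 : ⟪b ψ - γ, b ψ⟫ = ⟪b ψ - γ, γ⟫ := by exact_mod_cast h1
    have h4 : ⟪b ψ - γ, b ψ - γ⟫ = 0 := by rw [inner_sub_right, h3, sub_self]
    exact inner_self_eq_zero.1 h4
  obtain ⟨a, ha⟩ := hwt α hα
  obtain ⟨i, hi⟩ := hwt β hβ
  have hba := hbuniq α hα a ha
  have hbi := hbuniq β hβ i hi
  intro hzero
  apply hβα
  rw [← hba, ← hbi]
  refine inner_eq_zero_of_pairing_eq_zero P hΦ0 hcrys b hbΦ hinj hlin a (by rwa [hba]) i ?_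
  have hdual : (LieAlgebra.IsKilling.cartanEquivDual H).symm
      ((a : LieModule.Weight ℂ H L).toLinear) = ⟨Hα, hHαh⟩ := by
    rw [LinearEquiv.symm_apply_eq]
    ext y
    rw [LieAlgebra.IsKilling.cartanEquivDual_apply_apply]
    have := ha y
    rw [hHα y y.2] at this
    rw [LieModule.Weight.toLinear_apply, this]
    rfl
  have : P.pairing i a = (i : LieModule.Weight ℂ H L)
    (LieAlgebra.IsKilling.coroot (a : LieModule.Weight ℂ H L)) := rfl
  rw [this, LieAlgebra.IsKilling.coroot, hdual, ← LieModule.Weight.toLinear_apply, map_nsmul,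
    map_smul, LieModule.Weight.toLinear_apply, hi]
  simp [hzero]
end D

/-- Let `𝔤 = L` be a finite-dimensional complex simple Lie algebra with Cartan subalgebra
`𝔥 = h`, Killing form `κ`, root system `Φ` (realized in a real inner product space `E`,
with root spaces `g β`, the roots acting on `h` via the weight functions `ev β`), base
`Δ`, and let `α ∈ Δ` be a long simple root; set `Σ_q := {α} ∪ N(α)` and for `i ≠ 0` let
`q_i := ⊕_{ht_{Σ_q}(β)=i} 𝔤_β`.  Let `H_α ∈ 𝔥` be the unique element with
`α = κ(H_α, ·)|_𝔥`.  Then for `i = 1` and `i = 2`, the bilinear map `q_i × q_{−i} → ℂ`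
given by `(Z, X) ↦ κ(H_α, ⁅Z, X⁆)` is nondegenerate. -/
theorem killing_pairing_nondegenerate
    {E : Type*} [NormedAddCommGroup E] [InnerProductSpace ℝ E]
    {L : Type*} [LieRing L] [LieAlgebra ℂ L] [FiniteDimensional ℂ L]
    [LieAlgebra.IsSimple ℂ L]
    (Φ : Finset E)
    (hΦ0 : (0 : E) ∉ Φ)
    (hspan : Submodule.span ℝ (Φ : Set E) = ⊤)
    (hrefl : ∀ α ∈ Φ, ∀ β ∈ Φ, β - (2 * ⟪β, α⟫ / ⟪α, α⟫) • α ∈ Φ)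
    (hcrys : ∀ α ∈ Φ, ∀ β ∈ Φ, ∃ m : ℤ, 2 * ⟪β, α⟫ / ⟪α, α⟫ = (m : ℝ))
    (hred : ∀ α ∈ Φ, ∀ t : ℝ, t • α ∈ Φ → t = 1 ∨ t = -1)
    (hirr : ∀ S : Set E,
      (∀ β ∈ Φ, ∀ γ ∈ Φ, β ∈ S → ⟪β, γ⟫ ≠ 0 → γ ∈ S) →
      (∃ β ∈ Φ, β ∈ S) → ∀ β ∈ Φ, β ∈ S)
    (Δ : Finset E) (hΔΦ : (Δ : Set E) ⊆ (Φ : Set E))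
    (hΔli : LinearIndependent ℝ (fun γ : Δ => (γ : E)))
    (n : E → E → ℤ)
    (hn : ∀ β ∈ Φ, β = ∑ γ ∈ Δ, (n β γ : ℝ) • γ)
    (hsign : ∀ β ∈ Φ, (∀ γ ∈ Δ, 0 ≤ n β γ) ∨ (∀ γ ∈ Δ, n β γ ≤ 0))
    -- the Cartan subalgebra and the root space decomposition, each root `β` acting on
    -- `h` by the weight function `ev β`
    (h : Submodule ℂ L) (g : E → Submodule ℂ L) (ev : E → L → ℂ)
    (habel : ∀ x ∈ h, ∀ y ∈ h, ⁅x, y⁆ = 0)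
    (hgne : ∀ β ∈ Φ, g β ≠ ⊥)
    (hev : ∀ β ∈ Φ, ∀ x ∈ h, ∀ y ∈ g β, ⁅x, y⁆ = ev β x • y)
    (hgg : ∀ β ∈ Φ, ∀ γ ∈ Φ, ∀ x ∈ g β, ∀ y ∈ g γ,
      (β + γ ∈ Φ → ⁅x, y⁆ ∈ g (β + γ)) ∧ (β + γ = 0 → ⁅x, y⁆ ∈ h) ∧
      (β + γ ∉ Φ → β + γ ≠ 0 → ⁅x, y⁆ = 0))
    (hdec : h ⊔ (⨆ β ∈ Φ, g β) = ⊤)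
    (hindh : Disjoint h (⨆ β ∈ Φ, g β))
    (hindg : ∀ β ∈ Φ, Disjoint (g β) (h ⊔ ⨆ γ ∈ Φ.erase β, g γ))
    -- the long simple root `α`, its Dynkin neighbors, `Σ_q` and the height `ht_{Σ_q}`
    (α : E) (hαΔ : α ∈ Δ)
    (hlong : ∀ γ ∈ Φ, ⟪γ, γ⟫ ≤ ⟪α, α⟫)
    (Nbr : Finset E) (hNbr : Nbr = Δ.filter fun γ => γ ≠ α ∧ ⟪γ, α⟫ ≠ 0)
    (Sq : Finset E) (hSq : Sq = insert α Nbr)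
    (htq : E → ℤ) (hhtq : ∀ β, htq β = ∑ γ ∈ Sq, n β γ)
    -- the grading components `q_{±1}`, `q_{±2}`
    (q1 qm1 q2 qm2 : Submodule ℂ L)
    (hq1 : q1 = ⨆ β ∈ {β : E | β ∈ Φ ∧ htq β = 1}, g β)
    (hqm1 : qm1 = ⨆ β ∈ {β : E | β ∈ Φ ∧ htq β = -1}, g β)
    (hq2 : q2 = ⨆ β ∈ {β : E | β ∈ Φ ∧ htq β = 2}, g β)
    (hqm2 : qm2 = ⨆ β ∈ {β : E | β ∈ Φ ∧ htq β = -2}, g β)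
    -- the element `H_α ∈ 𝔥` representing `α` via the Killing form
    (Hα : L) (hHαh : Hα ∈ h)
    (hHα : ∀ x ∈ h, ev α x = killingForm ℂ L Hα x) :
    -- nondegeneracy of `(Z, X) ↦ κ(H_α, ⁅Z, X⁆)` on `q_1 × q_{-1}`
    ((∀ Z ∈ q1, (∀ X ∈ qm1, killingForm ℂ L Hα ⁅Z, X⁆ = 0) → Z = 0) ∧
     (∀ X ∈ qm1, (∀ Z ∈ q1, killingForm ℂ L Hα ⁅Z, X⁆ = 0) → X = 0)) ∧
    -- and on `q_2 × q_{-2}`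
    ((∀ Z ∈ q2, (∀ X ∈ qm2, killingForm ℂ L Hα ⁅Z, X⁆ = 0) → Z = 0) ∧
     (∀ X ∈ qm2, (∀ Z ∈ q2, killingForm ℂ L Hα ⁅Z, X⁆ = 0) → X = 0)) := by
  letI := gradedLie hΦ0 h g ev habel hev hgg hdec hindh hindg
  obtain ⟨ρ, hρ⟩ := exists_height hΦ0 hΔli hn hsign
  have hSΔ : Sq ⊆ Δ := by
    intro x hx
    rw [hSq, hNbr, Finset.mem_insert, Finset.mem_filter] at hx
    rcases hx with rfl | hx
    · exact hαΔ
    · exact hx.1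
  have hneg : ∀ β ∈ Φ, htq (-β) = - htq β := by
    intro β hβ
    rw [hhtq, hhtq, ← Finset.sum_neg_distrib]
    exact Finset.sum_congr rfl fun γ hγ =>
      coeff_neg hΔli hn hβ (neg_mem_roots hΦ0 hrefl hβ) γ (hSΔ hγ)
  have hq : ∀ k : ℤ, (⨆ β ∈ {β : E | β ∈ Φ ∧ htq β = k}, g β) =
      ⨆ β ∈ {β : E | β ∈ Φ ∧ htq β = k}, gradA Φ h g β := by
    intro k
    refine iSup_congr fun β => iSup_congr fun hβ => ?_
    rw [gradA_root hΦ0 h g hβ.1]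
  have hscal : ∀ e, ∀ x ∈ gradA Φ h g e, ⁅Hα, x⁆ = (if e = 0 then 0 else ev e Hα) • x := by
    intro e x hx
    by_cases he : e = 0
    · subst he
      rw [gradA_zero] at hx
      simp [habel Hα hHαh x hx]
    · by_cases heΦ : e ∈ Φ
      · rw [gradA_root hΦ0 h g heΦ] at hx
        simp [he, hev e heΦ Hα hHαh x hx]
      · rw [gradA_other h g heΦ he, Submodule.mem_bot] at hx
        subst hx; simp
  have main : ∀ k : ℤ, ¬ (3 : ℤ) ∣ k →
      ∀ Z ∈ (⨆ β ∈ {β : E | β ∈ Φ ∧ htq β = k}, g β),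
      (∀ X ∈ (⨆ β ∈ {β : E | β ∈ Φ ∧ htq β = -k}, g β), killingForm ℂ L Hα ⁅Z, X⁆ = 0) →
      Z = 0 := by
    intro k hk Z hZ hZX
    rw [hq] at hZ hZX
    refine left_nondeg (gradA Φ h g) _ _ ?_ Hα _ hscal ?_ Z hZ hZX
    · rintro β ⟨hβ, hβk⟩
      exact ⟨neg_mem_roots hΦ0 hrefl hβ, by rw [hneg β hβ, hβk]⟩
    · rintro β ⟨hβ, hβk⟩
      have hβ0 : β ≠ 0 := fun h => hΦ0 (h ▸ hβ)
      rw [if_neg hβ0]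
      refine ev_ne_zero_of_inner_ne_zero hΦ0 hcrys h g ev habel hgne hev ρ hρ α (hΔΦ hαΔ) hlong
        Hα hHαh hHα β hβ ?_
      refine inner_ne_zero_of_htq hΦ0 hrefl hcrys hΔΦ hΔli hn hsign hαΔ hlong hβ ?_
      rw [← hNbr, ← hSq, ← hhtq, hβk]
      exact hk
  have hsk : ∀ Z X : L, killingForm ℂ L Hα ⁅Z, X⁆ = 0 → killingForm ℂ L Hα ⁅X, Z⁆ = 0 := by
    intro Z X h0
    rw [← lie_skew, map_neg, h0, neg_zero]
  subst hq1 hqm1 hq2 hqm2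
  refine ⟨⟨main 1 (by norm_num), fun X hX hZ => ?_⟩, ⟨main 2 (by norm_num), fun X hX hZ => ?_⟩⟩
  · refine main (-1) (by norm_num) X hX fun Z hZ' => hsk _ _ (hZ Z ?_)
    rwa [neg_neg] at hZ'
  · refine main (-2) (by norm_num) X hX fun Z hZ' => hsk _ _ (hZ Z ?_)
    rwa [neg_neg] at hZ'
end

section
/- Let 𝔤 be a finite-dimensional complex simple Lie algebra with root system Φ, base Δ, highest root θ, and let α ∈ Δ be a long simple root such that n_α(θ) = 2 and θ is the unique root β ∈ Φ with n_α(β) = 2 (i.e. (𝔤,α) is of contact type). Set Σ_q := {α} ∪ N(α). Then ht_{Σ_q}(θ) = 5, i.e. the sum of the coefficients in θ of the Dynkin neighbors of α equals 3. -/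
open scoped RealInnerProductSpace Classical

/-- Let `Φ` be the root system of a finite-dimensional complex simple Lie algebra
(an irreducible reduced crystallographic root system) with base `Δ` and highest root `θ`,
and let `α ∈ Δ` be a long simple root such that `n_α(θ) = 2` and `θ` is the unique root
`β ∈ Φ` with `n_α(β) = 2` (i.e. `(𝔤,α)` is of contact type).  Set `Σ_q := {α} ∪ N(α)`.
Then `ht_{Σ_q}(θ) = 5`, i.e. the sum of the coefficients in `θ` of the Dynkin neighbors of
`α` equals `3`. -/
theorem q_height_of_highest_root_contact_type
    {E : Type*} [NormedAddCommGroup E] [InnerProductSpace ℝ E]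
    (Φ : Finset E)
    (hΦ0 : (0 : E) ∉ Φ)
    (hspan : Submodule.span ℝ (Φ : Set E) = ⊤)
    (hrefl : ∀ α ∈ Φ, ∀ β ∈ Φ, β - (2 * ⟪β, α⟫ / ⟪α, α⟫) • α ∈ Φ)
    (hcrys : ∀ α ∈ Φ, ∀ β ∈ Φ, ∃ m : ℤ, 2 * ⟪β, α⟫ / ⟪α, α⟫ = (m : ℝ))
    (hred : ∀ α ∈ Φ, ∀ t : ℝ, t • α ∈ Φ → t = 1 ∨ t = -1)
    (hirr : ∀ S : Set E,
      (∀ β ∈ Φ, ∀ γ ∈ Φ, β ∈ S → ⟪β, γ⟫ ≠ 0 → γ ∈ S) →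
      (∃ β ∈ Φ, β ∈ S) → ∀ β ∈ Φ, β ∈ S)
    (Δ : Finset E) (hΔΦ : (Δ : Set E) ⊆ (Φ : Set E))
    (hΔli : LinearIndependent ℝ (fun γ : Δ => (γ : E)))
    (n : E → E → ℤ)
    (hn : ∀ β ∈ Φ, β = ∑ γ ∈ Δ, (n β γ : ℝ) • γ)
    (hsign : ∀ β ∈ Φ, (∀ γ ∈ Δ, 0 ≤ n β γ) ∨ (∀ γ ∈ Δ, n β γ ≤ 0))
    (α : E) (hαΔ : α ∈ Δ)
    (hlong : ∀ γ ∈ Φ, ⟪γ, γ⟫ ≤ ⟪α, α⟫)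
    (Nbr : Finset E) (hNbr : Nbr = Δ.filter fun γ => γ ≠ α ∧ ⟪γ, α⟫ ≠ 0)
    (Sq : Finset E) (hSq : Sq = insert α Nbr)
    (htq : E → ℤ) (hhtq : ∀ β, htq β = ∑ γ ∈ Sq, n β γ)
    -- `θ` is the highest root
    (θ : E) (hθΦ : θ ∈ Φ) (hθpos : ∀ γ ∈ Δ, 0 ≤ n θ γ)
    (hθhi : ∀ β ∈ Φ, ∀ γ ∈ Δ, n β γ ≤ n θ γ)
    -- `(𝔤, α)` is of contact type
    (hθα : n θ α = 2)
    (hunique : ∀ β ∈ Φ, n β α = 2 → β = θ) :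
    htq θ = 5 := by
  have hcoef : ∀ c d : E → ℝ, ∑ γ ∈ Δ, c γ • γ = ∑ γ ∈ Δ, d γ • γ → ∀ γ ∈ Δ, c γ = d γ := by
    intro c d h γ hγ
    have h1 : ∑ γ ∈ Δ, (c γ - d γ) • γ = 0 := by
      simp only [sub_smul, Finset.sum_sub_distrib, h, sub_self]
    rw [← Finset.sum_coe_sort Δ (fun γ => (c γ - d γ) • γ)] at h1
    have h2 := Fintype.linearIndependent_iff.1 hΔli (fun γ => c γ - d γ) h1 ⟨γ, hγ⟩
    simpa [sub_eq_zero] using h2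
  have hsingle : ∀ δ ∈ Δ, ∀ t : ℝ, t • δ = ∑ γ ∈ Δ, (if γ = δ then t else 0) • γ := by
    intro δ hδ t
    simp [ite_smul, hδ]
  -- coefficients of `β - t δ`
  have hsub : ∀ β ∈ Φ, ∀ δ ∈ Δ, ∀ t : ℝ, β - t • δ ∈ Φ → ∀ γ ∈ Δ,
      (n (β - t • δ) γ : ℝ) = n β γ - if γ = δ then t else 0 := by
    intro β hβ δ hδ t h γ hγ
    refine hcoef (fun γ => (n (β - t • δ) γ : ℝ))
      (fun γ => (n β γ : ℝ) - if γ = δ then t else 0) ?_ γ hγ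
    simp only [sub_smul, Finset.sum_sub_distrib]
    rw [← hn _ h, ← hn β hβ, ← hsingle δ hδ t]
  have hself : ∀ δ ∈ Δ, ∀ γ ∈ Δ, (n δ γ : ℝ) = if γ = δ then 1 else 0 := by
    intro δ hδ γ hγ
    refine hcoef (fun γ => (n δ γ : ℝ)) (fun γ => if γ = δ then 1 else 0) ?_ γ hγ
    rw [← hn δ (hΔΦ hδ), ← hsingle δ hδ 1, one_smul]
  have hpos : ∀ β ∈ Φ, 0 < ⟪β, β⟫ := by
    intro β hβ
    exact real_inner_self_pos.2 (fun h => hΦ0 (h ▸ hβ))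
  have hαΦ : α ∈ Φ := hΔΦ hαΔ
  have hαp := hpos α hαΦ
  have hθp := hpos θ hθΦ
  -- `θ` is orthogonal to the other simple roots
  have horth : ∀ γ ∈ Δ, γ ≠ α → ⟪θ, γ⟫ = 0 := by
    intro γ hγ hne
    have hr := hrefl γ (hΔΦ hγ) θ hθΦ
    have h1 := hsub θ hθΦ γ hγ _ hr α hαΔ
    rw [if_neg (Ne.symm hne), sub_zero] at h1
    have h2 := hunique _ hr (by rw [← hθα]; exact_mod_cast h1)
    have hγp := hpos γ (hΔΦ hγ)
    have h3 : (2 * ⟪θ, γ⟫ / ⟪γ, γ⟫) • γ = 0 := by simpa using h2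
    rcases smul_eq_zero.1 h3 with h | h
    · rcases div_eq_zero_iff.1 h with h | h <;> linarith
    · rw [h] at hγp; simp at hγp
  have hθθ : ⟪θ, θ⟫ = 2 * ⟪θ, α⟫ := by
    have h0 := congrArg (fun x => ⟪x, θ⟫) (hn θ hθΦ)
    refine h0.trans ?_
    beta_reduce
    rw [sum_inner, Finset.sum_eq_single α]
    · rw [real_inner_smul_left, real_inner_comm, hθα]; norm_num
    · intro γ hγ hne
      rw [real_inner_smul_left, real_inner_comm, horth γ hγ hne, mul_zero]
    · intro h; exact absurd hαΔ h
  have hθα1 : 2 * ⟪θ, α⟫ = ⟪α, α⟫ := by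
    obtain ⟨m, hm⟩ := hcrys α hαΦ θ hθΦ
    rw [div_eq_iff hαp.ne'] at hm
    have hl := hlong θ hθΦ
    have h0 : (0 : ℝ) < m := by
      by_contra h
      push Not at h
      nlinarith
    have h0' : (1 : ℤ) ≤ m := by exact_mod_cast h0
    have h1 : (1 : ℝ) ≤ m := by exact_mod_cast h0'
    nlinarith
  -- neighbours pair to `-1`
  have hnb : ∀ γ ∈ Nbr, 2 * ⟪γ, α⟫ = - ⟪α, α⟫ := by
    intro γ hγ
    rw [hNbr, Finset.mem_filter] at hγ
    obtain ⟨hγ, hne, hi⟩ := hγ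
    obtain ⟨m, hm⟩ := hcrys α hαΦ γ (hΔΦ hγ)
    have hr := hrefl α hαΦ γ (hΔΦ hγ)
    rw [hm] at hr
    have h1 := hsub γ (hΔΦ hγ) α hαΔ _ hr α hαΔ
    have h2 := hsub γ (hΔΦ hγ) α hαΔ _ hr γ hγ
    rw [hself γ hγ α hαΔ, if_neg (Ne.symm hne), if_pos rfl] at h1
    rw [hself γ hγ γ hγ, if_neg hne, if_pos rfl] at h2
    have h1' : n (γ - (m : ℝ) • α) α = - m := by
      have : (n (γ - (m : ℝ) • α) α : ℝ) = ((- m : ℤ) : ℝ) := by rw [h1]; simp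
      exact_mod_cast this
    have h2' : n (γ - (m : ℝ) • α) γ = 1 := by
      have : (n (γ - (m : ℝ) • α) γ : ℝ) = ((1 : ℤ) : ℝ) := by rw [h2]; simp
      exact_mod_cast this
    have hm0 : m ≤ 0 := by
      rcases hsign _ hr with h | h
      · have := h α hαΔ; omega
      · have := h γ hγ; omega
    rw [div_eq_iff hαp.ne'] at hm
    have hmne : m ≠ 0 := by
      rintro rfl
      apply hi
      simpa using hm
    have hm2 : -2 < m := by
      by_contra h
      push Not at h
      have hR : (m : ℝ) ≤ -2 := by exact_mod_cast h
      have hl := hlong γ (hΔΦ hγ)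
      have hz : γ + α = 0 := by
        have hle : ⟪γ + α, γ + α⟫ ≤ 0 := by
          rw [real_inner_add_add_self]
          nlinarith
        exact inner_self_eq_zero.1 (le_antisymm hle real_inner_self_nonneg)
      have hz1 : γ = (-1 : ℝ) • α := by
        rw [neg_one_smul]; exact eq_neg_of_add_eq_zero_left hz
      have := hcoef (fun δ => if δ = γ then 1 else 0) (fun δ => if δ = α then -1 else 0)
        (by rw [← hsingle γ hγ 1, ← hsingle α hαΔ (-1), one_smul]; exact hz1) γ hγ
      simp [hne] at this
    have : m = -1 := by omega
    rw [hm, this]; simp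
  have hαN : α ∉ Nbr := by rw [hNbr]; simp
  have hsum : ⟪θ, α⟫ = 2 * ⟪α, α⟫ + ∑ γ ∈ Nbr, (n θ γ : ℝ) * ⟪γ, α⟫ := by
    have h1 : ⟪θ, α⟫ = ∑ γ ∈ Δ, (n θ γ : ℝ) * ⟪γ, α⟫ := by
      conv_lhs => rw [hn θ hθΦ]
      simp only [sum_inner, real_inner_smul_left]
    have hsub' : Sq ⊆ Δ := by
      rw [hSq, hNbr]
      exact Finset.insert_subset hαΔ (Finset.filter_subset _ _)
    rw [h1, ← Finset.sum_subset hsub', hSq, Finset.sum_insert hαN, hθα]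
    · norm_num
    · intro γ hγ hns
      rw [hSq, hNbr, Finset.mem_insert, Finset.mem_filter] at hns
      push Not at hns
      rw [hns.2 hγ hns.1, mul_zero]
  have hsum2 : ∑ γ ∈ Nbr, (n θ γ : ℝ) * ⟪γ, α⟫ = (∑ γ ∈ Nbr, (n θ γ : ℝ)) * (-⟪α, α⟫ / 2) := by
    rw [Finset.sum_mul]
    refine Finset.sum_congr rfl fun γ hγ => ?_
    have := hnb γ hγ
    rw [← this]; ring
  have hfin : (∑ γ ∈ Nbr, (n θ γ : ℝ)) = 3 := by
    have : ((∑ γ ∈ Nbr, (n θ γ : ℝ)) - 3) * ⟪α, α⟫ = 0 := by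
      rw [hsum2] at hsum
      linarith
    rcases mul_eq_zero.1 this with h | h <;> linarith
  have hfin' : ∑ γ ∈ Nbr, n θ γ = 3 := by exact_mod_cast hfin
  rw [hhtq, hSq, Finset.sum_insert hαN, hθα, hfin']
  norm_num
end
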